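/- arXiv:0910.3417 — 3 statements merged into one kernel-verified Lean document; each statement's English description precedes it below -/
import Mathlib

section
/- Let q be a prime power with q ≡ 2 (mod 3) and let m be a positive divisor of q + 1. Then for every positive integer N there exists a positive integer n with the following property: letting K_n = 𝔽_q(t)[s]/(s³ − (t^{q^n} − t)) (a field, the function field of the curve s³ = t^{q^n} − t) and letting 𝒪_n be the integral closure of 𝔽_q[t] in K_n, the ideal class group Cl(𝒪_n) contains a subgroup isomorphic to (ℤ/mℤ)^N; that is, there is an injective group homomorphism (ℤ/mℤ)^N → Cl(𝒪_n). In other words, the m-class rank of K_n is arbitrarily large as n varies. -/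
open Polynomial

/-!
Let `q = #K` and `n = 3 ^ (2 * N)`. For `N < i ≤ 2 * N` and `P = q ^ 3 ^ i` there is an additive
polynomial `u` with `u ^ P - u = X ^ q ^ n - X`, so that the curve `s ^ 3 = X ^ q ^ n - X` covers
the quotient `y ^ 3 = x ^ P - x` of the Hermitian curve. On that quotient `P + 1` times a rational
point is principal, so the class of the fibre `(u - a, s - b)` is killed by `P + 1`. No much smaller
multiple of it is principal: the three terms of the norm of `c0 + c1 * s + c2 * s ^ 2` have degrees
distinct modulo `3`, so that an element of small norm degree lies in the polynomial ring.

The translations of `X`, the Frobenius and the rotation of `s` act on these classes. Averaging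
gives, for each `i`, classes that are invariant at level `i` and killed by the norm to level
`i - 1`; if a proper divisor of `m` killed all their Frobenius traces, combining rotations would
produce a principal ideal that is too small. The norms separate the levels, so classes of different
levels satisfy no relation modulo `m`, and Frobenius traces descend to `K` by Galois descent.
-/

/-! ### Pure cubic algebras -/

/-- The algebra `R[s] / (s ^ 3 - S)`, an element being written `c0 + c1 * s + c2 * s ^ 2`. For
`R = k[X]` it is the coordinate ring of the curve `s ^ 3 = S`. -/
@[ext]
structure PureCubic (R : Type*) (S : R) where
  c0 : R
  c1 : R
  c2 : R

namespace PureCubic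

section Ring

variable {R : Type*} [CommRing R] {S : R}

instance : Zero (PureCubic R S) := ⟨⟨0, 0, 0⟩⟩
instance : One (PureCubic R S) := ⟨⟨1, 0, 0⟩⟩
instance : Add (PureCubic R S) := ⟨fun x y ↦ ⟨x.c0 + y.c0, x.c1 + y.c1, x.c2 + y.c2⟩⟩
instance : Neg (PureCubic R S) := ⟨fun x ↦ ⟨-x.c0, -x.c1, -x.c2⟩⟩
instance : Mul (PureCubic R S) := ⟨fun x y ↦
  ⟨x.c0 * y.c0 + S * (x.c1 * y.c2 + x.c2 * y.c1),
   x.c0 * y.c1 + x.c1 * y.c0 + S * (x.c2 * y.c2),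
   x.c0 * y.c2 + x.c1 * y.c1 + x.c2 * y.c0⟩⟩

@[simp] theorem zero_c0 : (0 : PureCubic R S).c0 = 0 := rfl
@[simp] theorem zero_c1 : (0 : PureCubic R S).c1 = 0 := rfl
@[simp] theorem zero_c2 : (0 : PureCubic R S).c2 = 0 := rfl
@[simp] theorem one_c0 : (1 : PureCubic R S).c0 = 1 := rfl
@[simp] theorem one_c1 : (1 : PureCubic R S).c1 = 0 := rfl
@[simp] theorem one_c2 : (1 : PureCubic R S).c2 = 0 := rfl
@[simp] theorem add_c0 (x y : PureCubic R S) : (x + y).c0 = x.c0 + y.c0 := rfl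
@[simp] theorem add_c1 (x y : PureCubic R S) : (x + y).c1 = x.c1 + y.c1 := rfl
@[simp] theorem add_c2 (x y : PureCubic R S) : (x + y).c2 = x.c2 + y.c2 := rfl
@[simp] theorem neg_c0 (x : PureCubic R S) : (-x).c0 = -x.c0 := rfl
@[simp] theorem neg_c1 (x : PureCubic R S) : (-x).c1 = -x.c1 := rfl
@[simp] theorem neg_c2 (x : PureCubic R S) : (-x).c2 = -x.c2 := rfl
@[simp] theorem mul_c0 (x y : PureCubic R S) :
    (x * y).c0 = x.c0 * y.c0 + S * (x.c1 * y.c2 + x.c2 * y.c1) := rfl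
@[simp] theorem mul_c1 (x y : PureCubic R S) :
    (x * y).c1 = x.c0 * y.c1 + x.c1 * y.c0 + S * (x.c2 * y.c2) := rfl
@[simp] theorem mul_c2 (x y : PureCubic R S) :
    (x * y).c2 = x.c0 * y.c2 + x.c1 * y.c1 + x.c2 * y.c0 := rfl

instance : CommRing (PureCubic R S) where
  add_assoc _ _ _ := by ext <;> simp [add_assoc]
  zero_add _ := by ext <;> simp
  add_zero _ := by ext <;> simp
  nsmul := nsmulRec
  zsmul := zsmulRec
  neg_add_cancel _ := by ext <;> simp
  add_comm _ _ := by ext <;> simp [add_comm]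
  mul_assoc _ _ _ := by ext <;> simp only [mul_c0, mul_c1, mul_c2] <;> ring
  one_mul _ := by ext <;> simp
  mul_one _ := by ext <;> simp
  mul_comm _ _ := by ext <;> simp only [mul_c0, mul_c1, mul_c2] <;> ring
  left_distrib _ _ _ := by
    ext <;> simp only [mul_c0, mul_c1, mul_c2, add_c0, add_c1, add_c2] <;> ring
  right_distrib _ _ _ := by
    ext <;> simp only [mul_c0, mul_c1, mul_c2, add_c0, add_c1, add_c2] <;> ring
  zero_mul _ := by ext <;> simp
  mul_zero _ := by ext <;> simp

@[simp] theorem sub_c0 (x y : PureCubic R S) : (x - y).c0 = x.c0 - y.c0 := by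
  simp [sub_eq_add_neg]
@[simp] theorem sub_c1 (x y : PureCubic R S) : (x - y).c1 = x.c1 - y.c1 := by
  simp [sub_eq_add_neg]
@[simp] theorem sub_c2 (x y : PureCubic R S) : (x - y).c2 = x.c2 - y.c2 := by
  simp [sub_eq_add_neg]

/-- The inclusion of the base ring `R` into `R[s] / (s ^ 3 - S)`. -/
def of (S : R) : R →+* PureCubic R S where
  toFun r := ⟨r, 0, 0⟩
  map_one' := rfl
  map_zero' := rfl
  map_add' _ _ := by ext <;> simp
  map_mul' _ _ := by ext <;> simp

@[simp] theorem of_c0 (r : R) : (of S r).c0 = r := rfl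
@[simp] theorem of_c1 (r : R) : (of S r).c1 = 0 := rfl
@[simp] theorem of_c2 (r : R) : (of S r).c2 = 0 := rfl

theorem of_injective : Function.Injective (of S) := fun _ _ h ↦ congrArg c0 h

/-- The adjoined cube root `s` of `S`. -/
def root (S : R) : PureCubic R S := ⟨0, 1, 0⟩

@[simp] theorem root_c0 : (root S).c0 = 0 := rfl
@[simp] theorem root_c1 : (root S).c1 = 1 := rfl
@[simp] theorem root_c2 : (root S).c2 = 0 := rfl

theorem eq_of_add_root (x : PureCubic R S) :
    x = of S x.c0 + of S x.c1 * root S + of S x.c2 * root S ^ 2 := by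
  ext <;> simp [pow_succ]

/-- The norm form of `R[s] / (s ^ 3 - S)` over `R`, as an explicit polynomial in the coordinates. -/
def norm : PureCubic R S →*₀ R where
  toFun x := x.c0 ^ 3 + S * x.c1 ^ 3 + S ^ 2 * x.c2 ^ 3 - 3 * S * x.c0 * x.c1 * x.c2
  map_zero' := by simp
  map_one' := by simp
  map_mul' x y := by simp only [mul_c0, mul_c1, mul_c2]; ring

theorem norm_apply (x : PureCubic R S) :
    norm x = x.c0 ^ 3 + S * x.c1 ^ 3 + S ^ 2 * x.c2 ^ 3 - 3 * S * x.c0 * x.c1 * x.c2 := rfl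

theorem exists_mul_eq_of_norm (x : PureCubic R S) : ∃ y, x * y = of S (norm x) :=
  ⟨⟨x.c0 ^ 2 - S * x.c1 * x.c2, S * x.c2 ^ 2 - x.c0 * x.c1, x.c1 ^ 2 - x.c0 * x.c2⟩, by
    ext <;> simp only [mul_c0, mul_c1, mul_c2, of_c0, of_c1, of_c2, norm_apply] <;> ring⟩

/-- The ring homomorphism out of `R[s] / (s ^ 3 - S)` given by a homomorphism on `R` and a cube
root of the image of `S`. -/
def lift {A : Type*} [CommRing A] (f : R →+* A) (s : A) (hs : s ^ 3 = f S) :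
    PureCubic R S →+* A where
  toFun x := f x.c0 + f x.c1 * s + f x.c2 * s ^ 2
  map_one' := by simp
  map_zero' := by simp
  map_add' x y := by simp only [add_c0, add_c1, add_c2, map_add]; ring
  map_mul' x y := by
    simp only [mul_c0, mul_c1, mul_c2, map_add, map_mul, ← hs]
    ring

section Lift

variable {A : Type*} [CommRing A] (f : R →+* A) (s : A) (hs : s ^ 3 = f S)

theorem lift_apply (x : PureCubic R S) :
    lift f s hs x = f x.c0 + f x.c1 * s + f x.c2 * s ^ 2 := rfl

@[simp] theorem lift_of (r : R) : lift f s hs (of S r) = f r := by simp [lift_apply]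

@[simp] theorem lift_root : lift f s hs (root S) = s := by simp [lift_apply]

end Lift

theorem hom_ext {A : Type*} [CommRing A] {f g : PureCubic R S →+* A}
    (hof : ∀ r, f (of S r) = g (of S r)) (hroot : f (root S) = g (root S)) : f = g := by
  ext x
  rw [eq_of_add_root x]
  simp [hof, hroot]

end Ring

section Degree

theorem degree_eq_bot_of_natDegree_mod_ne {R : Type*} [Semiring R] {P Q : R[X]} {n : ℕ}
    (h : P ≠ 0 → Q ≠ 0 → P.natDegree % n ≠ Q.natDegree % n) (hPQ : P.degree = Q.degree) :
    P.degree = ⊥ := by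
  by_contra hP
  refine h (mt degree_eq_bot.mpr hP) (mt degree_eq_bot.mpr (hPQ ▸ hP)) ?_
  rw [natDegree_eq_of_degree_eq hPQ]

variable {R : Type*} [CommRing R] [IsDomain R]

theorem degree_add_add_sub_of_lt {A B C D : R[X]} (hD : D ^ 3 = 27 * (A * B * C))
    (hB : B.degree < A.degree) (hC : C.degree < A.degree) :
    (A + B + C - D).degree = A.degree := by
  have hDA : D.degree < A.degree := by
    rcases eq_or_ne D 0 with rfl | hD0
    · exact degree_zero.trans_lt (bot_le.trans_lt hB)
    have hABC : A * B * C ≠ 0 := by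
      intro h
      rw [h, mul_zero] at hD
      exact hD0 (pow_eq_zero_iff (by norm_num) |>.mp hD)
    obtain ⟨⟨hA0, hB0⟩, hC0⟩ := by simpa only [mul_ne_zero_iff] using hABC
    have hle : 3 * D.natDegree ≤ A.natDegree + B.natDegree + C.natDegree := by
      rw [← natDegree_pow, hD, ← natDegree_mul hA0 hB0, ← natDegree_mul (mul_ne_zero hA0 hB0) hC0]
      refine natDegree_mul_le.trans ?_
      rw [show (27 : R[X]).natDegree = 0 from natDegree_natCast 27, zero_add]
    have hBA := natDegree_lt_natDegree hB0 hB
    have hCA := natDegree_lt_natDegree hC0 hC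
    exact degree_lt_degree (by omega)
  have hAB : (A + B).degree = A.degree := degree_add_eq_left_of_degree_lt hB
  have hABC : (A + B + C).degree = A.degree := by
    rw [degree_add_eq_left_of_degree_lt (hAB ▸ hC), hAB]
  rw [degree_sub_eq_left_of_degree_lt (hABC ▸ hDA), hABC]

theorem degree_add_add_sub_eq_max {A B C D : R[X]} (hD : D ^ 3 = 27 * (A * B * C))
    (hAB : A.degree = B.degree → A.degree = ⊥) (hAC : A.degree = C.degree → A.degree = ⊥)
    (hBC : B.degree = C.degree → B.degree = ⊥) :
    (A + B + C - D).degree = max A.degree (max B.degree C.degree) := by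
  have hcases : (B.degree < A.degree ∧ C.degree < A.degree) ∨
      (A.degree < B.degree ∧ C.degree < B.degree) ∨
      (A.degree < C.degree ∧ B.degree < C.degree) ∨
      (A.degree = ⊥ ∧ B.degree = ⊥ ∧ C.degree = ⊥) := by
    grind [bot_le]
  rcases hcases with ⟨h₁, h₂⟩ | ⟨h₁, h₂⟩ | ⟨h₁, h₂⟩ | ⟨hA, hB, hC⟩
  · rw [degree_add_add_sub_of_lt hD h₁ h₂, max_eq_left (max_le h₁.le h₂.le)]
  · rw [add_comm A, degree_add_add_sub_of_lt (by rw [hD, mul_comm A]) h₁ h₂, max_eq_left h₂.le,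
      max_eq_right h₁.le]
  · rw [add_comm, ← add_assoc, degree_add_add_sub_of_lt (by rw [hD]; ring) h₁ h₂,
      max_eq_right h₂.le, max_eq_right h₁.le]
  · rw [degree_eq_bot] at hA hB hC
    subst hA hB hC
    have hD0 : D = 0 := by simpa using hD
    simp [hD0]

variable {S : R[X]}

/-- The three terms of the norm have degrees distinct modulo `3`, so that they cannot cancel. -/
theorem degree_norm (hS : ¬ 3 ∣ S.natDegree) (x : PureCubic R[X] S) :
    (norm x).degree =
      max (x.c0 ^ 3).degree (max (S * x.c1 ^ 3).degree (S ^ 2 * x.c2 ^ 3).degree) := by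
  have hS0 : S ≠ 0 := by rintro rfl; simp at hS
  have natDegree_c1 (h : S * x.c1 ^ 3 ≠ 0) :
      (S * x.c1 ^ 3).natDegree = S.natDegree + 3 * x.c1.natDegree := by
    rw [natDegree_mul hS0 (right_ne_zero_of_mul h), natDegree_pow]
  have natDegree_c2 (h : S ^ 2 * x.c2 ^ 3 ≠ 0) :
      (S ^ 2 * x.c2 ^ 3).natDegree = 2 * S.natDegree + 3 * x.c2.natDegree := by
    rw [natDegree_mul (pow_ne_zero 2 hS0) (right_ne_zero_of_mul h), natDegree_pow, natDegree_pow]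
  rw [norm_apply]
  apply degree_add_add_sub_eq_max
  · ring
  · refine degree_eq_bot_of_natDegree_mod_ne (n := 3) fun _ h₁ ↦ ?_
    rw [natDegree_pow, natDegree_c1 h₁]
    omega
  · refine degree_eq_bot_of_natDegree_mod_ne (n := 3) fun _ h₂ ↦ ?_
    rw [natDegree_pow, natDegree_c2 h₂]
    omega
  · refine degree_eq_bot_of_natDegree_mod_ne (n := 3) fun h₁ h₂ ↦ ?_
    rw [natDegree_c1 h₁, natDegree_c2 h₂]
    omega

theorem norm_ne_zero (hS : ¬ 3 ∣ S.natDegree) {x : PureCubic R[X] S} (hx : x ≠ 0) :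
    norm x ≠ 0 := by
  have hS0 : S ≠ 0 := by rintro rfl; simp at hS
  intro h
  have hdeg := degree_norm hS x
  rw [h, degree_zero, eq_comm, max_eq_bot, max_eq_bot] at hdeg
  simp only [degree_eq_bot, mul_eq_zero, pow_eq_zero_iff, hS0, false_or, ne_eq,
    OfNat.ofNat_ne_zero, not_false_eq_true] at hdeg
  exact hx (PureCubic.ext hdeg.1 hdeg.2.1 hdeg.2.2)

theorem isDomain (hS : ¬ 3 ∣ S.natDegree) : IsDomain (PureCubic R[X] S) := by
  have : Nontrivial (PureCubic R[X] S) := ⟨0, 1, fun h ↦ by simpa using congrArg c0 h⟩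
  have : NoZeroDivisors (PureCubic R[X] S) := ⟨fun {x y} h ↦ by
    by_contra! hxy
    refine mul_ne_zero (norm_ne_zero hS hxy.1) (norm_ne_zero hS hxy.2) ?_
    rw [← map_mul, h, map_zero]⟩
  exact NoZeroDivisors.to_isDomain _

theorem c2_eq_zero_of_natDegree_norm_lt (hS : ¬ 3 ∣ S.natDegree) {x : PureCubic R[X] S}
    (hx : (norm x).natDegree < 2 * S.natDegree) : x.c2 = 0 := by
  have hS0 : S ≠ 0 := by rintro rfl; simp at hS
  by_contra h
  have hle : (S ^ 2 * x.c2 ^ 3).natDegree ≤ (norm x).natDegree :=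
    natDegree_le_natDegree <| by rw [degree_norm hS x]; exact le_max_of_le_right (le_max_right _ _)
  rw [natDegree_mul (pow_ne_zero 2 hS0) (pow_ne_zero 3 h), natDegree_pow] at hle
  omega

theorem eq_of_c0_of_natDegree_norm_lt (hS : ¬ 3 ∣ S.natDegree) {x : PureCubic R[X] S}
    (hx : (norm x).natDegree < S.natDegree) : x = of S x.c0 := by
  have hS0 : S ≠ 0 := by rintro rfl; simp at hS
  have hc1 : x.c1 = 0 := by
    by_contra h
    have hle : (S * x.c1 ^ 3).natDegree ≤ (norm x).natDegree :=
      natDegree_le_natDegree <| by rw [degree_norm hS x]; exact le_max_of_le_right (le_max_left _ _)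
    rw [natDegree_mul hS0 (pow_ne_zero 3 h)] at hle
    omega
  exact PureCubic.ext rfl hc1 (c2_eq_zero_of_natDegree_norm_lt hS (by omega))

end Degree

end PureCubic

/-! ### The integral closure of `k[X]` in a pure cubic extension -/

namespace PureCubic

section IntegralClosure

variable {k : Type*} [Field k] {S : k[X]}

theorem pow_three_ne_algebraMap (hS : ¬ 3 ∣ S.natDegree) (b : RatFunc k) :
    b ^ 3 ≠ algebraMap k[X] (RatFunc k) S := by
  intro h
  have hS0 : S ≠ 0 := by rintro rfl; simp at hS
  have hb : b ≠ 0 := by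
    rintro rfl
    rw [zero_pow three_ne_zero, eq_comm, FaithfulSMul.algebraMap_eq_zero_iff] at h
    exact hS0 h
  have hdeg := congrArg RatFunc.intDegree h
  rw [pow_succ, pow_two, RatFunc.intDegree_mul (mul_ne_zero hb hb) hb,
    RatFunc.intDegree_mul hb hb, RatFunc.intDegree_polynomial] at hdeg
  omega

variable {L : Type*} [Field L] [Algebra k[X] L] [Algebra (RatFunc k) L]
  [IsScalarTower k[X] (RatFunc k) L] {s : L}

theorem minpoly_of_pow_three_eq (hS : ¬ 3 ∣ S.natDegree) (hs : s ^ 3 = algebraMap k[X] L S) :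
    minpoly (RatFunc k) s = X ^ 3 - C (algebraMap k[X] (RatFunc k) S) := by
  refine (minpoly.eq_of_irreducible_of_monic
    (X_pow_sub_C_irreducible_of_prime Nat.prime_three (pow_three_ne_algebraMap hS)) ?_
    (monic_X_pow_sub_C _ three_ne_zero)).symm
  simp [hs, ← IsScalarTower.algebraMap_apply]

theorem trace_eq_zero_of_pow_three_eq [FiniteDimensional (RatFunc k) L]
    (hS : ¬ 3 ∣ S.natDegree) (hs : s ^ 3 = algebraMap k[X] L S) :
    Algebra.trace (RatFunc k) L s = 0 := by
  rw [trace_eq_finrank_mul_minpoly_nextCoeff, minpoly_of_pow_three_eq hS hs,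
    nextCoeff_of_natDegree_pos (by simp)]
  simp [coeff_X_pow]

omit [Algebra (RatFunc k) L] [IsScalarTower k[X] (RatFunc k) L] in
theorem isIntegral_of_pow_three_eq (hs : s ^ 3 = algebraMap k[X] L S) : IsIntegral k[X] s :=
  IsIntegral.of_pow three_pos (hs ▸ isIntegral_algebraMap)

omit [Algebra (RatFunc k) L] [IsScalarTower k[X] (RatFunc k) L] in
theorem isIntegral_lift (hs : s ^ 3 = algebraMap k[X] L S) (x : PureCubic k[X] S) :
    IsIntegral k[X] (lift (algebraMap k[X] L) s hs x) := by
  have hs_int := isIntegral_of_pow_three_eq hs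
  rw [lift_apply]
  exact (isIntegral_algebraMap.add (isIntegral_algebraMap.mul hs_int)).add
    (isIntegral_algebraMap.mul (hs_int.pow 2))

theorem lift_injective (hS : ¬ 3 ∣ S.natDegree) (hs : s ^ 3 = algebraMap k[X] L S) :
    Function.Injective (lift (algebraMap k[X] L) s hs) := by
  rw [injective_iff_map_eq_zero]
  intro x hx
  by_contra h
  obtain ⟨y, hy⟩ := exists_mul_eq_of_norm x
  have hnorm := congrArg (lift (algebraMap k[X] L) s hs) hy
  rw [map_mul, hx, zero_mul, lift_of, IsScalarTower.algebraMap_apply k[X] (RatFunc k) L, eq_comm,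
    map_eq_zero, FaithfulSMul.algebraMap_eq_zero_iff] at hnorm
  exact norm_ne_zero hS h hnorm

variable (hs : s ^ 3 = algebraMap k[X] L S) (hadj : Algebra.adjoin (RatFunc k) {s} = ⊤)

include hs in
theorem pow_three_eq_algebraMap_ratFunc :
    s ^ 3 = algebraMap (RatFunc k) L (algebraMap k[X] (RatFunc k) S) := by
  rw [hs, ← IsScalarTower.algebraMap_apply]

include hs hadj in
theorem finiteDimensional_of_adjoin : FiniteDimensional (RatFunc k) L := by
  have hfg := (isIntegral_of_pow_three_eq hs).tower_top (A := RatFunc k) |>.fg_adjoin_singleton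
  rw [hadj, Algebra.top_toSubmodule] at hfg
  exact ⟨hfg⟩

include hs hadj in
theorem finrank_eq_three (hS : ¬ 3 ∣ S.natDegree) : Module.finrank (RatFunc k) L = 3 := by
  rw [← IntermediateField.finrank_top', ← IntermediateField.adjoin_eq_top_of_algebra _ _ hadj,
    IntermediateField.adjoin.finrank (isIntegral_of_pow_three_eq hs).tower_top,
    minpoly_of_pow_three_eq hS hs, natDegree_X_pow_sub_C]

include hs hadj in
theorem isSeparable_of_adjoin (hS : ¬ 3 ∣ S.natDegree) (h3 : (3 : k) ≠ 0) :
    Algebra.IsSeparable (RatFunc k) L := by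
  have h3' : ((3 : ℕ) : RatFunc k) ≠ 0 := by
    rw [Nat.cast_ofNat, ← map_ofNat (algebraMap k (RatFunc k)) 3]
    exact (map_ne_zero (algebraMap k (RatFunc k))).2 h3
  have hS0 : S ≠ 0 := by rintro rfl; simp at hS
  have hsep : IsSeparable (RatFunc k) s := by
    rw [IsSeparable, minpoly_of_pow_three_eq hS hs]
    exact separable_X_pow_sub_C _ h3' (by rwa [Ne, FaithfulSMul.algebraMap_eq_zero_iff])
  have hsep_adjoin := (IntermediateField.isSeparable_adjoin_simple_iff_isSeparable _ _).2 hsep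
  rw [IntermediateField.adjoin_eq_top_of_algebra _ _ hadj] at hsep_adjoin
  exact Algebra.IsSeparable.of_algHom _ _
    (IntermediateField.topEquiv (F := RatFunc k) (E := L)).symm.toAlgHom

include hs hadj in
theorem exists_coordinates (z : L) : ∃ a b c : RatFunc k,
    z = algebraMap _ L a + algebraMap _ L b * s + algebraMap _ L c * s ^ 2 := by
  have hs' := pow_three_eq_algebraMap_ratFunc hs
  have hz : z ∈ Algebra.adjoin (RatFunc k) {s} := hadj ▸ Algebra.mem_top
  suffices ∃ x, lift (algebraMap (RatFunc k) L) s hs' x = z from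
    this.imp' c0 fun x hx ↦ ⟨x.c1, x.c2, hx.symm⟩
  induction hz using Algebra.adjoin_induction with
  | mem x hx => exact ⟨root _, (lift_root _ _ _).trans hx.symm⟩
  | algebraMap r => exact ⟨of _ r, lift_of _ _ _ _⟩
  | add x y _ _ hx hy => exact hx.elim fun x hx ↦ hy.elim fun y hy ↦ ⟨x + y, by simp [hx, hy]⟩
  | mul x y _ _ hx hy => exact hx.elim fun x hx ↦ hy.elim fun y hy ↦ ⟨x * y, by simp [hx, hy]⟩

include hs hadj in
theorem trace_coordinates (hS : ¬ 3 ∣ S.natDegree) (a b c : RatFunc k) :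
    Algebra.trace (RatFunc k) L
      (algebraMap _ L a + algebraMap _ L b * s + algebraMap _ L c * s ^ 2) = 3 * a := by
  have := finiteDimensional_of_adjoin hs hadj
  have hS2 : ¬ 3 ∣ (S ^ 2).natDegree := by rw [natDegree_pow]; omega
  have hs2 : (s ^ 2) ^ 3 = algebraMap k[X] L (S ^ 2) := by rw [map_pow, ← hs]; ring
  rw [map_add, map_add, Algebra.trace_algebraMap, finrank_eq_three hs hadj hS, ← Algebra.smul_def,
    ← Algebra.smul_def, map_smul, map_smul, trace_eq_zero_of_pow_three_eq hS hs,
    trace_eq_zero_of_pow_three_eq hS2 hs2]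
  simp

include hs hadj in
theorem exists_polynomial_c0_of_isIntegral (hS : ¬ 3 ∣ S.natDegree) (h3 : (3 : k) ≠ 0)
    (a b c : RatFunc k)
    (h : IsIntegral k[X] (algebraMap _ L a + algebraMap _ L b * s + algebraMap _ L c * s ^ 2)) :
    ∃ e : k[X], algebraMap k[X] (RatFunc k) e = a := by
  have := finiteDimensional_of_adjoin hs hadj
  have h3a : IsIntegral k[X] (3 * a) :=
    trace_coordinates hs hadj hS a b c ▸ Algebra.isIntegral_trace (L := RatFunc k) h
  obtain ⟨e, he⟩ := IsIntegrallyClosed.isIntegral_iff.1 h3a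
  have hinv : algebraMap k[X] (RatFunc k) (C (3⁻¹ : k)) * 3 = 1 := by
    rw [← map_ofNat (algebraMap k[X] (RatFunc k)) 3, ← map_mul,
      show (3 : k[X]) = C 3 from rfl, ← C_mul, inv_mul_cancel₀ h3, C_1, map_one]
  exact ⟨C 3⁻¹ * e, by rw [map_mul, he, ← mul_assoc, hinv, one_mul]⟩

include hs in
theorem exists_polynomial_of_isIntegral_mul_sq (hsq : Squarefree S) {c : RatFunc k} {d : k[X]}
    (hd : algebraMap k[X] (RatFunc k) d = c * algebraMap k[X] (RatFunc k) S)
    (hc : IsIntegral k[X] (algebraMap (RatFunc k) L c * s ^ 2)) :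
    ∃ e : k[X], algebraMap k[X] (RatFunc k) e = c := by
  have hinj := IsFractionRing.injective k[X] (RatFunc k)
  have hcube : IsIntegral k[X] (algebraMap (RatFunc k) L (c ^ 3 * algebraMap k[X] _ S ^ 2)) := by
    convert hc.pow 3 using 1
    rw [map_mul, map_pow, map_pow, ← pow_three_eq_algebraMap_ratFunc hs]
    ring
  rw [isIntegral_algebraMap_iff (algebraMap (RatFunc k) L).injective] at hcube
  obtain ⟨e, he⟩ := IsIntegrallyClosed.isIntegral_iff.1 hcube
  have hde : d ^ 3 = S * e := hinj (by rw [map_pow, hd, map_mul, he]; ring)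
  obtain ⟨f, rfl⟩ := (hsq.dvd_pow_iff_dvd three_ne_zero).1 ⟨e, hde⟩
  have hS0 : algebraMap k[X] (RatFunc k) S ≠ 0 := by
    rw [Ne, FaithfulSMul.algebraMap_eq_zero_iff]
    exact hsq.ne_zero
  exact ⟨f, mul_right_cancel₀ hS0 (by rw [← hd, map_mul, mul_comm])⟩

include hs hadj in
theorem exists_lift_eq_of_isIntegral (hS : ¬ 3 ∣ S.natDegree) (h3 : (3 : k) ≠ 0)
    (hsq : Squarefree S) {z : L} (hz : IsIntegral k[X] z) :
    ∃ x : PureCubic k[X] S, lift (algebraMap k[X] L) s hs x = z := by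
  have hs' := pow_three_eq_algebraMap_ratFunc hs
  have hs_int := isIntegral_of_pow_three_eq hs
  have hpoly (p : k[X]) :
      IsIntegral k[X] (algebraMap (RatFunc k) L (algebraMap k[X] (RatFunc k) p)) := by
    rw [← IsScalarTower.algebraMap_apply]
    exact isIntegral_algebraMap
  obtain ⟨a, b, c, habc⟩ := exists_coordinates hs hadj z
  obtain ⟨a, rfl⟩ := exists_polynomial_c0_of_isIntegral hs hadj hS h3 a b c (habc ▸ hz)
  -- Multiplying `z` by `s` and `s ^ 2` rotates its coordinates, up to factors `S`.
  have hzs : z * s = algebraMap (RatFunc k) L (c * algebraMap k[X] _ S) +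
      algebraMap (RatFunc k) L (algebraMap k[X] _ a) * s + algebraMap _ L b * s ^ 2 := by
    rw [habc, map_mul, ← hs']
    ring
  have hzs2 : z * s ^ 2 = algebraMap (RatFunc k) L (b * algebraMap k[X] _ S) +
      algebraMap (RatFunc k) L (c * algebraMap k[X] _ S) * s +
      algebraMap (RatFunc k) L (algebraMap k[X] _ a) * s ^ 2 := by
    rw [habc, map_mul, map_mul, ← hs']
    ring
  obtain ⟨d, hd⟩ := exists_polynomial_c0_of_isIntegral hs hadj hS h3 _ _ _
    (hzs ▸ hz.mul hs_int)
  obtain ⟨e, he⟩ := exists_polynomial_c0_of_isIntegral hs hadj hS h3 _ _ _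
    (hzs2 ▸ hz.mul (hs_int.pow 2))
  have hb : algebraMap (RatFunc k) L b * s ^ 2 =
      (z - algebraMap (RatFunc k) L (algebraMap k[X] _ a)) * s -
        algebraMap (RatFunc k) L (algebraMap k[X] _ d) := by
    rw [hd, sub_mul, hzs]
    ring
  obtain ⟨b, rfl⟩ := exists_polynomial_of_isIntegral_mul_sq hs hsq he
    (hb ▸ ((hz.sub (hpoly a)).mul hs_int).sub (hpoly d))
  have hc : algebraMap (RatFunc k) L c * s ^ 2 =
      z - algebraMap (RatFunc k) L (algebraMap k[X] _ a) -
        algebraMap (RatFunc k) L (algebraMap k[X] _ b) * s := by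
    rw [habc]
    ring
  obtain ⟨c, rfl⟩ := exists_polynomial_of_isIntegral_mul_sq hs hsq hd
    (hc ▸ (hz.sub (hpoly a)).sub ((hpoly b).mul hs_int))
  exact ⟨⟨a, b, c⟩, by simp only [habc, lift_apply, ← IsScalarTower.algebraMap_apply]⟩

/-- The integral closure of `k[X]` in `k(X)(s)`, `s ^ 3 = S`, is `k[X][s]` when `S` is squarefree
and `3` is invertible. -/
noncomputable def equivIntegralClosure (hS : ¬ 3 ∣ S.natDegree) (h3 : (3 : k) ≠ 0)
    (hsq : Squarefree S) : PureCubic k[X] S ≃+* integralClosure k[X] L :=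
  RingEquiv.ofBijective
    ((lift (algebraMap k[X] L) s hs).codRestrict (integralClosure k[X] L) (isIntegral_lift hs))
    ⟨fun _ _ h ↦ lift_injective hS hs (congrArg Subtype.val h), fun z ↦
      (exists_lift_eq_of_isIntegral hs hadj hS h3 hsq z.2).imp fun _ ↦ Subtype.ext⟩

include hs hadj in
theorem isDedekindDomain_of_adjoin (hS : ¬ 3 ∣ S.natDegree) (h3 : (3 : k) ≠ 0)
    (hsq : Squarefree S) : IsDedekindDomain (PureCubic k[X] S) := by
  have := finiteDimensional_of_adjoin hs hadj
  have := isSeparable_of_adjoin hs hadj hS h3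
  have := isDomain hS
  let : Algebra (PureCubic k[X] S) L := (lift (algebraMap k[X] L) s hs).toAlgebra
  let : Algebra k[X] (PureCubic k[X] S) := (of S).toAlgebra
  have : IsScalarTower k[X] (PureCubic k[X] S) L :=
    IsScalarTower.of_algebraMap_eq fun r ↦ (lift_of _ s hs r).symm
  have : IsIntegralClosure (PureCubic k[X] S) k[X] L :=
    ⟨lift_injective hS hs, fun {_} ↦ ⟨exists_lift_eq_of_isIntegral hs hadj hS h3 hsq,
      fun ⟨x, hx⟩ ↦ hx ▸ isIntegral_lift hs x⟩⟩
  exact IsIntegralClosure.isDedekindDomain k[X] (RatFunc k) L _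

end IntegralClosure

theorem isDedekindDomain {k : Type*} [Field k] {S : k[X]} (hS : ¬ 3 ∣ S.natDegree)
    (h3 : (3 : k) ≠ 0) (hsq : Squarefree S) : IsDedekindDomain (PureCubic k[X] S) := by
  let f : (RatFunc k)[X] := X ^ 3 - C (algebraMap k[X] (RatFunc k) S)
  have : Fact (Irreducible f) :=
    ⟨X_pow_sub_C_irreducible_of_prime Nat.prime_three (pow_three_ne_algebraMap hS)⟩
  have hroot : AdjoinRoot.root f ^ 3 = algebraMap k[X] (AdjoinRoot f) S := by
    have h := AdjoinRoot.eval₂_root f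
    rwa [eval₂_sub, eval₂_pow, eval₂_X, eval₂_C, sub_eq_zero] at h
  exact isDedekindDomain_of_adjoin hroot AdjoinRoot.adjoinRoot_eq_top hS h3 hsq

end PureCubic

/-! ### Ideal classes and Galois descent -/

section IdealClass

variable {R A : Type*} [CommRing R] [CommRing A]

theorem coe_ringEquiv_injective (e : R ≃+* A) : Function.Injective (e : R →+* A) :=
  e.injective

theorem map_ne_bot_of_injective {f : R →+* A} (hf : Function.Injective f) {I : Ideal R}
    (hI : I ≠ ⊥) : I.map f ≠ ⊥ :=
  (Ideal.map_eq_bot_iff_of_injective hf).not.2 hI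

variable [IsDedekindDomain R]

open scoped nonZeroDivisors Classical in
/-- The class of an ideal, written additively, with junk value `0` at the zero ideal. -/
noncomputable def idealClass (I : Ideal R) : Additive (ClassGroup R) :=
  if h : I = ⊥ then 0 else
    Additive.ofMul (ClassGroup.mk0 ⟨I, mem_nonZeroDivisors_iff_ne_zero.2 h⟩)

theorem idealClass_of_ne {I : Ideal R} (h : I ≠ ⊥) : idealClass I =
    Additive.ofMul (ClassGroup.mk0 ⟨I, mem_nonZeroDivisors_iff_ne_zero.2 h⟩) :=
  dif_neg h

theorem idealClass_mul {I J : Ideal R} (hI : I ≠ ⊥) (hJ : J ≠ ⊥) :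
    idealClass (I * J) = idealClass I + idealClass J := by
  rw [idealClass_of_ne hI, idealClass_of_ne hJ, idealClass_of_ne (mul_ne_zero hI hJ), ← ofMul_mul,
    ← map_mul]
  rfl

theorem idealClass_eq_zero_iff {I : Ideal R} (hI : I ≠ ⊥) :
    idealClass I = 0 ↔ I.IsPrincipal := by
  rw [idealClass_of_ne hI, ← ClassGroup.mk0_eq_one_iff (mem_nonZeroDivisors_iff_ne_zero.2 hI)]
  exact Iff.rfl

theorem idealClass_one : idealClass (1 : Ideal R) = 0 :=
  (idealClass_eq_zero_iff one_ne_zero).2 ⟨1, by simp⟩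

theorem idealClass_pow {I : Ideal R} (hI : I ≠ ⊥) (n : ℕ) :
    idealClass (I ^ n) = n • idealClass I := by
  induction n with
  | zero => simpa using idealClass_one
  | succ n ih => rw [pow_succ, idealClass_mul (pow_ne_zero n hI) hI, ih, succ_nsmul]

theorem idealClass_span_singleton (x : R) : idealClass (Ideal.span {x}) = 0 := by
  by_cases h : Ideal.span {x} = ⊥
  · simp [idealClass, h]
  · exact (idealClass_eq_zero_iff h).2 ⟨x, rfl⟩

theorem exists_idealClass_eq (c : Additive (ClassGroup R)) :
    ∃ I : Ideal R, I ≠ ⊥ ∧ idealClass I = c := by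
  obtain ⟨⟨I, hI⟩, h⟩ := ClassGroup.mk0_surjective c.toMul
  have hI' := mem_nonZeroDivisors_iff_ne_zero.1 hI
  exact ⟨I, hI', by rw [idealClass_of_ne hI', h]; rfl⟩

theorem idealClass_prod {ι : Type*} (s : Finset ι) (f : ι → Ideal R) (hf : ∀ i ∈ s, f i ≠ ⊥) :
    idealClass (∏ i ∈ s, f i) = ∑ i ∈ s, idealClass (f i) := by
  classical
  induction s using Finset.induction_on with
  | empty => simpa using idealClass_one
  | insert a s ha ih =>
    rw [Finset.forall_mem_insert] at hf
    rw [Finset.prod_insert ha, Finset.sum_insert ha,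
      idealClass_mul hf.1 (Finset.prod_ne_zero_iff.2 hf.2), ih hf.2]

variable [IsDedekindDomain A]

/-- The homomorphism of class groups induced by an injective ring homomorphism. -/
noncomputable def classMap (f : R →+* A) (hf : Function.Injective f) :
    Additive (ClassGroup R) →+ Additive (ClassGroup A) :=
  let : Algebra R A := f.toAlgebra
  have : FaithfulSMul R A := (faithfulSMul_iff_algebraMap_injective R A).2 hf
  MonoidHom.toAdditive (ClassGroup.extendedHom R A)

theorem classMap_idealClass (f : R →+* A) (hf : Function.Injective f) {I : Ideal R}
    (hI : I ≠ ⊥) : classMap f hf (idealClass I) = idealClass (I.map f) := by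
  let : Algebra R A := f.toAlgebra
  have : FaithfulSMul R A := (faithfulSMul_iff_algebraMap_injective R A).2 hf
  rw [idealClass_of_ne hI, idealClass_of_ne (map_ne_bot_of_injective hf hI)]
  exact congrArg Additive.ofMul (ClassGroup.extendedHom_mk0 R A _)

/-- The action of the ring automorphisms of `R` on the class group of `R`. -/
noncomputable def classAut : (R ≃+* R) →* AddMonoid.End (Additive (ClassGroup R)) where
  toFun e := classMap (e : R →+* R) (coe_ringEquiv_injective e)
  map_one' := DFunLike.ext _ _ fun c ↦ by
    obtain ⟨I, hI, rfl⟩ := exists_idealClass_eq c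
    exact (classMap_idealClass _ (coe_ringEquiv_injective 1) hI).trans
      (congrArg idealClass (Ideal.map_id I))
  map_mul' e e' := DFunLike.ext _ _ fun c ↦ by
    obtain ⟨I, hI, rfl⟩ := exists_idealClass_eq c
    have h : classMap (e : R →+* R) (coe_ringEquiv_injective e)
        (classMap (e' : R →+* R) (coe_ringEquiv_injective e') (idealClass I)) =
        idealClass (I.map ((e * e' : R ≃+* R) : R →+* R)) := by
      rw [classMap_idealClass _ _ hI,
        classMap_idealClass _ _ (map_ne_bot_of_injective (coe_ringEquiv_injective e') hI),
        Ideal.map_map]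
      rfl
    exact (classMap_idealClass _ (coe_ringEquiv_injective (e * e')) hI).trans h.symm

theorem classAut_idealClass (e : R ≃+* R) {I : Ideal R} (hI : I ≠ ⊥) :
    classAut e (idealClass I) = idealClass (I.map (e : R →+* R)) :=
  classMap_idealClass _ (coe_ringEquiv_injective e) hI

end IdealClass

section Descent

@[to_additive]
theorem prod_range_succ_eq_of_eq {M : Type*} [CommMonoid M] (f : ℕ → M) {d : ℕ}
    (h : f d = f 0) : ∏ r ∈ Finset.range d, f (r + 1) = ∏ r ∈ Finset.range d, f r := by
  cases d with
  | zero => rfl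
  | succ d => rw [Finset.prod_range_succ, h, Finset.prod_range_succ' f]

variable {R A : Type*} [CommRing R] [CommRing A] {f : R →+* A} {σ : A ≃+* A} {d : ℕ}

theorem map_prod_map_pow (hσ : σ ^ d = 1) (I : Ideal A) :
    (∏ r ∈ Finset.range d, I.map ((σ ^ r : A ≃+* A) : A →+* A)).map (σ : A →+* A) =
      ∏ r ∈ Finset.range d, I.map ((σ ^ r : A ≃+* A) : A →+* A) := by
  rw [← Ideal.mapHom_apply, map_prod,
    ← prod_range_succ_eq_of_eq (fun r ↦ I.map ((σ ^ r : A ≃+* A) : A →+* A)) (by simp [hσ])]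
  refine Finset.prod_congr rfl fun r _ ↦ ?_
  rw [Ideal.mapHom_apply, Ideal.map_map, pow_succ']
  rfl

theorem exists_map_eq_sum_pow (hσ : σ ^ d = 1) (hfix : ∀ x, σ x = x → ∃ y, f y = x) (x : A) :
    ∃ y, f y = ∑ r ∈ Finset.range d, (σ ^ r) x := by
  refine hfix _ ?_
  rw [map_sum, ← sum_range_succ_eq_of_eq (fun r ↦ (σ ^ r) x) (by simp [hσ])]
  exact Finset.sum_congr rfl fun r _ ↦ by rw [pow_succ', RingAut.mul_apply]

variable {J : Type*} [Fintype J] {c e : J → A} (hd : 0 < d) (hσ : σ ^ d = 1)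
  (hfix : ∀ x, σ x = x → ∃ y, f y = x)
  (hce : ∀ r < d, ∑ j, c j * (σ ^ r) (e j) = if r = 0 then 1 else 0)

include hd hσ hfix hce in
/-- The relations `hce` say that `c` and `e` are dual bases for the trace form of `A` over the
invariants, so that every `x` is the combination with coefficients `c` of traces of multiples
of `x`. -/
theorem map_comap_eq_of_map_eq {P : Ideal A} (hP : P.map (σ : A →+* A) = P) :
    (P.comap f).map f = P := by
  refine le_antisymm Ideal.map_comap_le fun x hx ↦ ?_
  have hmem (r : ℕ) {y : A} (hy : y ∈ P) : (σ ^ r) y ∈ P := by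
    induction r with
    | zero => simpa using hy
    | succ r ih =>
      rw [pow_succ', ← hP]
      exact Ideal.mem_map_of_mem (σ : A →+* A) ih
  have hx_eq : x = ∑ j, c j * ∑ r ∈ Finset.range d, (σ ^ r) (e j * x) := by
    calc x = ∑ r ∈ Finset.range d, (if r = 0 then 1 else 0) * (σ ^ r) x := by
          simp [Finset.sum_ite_eq', hd.ne']
      _ = ∑ r ∈ Finset.range d, ∑ j, c j * (σ ^ r) (e j * x) := by
          refine Finset.sum_congr rfl fun r hr ↦ ?_
          simp_rw [← hce r (Finset.mem_range.1 hr), Finset.sum_mul, map_mul, mul_assoc]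
      _ = _ := by
          rw [Finset.sum_comm]
          simp_rw [Finset.mul_sum]
  rw [hx_eq]
  refine Ideal.sum_mem _ fun j _ ↦ Ideal.mul_mem_left _ _ ?_
  obtain ⟨y, hy⟩ := exists_map_eq_sum_pow hσ hfix (e j * x)
  rw [← hy]
  refine Ideal.mem_map_of_mem f (Ideal.mem_comap.2 (hy ▸ ?_))
  exact Ideal.sum_mem _ fun r _ ↦ hmem r (P.mul_mem_left _ hx)

include hd hσ hfix hce in
theorem exists_classMap_eq_sum_classAut [IsDedekindDomain R] [IsDedekindDomain A]
    (hf : Function.Injective f) (x : Additive (ClassGroup A)) :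
    ∃ y, classMap f hf y = ∑ r ∈ Finset.range d, (classAut σ ^ r) x := by
  obtain ⟨I, hI, rfl⟩ := exists_idealClass_eq x
  have hmap (r : ℕ) : I.map ((σ ^ r : A ≃+* A) : A →+* A) ≠ ⊥ :=
    map_ne_bot_of_injective (coe_ringEquiv_injective (σ ^ r)) hI
  set P : Ideal A := ∏ r ∈ Finset.range d, I.map ((σ ^ r : A ≃+* A) : A →+* A) with hP
  have hP0 : P ≠ ⊥ := Finset.prod_ne_zero_iff.2 fun r _ ↦ hmap r
  have hcomap : (P.comap f).map f = P :=
    map_comap_eq_of_map_eq hd hσ hfix hce (map_prod_map_pow hσ I)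
  have hcomap0 : P.comap f ≠ ⊥ := by
    intro h
    rw [h, Ideal.map_bot] at hcomap
    exact hP0 hcomap.symm
  refine ⟨idealClass (P.comap f), ?_⟩
  rw [classMap_idealClass _ _ hcomap0, hcomap, hP, idealClass_prod _ _ fun r _ ↦ hmap r]
  exact Finset.sum_congr rfl fun r _ ↦ by rw [← map_pow, classAut_idealClass _ hI]

end Descent

/-! ### Groups of translations with a Frobenius and a rotation -/

/-- A group of translations by `H`, a Frobenius `F` and a rotation `ω`, with the relations
between the automorphisms `X ↦ X + h`, the arithmetic Frobenius and `s ↦ ζ s` of the curve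
`s ^ 3 = S(X)`. -/
structure AffineFrobenius (G H : Type*) [Group G] [AddCommGroup H] where
  /-- the action of the Frobenius on the translation parameters -/
  φ : AddMonoid.End H
  /-- the translations -/
  T : H → G
  /-- the Frobenius -/
  F : G
  /-- the rotation -/
  ω : G
  /-- a period of `φ` -/
  n : ℕ
  n_ne_zero : n ≠ 0
  φ_pow_n : φ ^ n = 1
  T_add : ∀ a b, T (a + b) = T a * T b
  F_T : ∀ h, F * T h = T (φ h) * F
  ω_T : ∀ h, ω * T h = T h * ω
  F_ω : F * ω = ω ^ 2 * F
  ω_pow : ω ^ 3 = 1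

namespace AffineFrobenius

variable {C : Type*} [AddCommGroup C] {G : Type*} [Group G] [DistribMulAction G C]
  {H : Type*} [AddCommGroup H]

section Relations

variable (A : AffineFrobenius G H)

theorem T_zero : A.T 0 = 1 := by
  have h := A.T_add 0 0
  rw [add_zero] at h
  exact mul_eq_left.1 h.symm

theorem commute_T (a b : H) : Commute (A.T a) (A.T b) := by
  rw [Commute, SemiconjBy, ← A.T_add, add_comm, A.T_add]

theorem semiconjBy_F_pow_T (r : ℕ) (h : H) :
    SemiconjBy (A.F ^ r) (A.T h) (A.T ((A.φ ^ r) h)) := by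
  induction r with
  | zero => simp
  | succ r ih =>
    rw [pow_succ', pow_succ' A.φ]
    exact SemiconjBy.mul_left (A.F_T _) ih

theorem commute_F_pow_two_mul_ω (u : ℕ) : Commute (A.F ^ (2 * u)) A.ω := by
  have h : SemiconjBy A.F A.ω (A.ω ^ 2) := A.F_ω
  have h4 : (A.ω ^ 2) ^ 2 = A.ω := by rw [← pow_mul, pow_succ, A.ω_pow, one_mul]
  have h2 : SemiconjBy (A.F ^ 2) A.ω ((A.ω ^ 2) ^ 2) := pow_two A.F ▸ (h.pow_right 2).mul_left h
  rw [h4] at h2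
  rw [pow_mul]
  exact Commute.pow_left h2 u

theorem semiconjBy_F_pow_ω {u : ℕ} (hu : Odd u) : SemiconjBy (A.F ^ u) A.ω (A.ω ^ 2) := by
  obtain ⟨k, rfl⟩ := hu
  rw [pow_succ']
  exact SemiconjBy.mul_left A.F_ω (A.commute_F_pow_two_mul_ω k)

theorem bijective_φ_pow (r : ℕ) : Function.Bijective ⇑(A.φ ^ r) := by
  obtain ⟨e, he⟩ := (IsUnit.of_pow_eq_one A.φ_pow_n A.n_ne_zero).pow r
  rw [← he]
  refine Function.bijective_iff_has_inverse.2 ⟨⇑(e⁻¹ : (AddMonoid.End H)ˣ).val, fun h ↦ ?_,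
    fun h ↦ ?_⟩
  · exact DFunLike.congr_fun e.inv_mul h
  · exact DFunLike.congr_fun e.mul_inv h

/-- The difference operator `φ ^ r - 1`. -/
def δ (r : ℕ) : AddMonoid.End H := A.φ ^ r - 1

theorem δ_apply (r : ℕ) (h : H) : A.δ r h = (A.φ ^ r) h - h := rfl

theorem φ_pow_δ (r t : ℕ) (h : H) : (A.φ ^ r) (A.δ t h) = A.δ t ((A.φ ^ r) h) := by
  have hcomm : A.φ ^ r * A.δ t = A.δ t * A.φ ^ r :=
    ((Commute.refl A.φ).pow_pow r t).sub_right (Commute.one_right _)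
  exact DFunLike.congr_fun hcomm h

theorem exists_δ_mul_eq {r t : ℕ} (ht : Nat.gcd r A.n ∣ t) : ∃ ψ, A.δ t = A.δ r * ψ := by
  obtain ⟨c, hc⟩ : ∃ c, t ≡ r * c [MOD A.n] := by
    obtain ⟨d, rfl⟩ := ht
    rcases (Nat.gcd_le_right r (Nat.pos_of_ne_zero A.n_ne_zero)).lt_or_eq with hlt | heq
    · obtain ⟨m, -, hm⟩ := Nat.exists_mul_mod_eq_gcd hlt
      refine ⟨m * d, ?_⟩
      rw [← mul_assoc]
      exact Nat.ModEq.mul_right d (by rw [Nat.ModEq, hm, Nat.mod_eq_of_lt hlt])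
    · exact ⟨0, by rw [heq]; simp [Nat.ModEq]⟩
  refine ⟨∑ i ∈ Finset.range c, (A.φ ^ r) ^ i, ?_⟩
  rw [δ, δ, mul_geom_sum, ← pow_mul, pow_eq_pow_of_modEq hc A.φ_pow_n]

end Relations

section Invariants

variable (A : AffineFrobenius G H)

/-- The elements invariant under the translations by the image of `φ ^ t - 1`. -/
def invariants (C : Type*) [AddCommGroup C] [DistribMulAction G C] (t : ℕ) : AddSubgroup C where
  carrier := {x | ∀ h, A.T (A.δ t h) • x = x}
  zero_mem' _ := smul_zero _
  add_mem' hx hy h := by rw [smul_add, hx, hy]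
  neg_mem' hx h := by rw [smul_neg, hx]

variable {A}

theorem mem_invariants {t : ℕ} {x : C} : x ∈ A.invariants C t ↔ ∀ h, A.T (A.δ t h) • x = x :=
  Iff.rfl

theorem invariants_le_of_gcd_dvd {r t : ℕ} (hr : Nat.gcd r A.n ∣ t) :
    A.invariants C r ≤ A.invariants C t := by
  obtain ⟨ψ, hψ⟩ := A.exists_δ_mul_eq hr
  exact fun x hx h ↦ by rw [hψ]; exact hx (ψ h)

theorem smul_mem_invariants {t : ℕ} {x : C} (hx : x ∈ A.invariants C t) {g : G}
    (hg : ∀ h, Commute g (A.T h)) : g • x ∈ A.invariants C t := fun h ↦ by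
  rw [← mul_smul, ← (hg _).eq, mul_smul, hx]

theorem F_pow_smul_mem_invariants {t : ℕ} {x : C} (hx : x ∈ A.invariants C t) (r : ℕ) :
    A.F ^ r • x ∈ A.invariants C t := fun h ↦ by
  obtain ⟨h', rfl⟩ := (A.bijective_φ_pow r).2 h
  rw [← φ_pow_δ, ← mul_smul, ← (A.semiconjBy_F_pow_T _ _).eq, mul_smul, hx]

end Invariants

section Trace

variable (A : AffineFrobenius G H)

/-- The trace `1 + F + ⋯ + F ^ (R - 1)`. -/
def frobTrace (R : ℕ) : C →+ C where
  toFun w := ∑ r ∈ Finset.range R, A.F ^ r • w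
  map_zero' := by simp
  map_add' x y := by simp [Finset.sum_add_distrib]

theorem frobTrace_apply (R : ℕ) (w : C) :
    A.frobTrace R w = ∑ r ∈ Finset.range R, A.F ^ r • w := rfl

theorem frobTrace_mul {R : ℕ} {w : C} (hw : A.F ^ R • w = w) (c : ℕ) :
    A.frobTrace (R * c) w = c • A.frobTrace R w := by
  have hfix (c : ℕ) : A.F ^ (R * c) • w = w := by
    rw [pow_mul]
    exact (MulAction.stabilizer G w).pow_mem hw c
  induction c with
  | zero => simp [frobTrace_apply]
  | succ c ih =>
    rw [Nat.mul_succ, succ_nsmul, ← ih]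
    simp only [frobTrace_apply]
    rw [Finset.sum_range_add]
    congr 1
    exact Finset.sum_congr rfl fun r _ ↦ by rw [add_comm, pow_add, mul_smul, hfix]

theorem frobTrace_mem_invariants {t : ℕ} {w : C} (hw : w ∈ A.invariants C t) (R : ℕ) :
    A.frobTrace R w ∈ A.invariants C t :=
  frobTrace_apply A R w ▸ sum_mem fun r _ ↦ F_pow_smul_mem_invariants hw r

end Trace

section Norm

variable [Fintype H] (A : AffineFrobenius G H)

/-- The sum over the translations by the image of `φ ^ t - 1`, each counted with the
multiplicity `#(ker (φ ^ t - 1))`. -/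
def transNorm (t : ℕ) : C →+ C where
  toFun x := ∑ h, A.T (A.δ t h) • x
  map_zero' := by simp
  map_add' x y := by simp [Finset.sum_add_distrib]

theorem transNorm_apply (t : ℕ) (x : C) : A.transNorm t x = ∑ h, A.T (A.δ t h) • x := rfl

theorem transNorm_mem_invariants (t : ℕ) (x : C) : A.transNorm t x ∈ A.invariants C t := by
  intro h
  rw [transNorm_apply, Finset.smul_sum]
  refine Fintype.sum_equiv (Equiv.addLeft h) _ _ fun h' ↦ ?_
  rw [← mul_smul, ← A.T_add, Equiv.coe_addLeft, map_add]

variable {A}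

theorem transNorm_eq_card_nsmul {t : ℕ} {x : C} (hx : x ∈ A.invariants C t) :
    A.transNorm t x = Fintype.card H • x := by
  rw [transNorm_apply, Finset.sum_congr rfl fun h _ ↦ hx h, Finset.sum_const, Finset.card_univ]

theorem transNorm_smul (t : ℕ) (x : C) {g : G} (hg : ∀ h, Commute g (A.T h)) :
    A.transNorm t (g • x) = g • A.transNorm t x := by
  simp_rw [transNorm_apply, Finset.smul_sum, ← mul_smul, (hg _).eq]

theorem transNorm_F_pow_smul (t r : ℕ) (x : C) :
    A.transNorm t (A.F ^ r • x) = A.F ^ r • A.transNorm t x := by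
  rw [transNorm_apply, transNorm_apply, Finset.smul_sum]
  refine (Fintype.sum_bijective _ (A.bijective_φ_pow r) _ _ fun h ↦ ?_).symm
  rw [← mul_smul, ← mul_smul, (A.semiconjBy_F_pow_T _ _).eq, φ_pow_δ]

theorem transNorm_comm (r t : ℕ) (x : C) :
    A.transNorm r (A.transNorm t x) = A.transNorm t (A.transNorm r x) := by
  rw [A.transNorm_apply t x, map_sum, transNorm_apply]
  exact Finset.sum_congr rfl fun h _ ↦ transNorm_smul r x fun _ ↦ A.commute_T _ _

theorem transNorm_eq_zero_of_gcd_dvd {r t M : ℕ} (hr : Nat.gcd r A.n ∣ t)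
    (hM : (Fintype.card H).Coprime M) {x : C} (hx : A.transNorm t x = 0) (hMx : M • x = 0) :
    A.transNorm r x = 0 := by
  refine (nsmul_eq_zero_iff_of_coprime hM).1 ⟨?_, ?_⟩
  · have hinv := invariants_le_of_gcd_dvd hr (A.transNorm_mem_invariants r x)
    rw [← transNorm_eq_card_nsmul hinv, transNorm_comm, hx, map_zero]
  · rw [← map_nsmul, hMx, map_zero]

variable (A)

theorem transNorm_frobTrace (t R : ℕ) (w : C) :
    A.transNorm t (A.frobTrace R w) = A.frobTrace R (A.transNorm t w) := by
  rw [frobTrace_apply, map_sum]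
  exact Finset.sum_congr rfl fun r _ ↦ transNorm_F_pow_smul t r w

theorem sum_transNorm_F_pow_smul (R : ℕ) (w : C) :
    ∑ r ∈ Finset.range R, A.transNorm r (A.F ^ r • w) =
      ∑ h, A.T (-h) • A.frobTrace R (A.T h • w) := by
  simp_rw [transNorm_apply, frobTrace_apply, Finset.smul_sum]
  rw [Finset.sum_comm]
  refine Finset.sum_congr rfl fun h _ ↦ Finset.sum_congr rfl fun r _ ↦ ?_
  rw [← mul_smul (A.F ^ r), (A.semiconjBy_F_pow_T _ _).eq, ← mul_smul, ← mul_smul, ← mul_assoc,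
    ← A.T_add, δ_apply, sub_eq_neg_add]

end Norm

section New

variable [Fintype H] (A : AffineFrobenius G H)

/-- The `M`-torsion elements that are invariant at level `u`, where `F ^ (2 * u)` acts trivially,
and whose norm to level `t` vanishes. -/
def newSubgroup (C : Type*) [AddCommGroup C] [DistribMulAction G C] (t u M : ℕ) :
    AddSubgroup C where
  carrier := {w | w ∈ A.invariants C u ∧ A.transNorm t w = 0 ∧ A.F ^ (2 * u) • w = w ∧ M • w = 0}
  zero_mem' := ⟨zero_mem _, map_zero _, smul_zero _, smul_zero _⟩
  add_mem' hx hy := ⟨add_mem hx.1 hy.1, by rw [map_add, hx.2.1, hy.2.1, add_zero],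
    by rw [smul_add, hx.2.2.1, hy.2.2.1], by rw [smul_add, hx.2.2.2, hy.2.2.2, add_zero]⟩
  neg_mem' hx := ⟨neg_mem hx.1, by rw [map_neg, hx.2.1, neg_zero], by rw [smul_neg, hx.2.2.1],
    by rw [smul_neg, hx.2.2.2, neg_zero]⟩

variable {A} {t u M : ℕ} {w : C}

theorem smul_mem_newSubgroup (hw : w ∈ A.newSubgroup C t u M) {g : G}
    (hg : ∀ h, Commute g (A.T h)) (hF : A.F ^ (2 * u) • g • w = g • A.F ^ (2 * u) • w) :
    g • w ∈ A.newSubgroup C t u M := by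
  obtain ⟨hinv, hnorm, hfrob, htors⟩ := hw
  exact ⟨smul_mem_invariants hinv hg, by rw [transNorm_smul _ _ hg, hnorm, smul_zero],
    by rw [hF, hfrob], by rw [smul_comm, htors, smul_zero]⟩

theorem T_smul_mem_newSubgroup (hw : w ∈ A.newSubgroup C t u M) (h : H) :
    A.T h • w ∈ A.newSubgroup C t u M := by
  refine smul_mem_newSubgroup hw (fun _ ↦ A.commute_T _ _) ?_
  have h_eq : (A.φ ^ (2 * u)) h = A.δ u ((A.φ ^ u) h + h) + h := by
    rw [map_add, δ_apply, δ_apply, two_mul, pow_add, AddMonoid.End.coe_mul,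
      Function.comp_apply]
    abel
  rw [← mul_smul, (A.semiconjBy_F_pow_T _ _).eq, h_eq, A.T_add, mul_smul, mul_smul, hw.2.2.1]
  exact smul_mem_invariants hw.1 (fun _ ↦ A.commute_T _ _) _

theorem F_pow_smul_mem_newSubgroup (hw : w ∈ A.newSubgroup C t u M) (r : ℕ) :
    A.F ^ r • w ∈ A.newSubgroup C t u M := by
  obtain ⟨hinv, hnorm, hfrob, htors⟩ := hw
  exact ⟨F_pow_smul_mem_invariants hinv r, by rw [transNorm_F_pow_smul, hnorm, smul_zero],
    by rw [← mul_smul, ← pow_add, add_comm, pow_add, mul_smul, hfrob],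
    by rw [smul_comm, htors, smul_zero]⟩

theorem ω_smul_mem_newSubgroup (hw : w ∈ A.newSubgroup C t u M) :
    A.ω • w ∈ A.newSubgroup C t u M :=
  smul_mem_newSubgroup hw A.ω_T <| by
    rw [← mul_smul, (A.commute_F_pow_two_mul_ω u).eq, mul_smul]

theorem sub_transNorm_mem_newSubgroup (hinv : w ∈ A.invariants C u)
    (hfrob : A.F ^ (2 * u) • w = w) (htors : M • w = 0) :
    Fintype.card H • w - A.transNorm t w ∈ A.newSubgroup C t u M := by
  refine ⟨sub_mem (nsmul_mem hinv _) fun h ↦ ?_, ?_, ?_, ?_⟩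
  · rw [← transNorm_smul _ _ fun _ ↦ A.commute_T _ _, hinv]
  · rw [map_sub, map_nsmul, transNorm_eq_card_nsmul (A.transNorm_mem_invariants t w), sub_self]
  · rw [smul_sub, ← transNorm_F_pow_smul, smul_comm, hfrob]
  · rw [smul_sub, smul_comm, htors, smul_zero, ← map_nsmul, htors, map_zero, sub_zero]

section Annihilator

variable {k : ℕ} (hM : (Fintype.card H).Coprime M)
  (hgcd : ∀ r, 0 < r → r < 2 * u → r ≠ u → Nat.gcd r A.n ∣ t)
  (hk : ∀ w ∈ A.newSubgroup C t u M, k • A.frobTrace (2 * u) w = 0)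

include hM hgcd in
theorem sum_transNorm_F_pow_smul_eq (hu : 0 < u) (hw : w ∈ A.newSubgroup C t u M) :
    ∑ r ∈ Finset.range (2 * u), A.transNorm r (A.F ^ r • w) =
      Fintype.card H • (w + A.F ^ u • w) := by
  have hzero {r : ℕ} (hr0 : 0 < r) (hr : r < 2 * u) (hru : r ≠ u) :
      A.transNorm r (A.F ^ r • w) = 0 :=
    have hFw := F_pow_smul_mem_newSubgroup hw r
    transNorm_eq_zero_of_gcd_dvd (hgcd r hr0 hr hru) hM hFw.2.1 hFw.2.2.2
  have h_zero : A.transNorm 0 (A.F ^ 0 • w) = Fintype.card H • w := by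
    rw [pow_zero, one_smul]
    exact transNorm_eq_card_nsmul fun h ↦ by simp [δ_apply, T_zero]
  have h_u : A.transNorm u (A.F ^ u • w) = Fintype.card H • A.F ^ u • w :=
    transNorm_eq_card_nsmul (F_pow_smul_mem_invariants hw.1 u)
  rw [smul_add, ← h_zero, ← h_u, ← Finset.sum_pair
    (f := fun r ↦ A.transNorm r (A.F ^ r • w)) hu.ne]
  refine (Finset.sum_subset (fun r hr ↦ ?_) fun r hr hr' ↦ ?_).symm
  · simp only [Finset.mem_insert, Finset.mem_singleton] at hr
    rw [Finset.mem_range]; omega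
  · simp only [Finset.mem_insert, Finset.mem_singleton, not_or] at hr'
    exact hzero (Nat.pos_of_ne_zero hr'.1) (Finset.mem_range.1 hr) hr'.2

include hM hgcd hk in
theorem nsmul_add_F_pow_smul_eq_zero (hu : 0 < u) (hw : w ∈ A.newSubgroup C t u M) :
    k • (w + A.F ^ u • w) = 0 := by
  refine (nsmul_eq_zero_iff_of_coprime hM).1 ⟨?_, ?_⟩
  · rw [smul_comm, ← sum_transNorm_F_pow_smul_eq hM hgcd hu hw, sum_transNorm_F_pow_smul,
      Finset.smul_sum]
    refine Finset.sum_eq_zero fun h _ ↦ ?_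
    rw [smul_comm, hk _ (T_smul_mem_newSubgroup hw h), smul_zero]
  · rw [smul_comm, (add_mem hw (F_pow_smul_mem_newSubgroup hw u)).2.2.2, smul_zero]

include hM hgcd hk in
/-- Both `w + F ^ u w` and `ω F ^ u w + F ^ u ω F ^ u w = ω F ^ u w + ω ^ 2 w` are killed by `k`;
the difference of the second and `ω` times the first is `ω (ω w - w)`. -/
theorem nsmul_ω_smul_sub_eq_zero (hu : Odd u) (hw : w ∈ A.newSubgroup C t u M) :
    k • (A.ω • w - w) = 0 := by
  have hFw := F_pow_smul_mem_newSubgroup hw u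
  have h_first := nsmul_add_F_pow_smul_eq_zero hM hgcd hk hu.pos hw
  have h_second :=
    nsmul_add_F_pow_smul_eq_zero hM hgcd hk hu.pos (ω_smul_mem_newSubgroup hFw)
  have h_ω : A.F ^ u • A.ω • A.F ^ u • w = A.ω • A.ω • w := by
    rw [← mul_smul, (A.semiconjBy_F_pow_ω hu).eq, mul_smul, ← mul_smul (A.F ^ u), ← pow_add,
      ← two_mul, hw.2.2.1, pow_two, mul_smul]
  rw [h_ω] at h_second
  rw [← smul_eq_zero_iff_eq A.ω]
  calc A.ω • k • (A.ω • w - w)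
      = k • (A.ω • A.F ^ u • w + A.ω • A.ω • w) - A.ω • k • (w + A.F ^ u • w) := by
        rw [smul_comm A.ω k, smul_comm A.ω k, ← smul_sub, smul_sub, smul_add]
        congr 1
        abel
    _ = 0 := by rw [h_first, h_second, smul_zero, sub_zero]

include hM hgcd hk in
theorem nsmul_ω_smul_sub_mem_invariants (hu : Odd u) (hinv : w ∈ A.invariants C u)
    (hfrob : A.F ^ (2 * u) • w = w) (htors : M • w = 0) :
    k • (A.ω • w - w) ∈ A.invariants C t := by
  have hnew := nsmul_ω_smul_sub_eq_zero hM hgcd hk hu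
    (sub_transNorm_mem_newSubgroup hinv hfrob htors)
  have hcard : Fintype.card H • (k • (A.ω • w - w)) = A.transNorm t (k • (A.ω • w - w)) := by
    rw [← sub_eq_zero, ← hnew, map_nsmul, map_sub, transNorm_smul _ _ A.ω_T, smul_sub A.ω,
      smul_comm A.ω, smul_comm (Fintype.card H) k, ← smul_sub]
    congr 1
    rw [smul_sub]; abel
  refine fun h ↦ sub_eq_zero.1 ((nsmul_eq_zero_iff_of_coprime hM).1 ⟨?_, ?_⟩)
  · rw [smul_sub, ← smul_comm (A.T _), hcard, A.transNorm_mem_invariants t _ h, sub_self]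
  · have hMk : M • (k • (A.ω • w - w)) = 0 := by
      rw [smul_comm, smul_sub, smul_comm, htors, smul_zero, sub_zero, smul_zero]
    rw [smul_sub, ← smul_comm (A.T _), hMk, smul_zero, sub_zero]

end Annihilator

end New

end AffineFrobenius

/-! ### Arithmetic of the levels -/

theorem prime_pow_mul_dvd_of_factorization_le {l e M j : ℕ} (hl : l.Prime) (he : e ∣ M)
    (hM : M ≠ 0) (h : e.factorization l + j ≤ M.factorization l) : l ^ j * e ∣ M := by
  have he0 : e ≠ 0 := ne_zero_of_dvd_ne_zero hM he
  have hl0 : l ^ j ≠ 0 := pow_ne_zero _ hl.ne_zero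
  rw [← Nat.factorization_prime_le_iff_dvd (mul_ne_zero hl0 he0) hM]
  intro p hp
  rw [Nat.factorization_mul hl0 he0, hl.factorization_pow, Finsupp.add_apply,
    Finsupp.single_apply]
  split_ifs with hlp
  · subst hlp; omega
  · rw [zero_add]
    exact (Nat.factorization_le_iff_dvd he0 hM).2 he p

theorem add_one_dvd_pow_three_pow_add_one (q i : ℕ) : q + 1 ∣ q ^ 3 ^ i + 1 := by
  simpa using Odd.nat_add_dvd_pow_add_pow q 1 (Odd.pow (by decide) : Odd (3 ^ i))

theorem three_pow_mul_dvd_pow_three_pow_add_one {q : ℕ} (hq : 3 ∣ q + 1) (i : ℕ) :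
    3 ^ i * (q + 1) ∣ q ^ 3 ^ i + 1 := by
  induction i with
  | zero => simp
  | succ i ih =>
    have h3 := hq.trans (add_one_dvd_pow_three_pow_add_one q i)
    rw [pow_succ 3 i, pow_mul]
    generalize q ^ 3 ^ i = a at *
    obtain ⟨b, rfl⟩ : ∃ b, a = 3 * b + 2 := ⟨a / 3, by omega⟩
    obtain ⟨c, hc⟩ := ih
    refine ⟨c * (3 * b ^ 2 + 3 * b + 1), ?_⟩
    calc (3 * b + 2) ^ 3 + 1 = (3 * b + 2 + 1) * 3 * (3 * b ^ 2 + 3 * b + 1) := by ring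
      _ = _ := by rw [hc]; ring

theorem nine_mul_dvd_of_factorization_lt {q i n m e : ℕ} (hq : 3 ∣ q + 1) (hi : n + 1 ≤ 2 * i)
    (hin : i ≤ n) (hm : m ∣ q + 1) (he : e ∣ q ^ 3 ^ i + 1)
    (hlt : e.factorization 3 < m.factorization 3) :
    9 * (e * 3 ^ (n - i)) ∣ q ^ 3 ^ i + 1 := by
  have h_le : m.factorization 3 ≤ (q + 1).factorization 3 :=
    (Nat.factorization_le_iff_dvd (ne_zero_of_dvd_ne_zero q.succ_ne_zero hm)
      q.succ_ne_zero).2 hm 3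
  have h_add : i + (q + 1).factorization 3 ≤ (q ^ 3 ^ i + 1).factorization 3 := by
    have h := (Nat.factorization_le_iff_dvd (by positivity) (Nat.succ_ne_zero _)).2
      (three_pow_mul_dvd_pow_three_pow_add_one hq i) 3
    rwa [Nat.factorization_mul (by positivity) q.succ_ne_zero,
      Nat.prime_three.factorization_pow, Finsupp.add_apply, Finsupp.single_eq_same] at h
  have h := prime_pow_mul_dvd_of_factorization_le (j := 2 + (n - i)) Nat.prime_three he
    (Nat.succ_ne_zero _) (by omega)
  rw [pow_add] at h
  convert h using 1
  ring

/-- The quotients `k` of `M` by a multiple of `9` or by a prime other than `3`: the candidates for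
an annihilator of the classes constructed below that would be too small. -/
def ProperCofactor (M k : ℕ) : Prop :=
  0 < k ∧ (9 * k ∣ M ∨ ∃ l, l.Prime ∧ l ≠ 3 ∧ l * k = M)

theorem exists_properCofactor {q i n m e : ℕ} (hq : 3 ∣ q + 1) (hi : n + 1 ≤ 2 * i)
    (hin : i ≤ n) (hm : m ∣ q + 1) (he : e ∣ q ^ 3 ^ i + 1) (hme : ¬ m ∣ e) :
    ∃ k, ProperCofactor (q ^ 3 ^ i + 1) k ∧ Nat.gcd (e * 3 ^ (n - i)) (q ^ 3 ^ i + 1) ∣ k := by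
  have hm0 : m ≠ 0 := ne_zero_of_dvd_ne_zero q.succ_ne_zero hm
  have hM0 : q ^ 3 ^ i + 1 ≠ 0 := Nat.succ_ne_zero _
  have he0 : e ≠ 0 := ne_zero_of_dvd_ne_zero hM0 he
  obtain ⟨l, hl, hlt⟩ : ∃ l, l.Prime ∧ e.factorization l < m.factorization l := by
    rw [← Nat.factorization_prime_le_iff_dvd hm0 he0] at hme
    push Not at hme
    exact hme
  rcases eq_or_ne l 3 with rfl | hl3
  · exact ⟨e * 3 ^ (n - i),
      ⟨by positivity, .inl (nine_mul_dvd_of_factorization_lt hq hi hin hm he hlt)⟩,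
      Nat.gcd_dvd_left _ _⟩
  · have hmM := hm.trans (add_one_dvd_pow_three_pow_add_one q i)
    obtain ⟨c, hc⟩ : l ^ 1 * e ∣ q ^ 3 ^ i + 1 :=
      prime_pow_mul_dvd_of_factorization_le hl he hM0
        ((Nat.succ_le_of_lt hlt).trans ((Nat.factorization_le_iff_dvd hm0 hM0).2 hmM l))
    rw [pow_one] at hc
    have hcop : l.Coprime (3 ^ (n - i)) :=
      Nat.Coprime.pow_right _ ((Nat.coprime_primes hl Nat.prime_three).2 hl3)
    refine ⟨e * c, ⟨Nat.pos_of_ne_zero fun h ↦ hM0 ?_, .inr ⟨l, hl, hl3, ?_⟩⟩, ?_⟩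
    · rw [hc, mul_assoc, h, mul_zero]
    · rw [hc, mul_assoc]
    · rw [hc, mul_comm l, mul_assoc, Nat.gcd_mul_left, hcop.gcd_mul_left_cancel_right]
      exact mul_dvd_mul_left e (Nat.gcd_dvd_right _ _)

theorem gcd_three_pow_dvd {r i n : ℕ} (hr0 : 0 < r) (hr : r < 2 * 3 ^ i) (hri : r ≠ 3 ^ i) :
    Nat.gcd r (3 ^ n) ∣ 3 ^ (i - 1) := by
  obtain ⟨v, -, hv⟩ := (Nat.dvd_prime_pow Nat.prime_three).1 (Nat.gcd_dvd_right r (3 ^ n))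
  rw [hv]
  refine pow_dvd_pow 3 ?_
  by_contra hlt
  obtain ⟨c, rfl⟩ : 3 ^ i ∣ r :=
    (pow_dvd_pow 3 (by omega)).trans (hv ▸ Nat.gcd_dvd_left r (3 ^ n))
  have hc0 : 0 < c := Nat.pos_of_mul_pos_left hr0
  have hc2 : c < 2 := by
    rw [mul_comm 2] at hr
    exact lt_of_mul_lt_mul_left hr (Nat.zero_le _)
  obtain rfl : c = 1 := by omega
  exact hri (mul_one _)

/-! ### Independent elements of a given order -/

@[to_additive]
theorem exists_orderOf_eq_of_dvd_exponent {B : Type*} [CommGroup B]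
    (hB : Monoid.ExponentExists B) {m : ℕ} (hm : m ∣ Monoid.exponent B) :
    ∃ b : B, orderOf b = m := by
  obtain ⟨y, hy⟩ := Monoid.exists_orderOf_eq_exponent hB
  rw [← hy] at hm
  have hy0 : orderOf y ≠ 0 := hy ▸ Monoid.exponent_ne_zero.2 hB
  exact ⟨_, orderOf_pow_orderOf_div hy0 hm⟩

theorem finrank_ker_eq_of_finite {B M : Type*} [AddCommGroup B] [Finite B] [AddCommGroup M]
    [Module.Finite ℤ M] [Module.Free ℤ M] (g : M →ₗ[ℤ] B) :
    Module.finrank ℤ (LinearMap.ker g) = Module.finrank ℤ M := by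
  refine le_antisymm (Submodule.finrank_le _) ?_
  have hκ : (Nat.card B : ℤ) ≠ 0 := by exact_mod_cast Nat.card_pos.ne'
  let j : M →ₗ[ℤ] LinearMap.ker g :=
    LinearMap.codRestrict _ ((Nat.card B : ℤ) • LinearMap.id) fun e ↦ by
      rw [LinearMap.mem_ker, LinearMap.smul_apply, map_smul, natCast_zsmul]
      exact card_nsmul_eq_zero'
  refine LinearMap.finrank_le_finrank_of_injective (f := j) fun x y hxy ↦ ?_
  exact smul_right_injective _ hκ (congrArg Subtype.val hxy)

/-- The relation lattice of the `b i` has full rank and is divisible by `m`; the elements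
`m⁻¹ • Λ j`, for a basis `Λ` of it, have images in `B` with relation lattice `(m ℤ) ^ N`. -/
theorem exists_injective_pi_zmod {B : Type*} [AddCommGroup B] [Finite B] {N m : ℕ}
    (b : Fin N → B) (hb : ∀ e : Fin N → ℤ, ∑ i, e i • b i = 0 → ∀ i, (m : ℤ) ∣ e i) :
    ∃ f : (Fin N → ZMod m) →+ B, Function.Injective f := by
  let g : (Fin N → ℤ) →ₗ[ℤ] B := Fintype.linearCombination ℤ b
  let Λ : Module.Basis (Fin N) ℤ (LinearMap.ker g) :=
    Module.finBasisOfFinrankEq ℤ _ ((finrank_ker_eq_of_finite g).trans (by simp))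
  have hdiv (j : Fin N) : ∃ μ : Fin N → ℤ, (m : ℤ) • μ = Λ j := by
    choose μ hμ using hb (Λ j) ((Fintype.linearCombination_apply ℤ b _).symm.trans (Λ j).2)
    exact ⟨μ, funext fun i ↦ (hμ i).symm⟩
  choose μ hμ using hdiv
  have hmμ (j : Fin N) : (m : ℤ) • g (μ j) = 0 := by
    rw [← map_smul, hμ]; exact (Λ j).2
  let f (j : Fin N) : ZMod m →+ B :=
    ZMod.lift m ⟨zmultiplesHom B (g (μ j)), by rw [zmultiplesHom_apply]; exact hmμ j⟩
  have hf (j : Fin N) (c : ℤ) : f j (c : ZMod m) = c • g (μ j) := by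
    simp only [f, ZMod.lift_coe, zmultiplesHom_apply]
  refine ⟨∑ j, (f j).comp (Pi.evalAddMonoidHom (fun _ ↦ ZMod m) j),
    (injective_iff_map_eq_zero _).2 fun a ha ↦ ?_⟩
  obtain ⟨c, rfl⟩ : ∃ c : Fin N → ℤ, a = fun j ↦ (c j : ZMod m) := by
    choose c hc using fun j ↦ ZMod.intCast_surjective (a j)
    exact ⟨c, funext fun j ↦ (hc j).symm⟩
  have hker : ∑ j, c j • μ j ∈ LinearMap.ker g := by
    rw [LinearMap.mem_ker, map_sum]
    simp only [AddMonoidHom.finsetSum_apply, AddMonoidHom.comp_apply, Pi.evalAddMonoidHom_apply, hf]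
      at ha
    simpa only [map_smul] using ha
  have hsum : ∑ j, c j • Λ j = (m : ℤ) • (⟨_, hker⟩ : LinearMap.ker g) := by
    apply Subtype.ext
    rw [Submodule.coe_sum]
    simp only [Submodule.coe_smul, ← hμ, Finset.smul_sum]
    exact Finset.sum_congr rfl fun j _ ↦ smul_comm _ _ _
  funext j
  have hcoord := congrArg (fun v ↦ Λ.repr v j) hsum
  simp only [Λ.repr_sum_self, map_smul, Finsupp.smul_apply, smul_eq_mul] at hcoord
  rw [Pi.zero_apply, ZMod.intCast_zmod_eq_zero_iff_dvd]
  exact ⟨_, hcoord⟩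

namespace AffineFrobenius

variable {C : Type*} [AddCommGroup C] {G : Type*} [Group G] [DistribMulAction G C]
  {H : Type*} [AddCommGroup H] [Fintype H] {A : AffineFrobenius G H}

/-- A class at level `3 ^ i` whose rotational difference `ω x - x`, even after multiplication by a
proper cofactor of `q ^ 3 ^ i + 1`, does not come from level `3 ^ (i - 1)`. -/
structure IsSeed (A : AffineFrobenius G H) (q i : ℕ) (x : C) : Prop where
  mem_invariants : x ∈ A.invariants C (3 ^ i)
  F_pow_smul : A.F ^ (2 * 3 ^ i) • x = x
  nsmul_eq_zero : (q ^ 3 ^ i + 1) • x = 0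
  nsmul_notMem : ∀ k, ProperCofactor (q ^ 3 ^ i + 1) k →
    k • (A.ω • x - x) ∉ A.invariants C (3 ^ (i - 1))

theorem IsSeed.exists_nsmul_frobTrace_ne_zero {q i n k : ℕ} (hn : A.n = 3 ^ n) {x : C}
    (hx : A.IsSeed q i x) (hH : (Fintype.card H).Coprime (q ^ 3 ^ i + 1))
    (hk : ProperCofactor (q ^ 3 ^ i + 1) k) :
    ∃ w ∈ A.newSubgroup C (3 ^ (i - 1)) (3 ^ i) (q ^ 3 ^ i + 1),
      k • A.frobTrace (2 * 3 ^ i) w ≠ 0 := by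
  by_contra! hall
  exact hx.nsmul_notMem k hk (nsmul_ω_smul_sub_mem_invariants hH
    (fun r hr0 hr hri ↦ hn ▸ gcd_three_pow_dvd hr0 hr hri) hall (Odd.pow (by decide))
    hx.mem_invariants hx.F_pow_smul hx.nsmul_eq_zero)

theorem IsSeed.exists_addOrderOf_frobTrace_eq {q i n m : ℕ} (hq : 3 ∣ q + 1) (hm : m ∣ q + 1)
    (hi : n + 1 ≤ 2 * i) (hin : i ≤ n) (hn : A.n = 3 ^ n)
    (hH : (Fintype.card H).Coprime (q ^ 3 ^ i + 1)) {x : C} (hx : A.IsSeed q i x) :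
    ∃ w ∈ A.newSubgroup C (3 ^ (i - 1)) (3 ^ i) (q ^ 3 ^ i + 1),
      addOrderOf (A.frobTrace (2 * A.n) w) = m := by
  set M := q ^ 3 ^ i + 1
  let Y := (A.newSubgroup C (3 ^ (i - 1)) (3 ^ i) M).map (A.frobTrace (2 * A.n))
  have htrace {w : C} (hw : w ∈ A.newSubgroup C (3 ^ (i - 1)) (3 ^ i) M) :
      A.frobTrace (2 * A.n) w = 3 ^ (n - i) • A.frobTrace (2 * 3 ^ i) w := by
    rw [hn, ← A.frobTrace_mul hw.2.2.1, mul_assoc, ← pow_add, Nat.add_sub_cancel' hin]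
  have hMY (y : Y) : M • y = 0 := by
    obtain ⟨_, w, hw, rfl⟩ := y
    refine Subtype.ext (?_ : M • A.frobTrace (2 * A.n) w = 0)
    rw [← map_nsmul, hw.2.2.2, map_zero]
  have hexp : AddMonoid.ExponentExists Y := ⟨M, M.pos_of_ne_zero (Nat.succ_ne_zero _), hMY⟩
  have hm_dvd : m ∣ AddMonoid.exponent Y := by
    by_contra hnot
    obtain ⟨k, hk, hdvd⟩ := exists_properCofactor hq hi hin hm
      (AddMonoid.exponent_dvd_of_forall_nsmul_eq_zero hMY) hnot
    obtain ⟨w, hw, hne⟩ := hx.exists_nsmul_frobTrace_ne_zero hn hH hk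
    refine hne (addOrderOf_dvd_iff_nsmul_eq_zero.1 ((addOrderOf_dvd_iff_nsmul_eq_zero.2
      (gcd_nsmul_eq_zero.2 ⟨?_, ?_⟩)).trans hdvd))
    · rw [mul_smul, ← htrace hw]
      exact congrArg Subtype.val (AddMonoid.exponent_nsmul_eq_zero (⟨_, w, hw, rfl⟩ : Y))
    · rw [← map_nsmul, hw.2.2.2, map_zero]
  obtain ⟨⟨_, w, hw, rfl⟩, hord⟩ := exists_addOrderOf_eq_of_dvd_exponent hexp hm_dvd
  exact ⟨w, hw, by rw [← hord, ← AddSubgroup.addOrderOf_coe]⟩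

theorem dvd_of_sum_zsmul_eq_zero {m N : ℕ} (hH : (Fintype.card H).Coprime m) {t : ℕ → ℕ}
    (ht : ∀ i j, i ≤ j → t i ∣ t j) (y : ℕ → C)
    (hinv : ∀ i < N, y i ∈ A.invariants C (t (i + 1)))
    (hnorm : ∀ i < N, A.transNorm (t i) (y i) = 0) (hord : ∀ i < N, addOrderOf (y i) = m)
    (e : ℕ → ℤ) (h : ∑ i ∈ Finset.range N, e i • y i = 0) : ∀ i < N, (m : ℤ) ∣ e i := by
  induction N with
  | zero => intro i hi; omega
  | succ N ih =>
    have hsum : ∑ i ∈ Finset.range N, e i • y i = 0 := by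
      refine (nsmul_eq_zero_iff_of_coprime hH).1 ⟨?_, ?_⟩
      · have hmem : ∑ i ∈ Finset.range N, e i • y i ∈ A.invariants C (t N) :=
          sum_mem fun i hi ↦ have hi := Finset.mem_range.1 hi
            zsmul_mem (invariants_le_of_gcd_dvd ((Nat.gcd_dvd_left _ _).trans (ht _ _ hi))
              (hinv i (Nat.lt_succ_of_lt hi))) _
        rw [← transNorm_eq_card_nsmul hmem, ← map_zero (A.transNorm (t N)), ← h,
          Finset.sum_range_succ, map_add, map_zsmul, hnorm N N.lt_succ_self, smul_zero, add_zero]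
      · rw [Finset.smul_sum]
        refine Finset.sum_eq_zero fun i hi ↦ ?_
        rw [smul_comm, ← hord i (Nat.lt_succ_of_lt (Finset.mem_range.1 hi)),
          addOrderOf_nsmul_eq_zero, smul_zero]
    intro i hi
    rcases Nat.lt_succ_iff_lt_or_eq.1 hi with hi | rfl
    · exact ih (fun i hi ↦ hinv i (by omega)) (fun i hi ↦ hnorm i (by omega))
        (fun i hi ↦ hord i (by omega)) hsum i hi
    · rw [Finset.sum_range_succ, hsum, zero_add] at h
      rw [← hord i hi]
      exact addOrderOf_dvd_iff_zsmul_eq_zero.2 h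

theorem exists_injective_pi_zmod_of_isSeed {B : Type*} [AddCommGroup B] [Finite B] (π : B →+ C)
    {q N m : ℕ} (hq : 3 ∣ q + 1) (hm : m ∣ q + 1) (hn : A.n = 3 ^ (2 * N))
    (hH : ∀ i, (Fintype.card H).Coprime (q ^ 3 ^ i + 1))
    (hπ : ∀ w, ∃ b, π b = A.frobTrace (2 * A.n) w)
    (hseed : ∀ i, N < i → i ≤ 2 * N → ∃ x : C, A.IsSeed q i x) :
    ∃ f : (Fin N → ZMod m) →+ B, Function.Injective f := by
  have hclass (i : ℕ) : ∃ b : B, i < N → π b ∈ A.invariants C (3 ^ (N + i + 1)) ∧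
      A.transNorm (3 ^ (N + i)) (π b) = 0 ∧ addOrderOf (π b) = m := by
    by_cases hi : i < N
    · obtain ⟨x, hx⟩ := hseed (N + i + 1) (by omega) (by omega)
      obtain ⟨w, hw, hord⟩ := hx.exists_addOrderOf_frobTrace_eq hq hm (by omega) (by omega) hn
        (hH _)
      rw [Nat.add_sub_cancel] at hw
      obtain ⟨b, hb⟩ := hπ w
      refine ⟨b, fun _ ↦ ?_⟩
      rw [hb]
      exact ⟨frobTrace_mem_invariants A hw.1 _, by rw [transNorm_frobTrace, hw.2.1, map_zero],
        hord⟩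
    · exact ⟨0, fun h ↦ absurd h hi⟩
  choose b hb using hclass
  have hHm : (Fintype.card H).Coprime m :=
    (hH 0).coprime_dvd_right (hm.trans (add_one_dvd_pow_three_pow_add_one q 0))
  refine exists_injective_pi_zmod (fun i : Fin N ↦ b i) fun e he i ↦ ?_
  have hdvd := dvd_of_sum_zsmul_eq_zero (t := fun i ↦ 3 ^ (N + i)) hHm
    (fun i j hij ↦ pow_dvd_pow 3 (by omega)) (fun i ↦ π (b i)) (fun i hi ↦ (hb i hi).1)
    (fun i hi ↦ (hb i hi).2.1) (fun i hi ↦ (hb i hi).2.2)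
    (fun i ↦ if h : i < N then e ⟨i, h⟩ else 0) ?_ i i.2
  · simpa using hdvd
  · rw [Finset.sum_range]
    simpa using congrArg π he

end AffineFrobenius

/-! ### Points of the covered curve and their fibres -/

theorem dvd_of_dvd_add_mul_add_mul_sq {R : Type*} [CommRing R] {π ω β x₀ x₁ x₂ : R}
    (hω : ω ^ 2 + ω + 1 = 0) (h3 : IsUnit (3 : R)) (hβ : IsUnit β)
    (h₀ : π ∣ x₀ + x₁ * β + x₂ * β ^ 2) (h₁ : π ∣ x₀ + x₁ * (ω * β) + x₂ * (ω * β) ^ 2)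
    (h₂ : π ∣ x₀ + x₁ * (ω ^ 2 * β) + x₂ * (ω ^ 2 * β) ^ 2) : π ∣ x₀ ∧ π ∣ x₁ ∧ π ∣ x₂ := by
  obtain ⟨y₀, h₀⟩ := h₀
  obtain ⟨y₁, h₁⟩ := h₁
  obtain ⟨y₂, h₂⟩ := h₂
  refine ⟨?_, ?_, ?_⟩
  · rw [← h3.dvd_mul_left]
    refine ⟨y₀ + y₁ + y₂, ?_⟩
    linear_combination h₀ + h₁ + h₂ - x₁ * β * hω - x₂ * β ^ 2 * (ω ^ 2 - ω + 1) * hω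
  · rw [← hβ.dvd_mul_right, ← h3.dvd_mul_left]
    refine ⟨y₀ + ω ^ 2 * y₁ + ω * y₂, ?_⟩
    linear_combination h₀ + ω ^ 2 * h₁ + ω * h₂ - x₀ * hω - x₂ * β ^ 2 * hω
      - 2 * x₁ * β * (ω - 1) * hω - x₂ * β ^ 2 * (ω + ω ^ 2) * (ω - 1) * hω
  · rw [← (hβ.pow 2).dvd_mul_right, ← h3.dvd_mul_left]
    refine ⟨y₀ + ω * y₁ + ω ^ 2 * y₂, ?_⟩
    linear_combination h₀ + ω * h₁ + ω ^ 2 * h₂ - x₀ * hω - x₁ * β * hω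
      - x₁ * β * ω * (ω - 1) * hω - x₂ * β ^ 2 * (2 + ω ^ 3) * (ω - 1) * hω

theorem isCoprime_of_sub_map_mem {k A : Type*} [Field k] [CommRing A] (φ : k →+* A) {x : A}
    {I J : Ideal A} {c d : k} (hcd : c ≠ d) (hI : x - φ c ∈ I) (hJ : x - φ d ∈ J) :
    IsCoprime I J := by
  rw [Ideal.isCoprime_iff_exists]
  refine ⟨-φ (c - d)⁻¹ * (x - φ c), Ideal.mul_mem_left _ _ hI,
    φ (c - d)⁻¹ * (x - φ d), Ideal.mul_mem_left _ _ hJ, ?_⟩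
  have hinv : φ (c - d)⁻¹ * (φ c - φ d) = 1 := by
    rw [← map_sub, ← map_mul, inv_mul_cancel₀ (sub_ne_zero.2 hcd), map_one]
  linear_combination hinv

theorem eq_of_mul_eq_mul_of_isCoprime {R : Type*} [CommRing R] {A B I J : Ideal R}
    (h : A * B = I * J) (hAJ : IsCoprime A J) (hIB : IsCoprime I B) : A = I :=
  le_antisymm (Ideal.le_of_dvd (hIB.dvd_of_dvd_mul_right (h ▸ dvd_mul_right _ _)))
    (Ideal.le_of_dvd (hAJ.dvd_of_dvd_mul_right (h ▸ dvd_mul_right _ _)))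

/-- The polynomial `γ (Y - β Z) (Y' - β Z)` is the square of `g₀ + g₁ Z`, so that its discriminant
`(γ β (Y - Y')) ^ 2` vanishes. -/
theorem eq_of_mul_eq_sq {R : Type*} [CommRing R] [IsDomain R] {γ β Y Y' g₀ g₁ : R} (hγ : γ ≠ 0)
    (hβ : β ≠ 0) (h₀ : Y * Y' * γ = g₀ ^ 2) (h₁ : -(β * (Y + Y')) * γ = 2 * g₀ * g₁)
    (h₂ : β ^ 2 * γ = g₁ ^ 2) : Y = Y' := by
  have hsq : (γ * β * (Y - Y')) ^ 2 = 0 := by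
    linear_combination (2 * g₀ * g₁ - γ * β * (Y + Y')) * h₁ - 4 * g₀ ^ 2 * h₂ - 4 * β ^ 2 * γ * h₀
  have hzero := pow_eq_zero_iff two_ne_zero |>.1 hsq
  exact sub_eq_zero.1 ((mul_eq_zero.1 hzero).resolve_left (mul_ne_zero hγ hβ))

namespace PureCubic

section PointIdeal

variable {E : Type*} [Field E] {S u : E[X]}

/-- The ideal of the fibre over the point `u = a`, `s = b` for a covering `u` of the curve
`s ^ 3 = S`. -/
noncomputable def pointIdeal (S u : E[X]) (a b : E) : Ideal (PureCubic E[X] S) :=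
  Ideal.span {of S (u - C a), root S - of S (C b)}

theorem of_sub_C_mem_pointIdeal (S u : E[X]) (a b : E) :
    of S (u - C a) ∈ pointIdeal S u a b :=
  Ideal.subset_span (Set.mem_insert _ _)

theorem root_sub_mem_pointIdeal (S u : E[X]) (a b : E) :
    root S - of S (C b) ∈ pointIdeal S u a b :=
  Ideal.subset_span (Set.mem_insert_of_mem _ rfl)

theorem mem_pointIdeal {a b : E} (h : u - C a ∣ C b ^ 3 - S) (x : PureCubic E[X] S) :
    x ∈ pointIdeal S u a b ↔ u - C a ∣ x.c0 + x.c1 * C b + x.c2 * C b ^ 2 := by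
  constructor
  · intro hx
    let q := Ideal.Quotient.mk (Ideal.span {u - C a})
    have hq (y) : q y = 0 ↔ u - C a ∣ y := by
      rw [Ideal.Quotient.eq_zero_iff_mem, Ideal.mem_span_singleton]
    have hb : q (C b) ^ 3 = q S := by
      rw [← map_pow, ← sub_eq_zero, ← map_sub, hq]
      exact h
    have hle : pointIdeal S u a b ≤ RingHom.ker (lift q (q (C b)) hb) := by
      rw [pointIdeal, Ideal.span_le]
      rintro y (rfl | rfl)
      · simpa only [SetLike.mem_coe, RingHom.mem_ker, lift_of] using (hq _).2 dvd_rfl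
      · simp only [SetLike.mem_coe, RingHom.mem_ker, map_sub, lift_root, lift_of, sub_self]
    have hx' := hle hx
    rw [RingHom.mem_ker, lift_apply] at hx'
    rw [← hq]
    simpa only [map_add, map_mul, map_pow] using hx'
  · rintro ⟨c, hc⟩
    have hx : x = of S (u - C a) * of S c + (root S - of S (C b)) *
        (of S x.c1 + of S x.c2 * (root S + of S (C b))) := by
      rw [← map_mul, ← hc]
      ext1 <;> simp [pow_two] <;> ring
    rw [hx]
    exact add_mem (Ideal.mul_mem_right _ _ (of_sub_C_mem_pointIdeal S u a b))
      (Ideal.mul_mem_right _ _ (root_sub_mem_pointIdeal S u a b))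

theorem isCoprime_pointIdeal {a b a' b' : E} (h : a ≠ a' ∨ b ≠ b') :
    IsCoprime (pointIdeal S u a b) (pointIdeal S u a' b') := by
  rcases h with h | h
  · refine isCoprime_of_sub_map_mem ((of S).comp C) (x := of S u) h ?_ ?_ <;>
    · rw [RingHom.comp_apply, ← map_sub]
      exact of_sub_C_mem_pointIdeal S u _ _
  · exact isCoprime_of_sub_map_mem ((of S).comp C) h (root_sub_mem_pointIdeal S u a b)
      (root_sub_mem_pointIdeal S u a' b')

end PointIdeal

section HasDegree

variable {R : Type*} [CommRing R] [IsDomain R] {S : R[X]}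

/-- The ideal `I` has an `M`-th power that is generated by an element of norm of degree `M * d`; for
`0 < M` this says that `I` has degree `d`. -/
def HasDegree (M : ℕ) (I : Ideal (PureCubic R[X] S)) (d : ℕ) : Prop :=
  ∃ g, g ≠ 0 ∧ I ^ M = Ideal.span {g} ∧ (norm g).natDegree = M * d

namespace HasDegree

variable {M d d' : ℕ} {I I' : Ideal (PureCubic R[X] S)}

theorem one (hS : ¬ 3 ∣ S.natDegree) : HasDegree M (1 : Ideal (PureCubic R[X] S)) 0 := by
  have := isDomain hS
  exact ⟨1, one_ne_zero, by simp, by simp⟩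

theorem mul (hS : ¬ 3 ∣ S.natDegree) (hI : HasDegree M I d) (hI' : HasDegree M I' d') :
    HasDegree M (I * I') (d + d') := by
  obtain ⟨g, hg, hIg, hd⟩ := hI
  obtain ⟨g', hg', hIg', hd'⟩ := hI'
  have := isDomain hS
  refine ⟨g * g', mul_ne_zero hg hg', ?_, ?_⟩
  · rw [mul_pow, hIg, hIg', Ideal.span_singleton_mul_span_singleton]
  · rw [map_mul, natDegree_mul (norm_ne_zero hS hg) (norm_ne_zero hS hg'), hd, hd', mul_add]

theorem pow (hS : ¬ 3 ∣ S.natDegree) (hI : HasDegree M I d) (k : ℕ) :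
    HasDegree M (I ^ k) (k * d) := by
  induction k with
  | zero => simpa using one hS
  | succ k ih => rw [pow_succ, Nat.succ_mul]; exact ih.mul hS hI

theorem prod (hS : ¬ 3 ∣ S.natDegree) {ι : Type*} {s : Finset ι}
    {I : ι → Ideal (PureCubic R[X] S)} {d : ι → ℕ} (hI : ∀ i ∈ s, HasDegree M (I i) (d i)) :
    HasDegree M (∏ i ∈ s, I i) (∑ i ∈ s, d i) := by
  induction s using Finset.cons_induction with
  | empty => exact one hS
  | cons i s hi ih =>
    rw [Finset.prod_cons, Finset.sum_cons]
    rw [Finset.forall_mem_cons] at hI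
    exact hI.1.mul hS (ih hI.2)

theorem natDegree_norm (hS : ¬ 3 ∣ S.natDegree) (hM : 0 < M) {x : PureCubic R[X] S}
    (h : HasDegree M (Ideal.span {x}) d) : (norm x).natDegree = d := by
  obtain ⟨g, -, hg, hd⟩ := h
  have := isDomain hS
  rw [Ideal.span_singleton_pow, Ideal.span_singleton_eq_span_singleton] at hg
  have hdeg := degree_eq_degree_of_associated (hg.map (norm (S := S)))
  have hdeg := natDegree_eq_of_degree_eq hdeg
  rw [map_pow, natDegree_pow, hd] at hdeg
  exact Nat.eq_of_mul_eq_mul_left hM hdeg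

end HasDegree

end HasDegree

end PureCubic

theorem natDegree_pow_sub_self {R : Type*} [CommRing R] [IsDomain R] (u : R[X]) {P : ℕ}
    (hP : 1 < P) : (u ^ P - u).natDegree = P * u.natDegree := by
  rcases Nat.eq_zero_or_pos u.natDegree with hu | hu
  · rw [eq_C_of_natDegree_eq_zero hu, ← map_pow, ← map_sub, natDegree_C, natDegree_C, mul_zero]
  · rw [natDegree_sub_eq_left_of_natDegree_lt, natDegree_pow]
    rw [natDegree_pow]
    exact lt_mul_of_one_lt_left hu hP

namespace PureCubic

variable {E : Type*} [Field E] {S u : E[X]} {P : ℕ} {ζ : E}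

/-- The polynomial `u` defines a covering `(X, s) ↦ (u, s)` of the curve `y ^ 3 = x ^ P - x` by the
curve `s ^ 3 = S`, whose group of rotations is generated by the cube root of unity `ζ`. The first
field says that `P` is a power of the characteristic. -/
structure Covering (S u : E[X]) (P : ℕ) (ζ : E) : Prop where
  sub_pow : ∀ x y : E[X], (x - y) ^ P = x ^ P - y ^ P
  pow_sub : u ^ P - u = S
  three_dvd : 3 ∣ P + 1
  not_three_dvd : ¬ 3 ∣ u.natDegree
  isPrimitiveRoot : IsPrimitiveRoot ζ 3

/-- The pair `(a, b)` is a point of `b ^ 3 = a ^ P - a` with `b ≠ 0` and `a` in the field with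
`P ^ 2` elements. -/
structure IsPoint (P : ℕ) (a b : E) : Prop where
  eq : b ^ 3 = a ^ P - a
  pow_pow : (a ^ P) ^ P = a
  ne_zero : b ≠ 0

/-- A generator of the `P + 1`-st power of `pointIdeal S u a b`. On `y ^ 3 = x ^ P - x` it is the
equation of the tangent line at `(a, b)`, which meets the curve only there. -/
noncomputable def pointGen (S u : E[X]) (P : ℕ) (a b : E) : PureCubic E[X] S :=
  ⟨(u - C (a ^ P)) ^ ((P + 1) / 3), -C (b ^ P), 0⟩

namespace Covering

variable (h : Covering S u P ζ)
include h

theorem two_le : 2 ≤ P := by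
  have := h.three_dvd; omega

theorem natDegree_pos : 0 < u.natDegree :=
  Nat.pos_of_ne_zero fun h0 ↦ h.not_three_dvd (h0 ▸ dvd_zero 3)

theorem zeta_pow : ζ ^ 3 = 1 := h.isPrimitiveRoot.pow_eq_one

theorem zeta_ne_one : ζ ≠ 1 := h.isPrimitiveRoot.ne_one (by norm_num)

theorem zeta_sq_ne_one : ζ ^ 2 ≠ 1 :=
  h.isPrimitiveRoot.pow_ne_one_of_pos_of_lt (by norm_num) (by norm_num)

theorem zeta_ne_zero : ζ ≠ 0 := h.isPrimitiveRoot.ne_zero (by norm_num)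

theorem zeta_sq_add_zeta_add_one : ζ ^ 2 + ζ + 1 = 0 :=
  (mul_eq_zero.1 (by linear_combination h.zeta_pow : (ζ - 1) * (ζ ^ 2 + ζ + 1) = 0)).resolve_left
    (sub_ne_zero.2 h.zeta_ne_one)

theorem three_ne_zero : (3 : E) ≠ 0 := by
  have := h.isPrimitiveRoot.neZero'
  exact_mod_cast NeZero.ne ((3 : ℕ) : E)

theorem neg_one_pow : (-1 : E) ^ ((P + 1) / 3) = 1 := by
  have hP : (-1 : E) ^ (P + 1) = 1 := by
    have h1 := h.sub_pow 0 1
    rw [zero_sub, zero_pow (by have := h.two_le; omega), one_pow, zero_sub] at h1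
    have h2 : (-1 : E) ^ P = -1 := by simpa using congrArg (eval 0) h1
    rw [pow_succ, h2, neg_one_mul, neg_neg]
  rw [← Nat.div_mul_cancel h.three_dvd, pow_mul] at hP
  rcases neg_one_pow_eq_or E ((P + 1) / 3) with h1 | h1
  · exact h1
  · rw [h1] at hP ⊢
    linear_combination hP

theorem natDegree_eq : S.natDegree = P * u.natDegree := by
  rw [← h.pow_sub, natDegree_pow_sub_self u h.two_le]

theorem not_three_dvd_natDegree : ¬ 3 ∣ S.natDegree := by
  rw [h.natDegree_eq, Nat.prime_three.dvd_mul, not_or]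
  exact ⟨by have := h.three_dvd; omega, h.not_three_dvd⟩

theorem sub_C_pow (a : E) : (u - C a) ^ P = u ^ P - C (a ^ P) := by
  rw [h.sub_pow, map_pow]

theorem sub_C_ne_zero (a : E) : u - C a ≠ 0 :=
  ne_zero_of_natDegree_gt (natDegree_sub_C (p := u) (a := a) ▸ h.natDegree_pos)

theorem not_isUnit_sub_C (a : E) : ¬ IsUnit (u - C a) :=
  not_isUnit_of_natDegree_pos _ (natDegree_sub_C (p := u) (a := a) ▸ h.natDegree_pos)

theorem sub_C_pow_ne {a a' : E} (ha : a ≠ a') {k : ℕ} (hk : k ≠ 0) :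
    (u - C a) ^ k ≠ (u - C a') ^ k := by
  have hsub (c : E) : u - C c ∈ Ideal.span {u - C c} := Ideal.mem_span_singleton_self _
  have hcop := (Ideal.isCoprime_span_singleton_iff _ _).1
    (isCoprime_of_sub_map_mem C ha (hsub a) (hsub a'))
  intro heq
  have hunit := hcop.pow (m := k) (n := k)
  rw [← heq, isCoprime_self, isUnit_pow_iff hk] at hunit
  exact h.not_isUnit_sub_C _ hunit

theorem pointIdeal_ne_bot (a b : E) : pointIdeal S u a b ≠ ⊥ := by
  intro h0
  have hmem := of_sub_C_mem_pointIdeal S u a b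
  rw [h0, Ideal.mem_bot] at hmem
  exact h.sub_C_ne_zero a (of_injective (hmem.trans (map_zero _).symm))

theorem exists_eq_of_of_isUnit {v : PureCubic E[X] S} (hv : IsUnit v) :
    ∃ γ ≠ 0, v = of S γ := by
  have hS := h.not_three_dvd_natDegree
  have hv0 : v = of S v.c0 := by
    refine eq_of_c0_of_natDegree_norm_lt hS ?_
    rw [natDegree_eq_zero_of_isUnit (hv.map norm)]
    exact Nat.pos_of_ne_zero fun h0 ↦ hS (h0 ▸ dvd_zero 3)
  have := isDomain hS
  exact ⟨v.c0, fun h0 ↦ hv.ne_zero (by rw [hv0, h0, map_zero]), hv0⟩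

section IsPoint

variable {a b : E} (hp : IsPoint P a b)
include hp

theorem isPoint_zeta : IsPoint P a (ζ * b) where
  eq := by rw [mul_pow, h.zeta_pow, one_mul, hp.eq]
  pow_pow := hp.pow_pow
  ne_zero := mul_ne_zero h.zeta_ne_zero hp.ne_zero

theorem isPoint_zeta_sq : IsPoint P a (ζ ^ 2 * b) := by
  rw [pow_two, mul_assoc]
  exact h.isPoint_zeta (h.isPoint_zeta hp)

theorem ne_zeta_mul : b ≠ ζ * b := fun e ↦
  h.zeta_ne_one (mul_right_cancel₀ hp.ne_zero (by rw [← e, one_mul]))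

theorem ne_zeta_sq_mul : b ≠ ζ ^ 2 * b := fun e ↦
  h.zeta_sq_ne_one (mul_right_cancel₀ hp.ne_zero (by rw [← e, one_mul]))

theorem zeta_mul_ne_zeta_sq_mul : ζ * b ≠ ζ ^ 2 * b := by
  rw [pow_two, mul_assoc]
  exact h.ne_zeta_mul (h.isPoint_zeta hp)

theorem sub_C_dvd : u - C a ∣ C b ^ 3 - S := by
  have heq : C b ^ 3 - S = (u - C a) * (1 - (u - C a) ^ (P - 1)) := by
    rw [mul_sub, mul_one, mul_pow_sub_one (by have := h.two_le; omega), h.sub_C_pow, ← h.pow_sub,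
      ← map_pow, hp.eq, map_sub]
    ring
  exact heq ▸ dvd_mul_right _ _

theorem pointIdeal_ne_top : pointIdeal S u a b ≠ ⊤ := by
  rw [Ne, Ideal.eq_top_iff_one, mem_pointIdeal (h.sub_C_dvd hp)]
  simpa [isUnit_iff_dvd_one] using h.not_isUnit_sub_C a

theorem pointIdeal_mul_eq :
    pointIdeal S u a b * (pointIdeal S u a (ζ * b) * pointIdeal S u a (ζ ^ 2 * b)) =
      Ideal.span {of S (u - C a)} := by
  have h01 : IsCoprime (pointIdeal S u a b) (pointIdeal S u a (ζ * b)) :=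
    isCoprime_pointIdeal (Or.inr (h.ne_zeta_mul hp))
  have h02 : IsCoprime (pointIdeal S u a b) (pointIdeal S u a (ζ ^ 2 * b)) :=
    isCoprime_pointIdeal (Or.inr (h.ne_zeta_sq_mul hp))
  have h12 : IsCoprime (pointIdeal S u a (ζ * b)) (pointIdeal S u a (ζ ^ 2 * b)) :=
    isCoprime_pointIdeal (Or.inr (h.zeta_mul_ne_zeta_sq_mul hp))
  rw [Ideal.mul_eq_inf_of_isCoprime (h01.mul_right h02), Ideal.mul_eq_inf_of_isCoprime h12]
  ext x
  rw [Submodule.mem_inf, Submodule.mem_inf, mem_pointIdeal (h.sub_C_dvd hp),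
    mem_pointIdeal (h.sub_C_dvd (h.isPoint_zeta hp)),
    mem_pointIdeal (h.sub_C_dvd (h.isPoint_zeta_sq hp)), Ideal.mem_span_singleton]
  constructor
  · rintro ⟨h₀, h₁, h₂⟩
    have hζ : C ζ ^ 2 + C ζ + 1 = 0 := by
      simpa using congrArg C h.zeta_sq_add_zeta_add_one
    have h3 : IsUnit (3 : E[X]) := (isUnit_C (R := E)).2 (isUnit_iff_ne_zero.2 h.three_ne_zero)
    have hb : IsUnit (C b) := isUnit_C.2 (isUnit_iff_ne_zero.2 hp.ne_zero)
    rw [map_mul] at h₁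
    rw [map_mul, map_pow] at h₂
    obtain ⟨⟨z₀, hz₀⟩, ⟨z₁, hz₁⟩, ⟨z₂, hz₂⟩⟩ := dvd_of_dvd_add_mul_add_mul_sq hζ h3 hb h₀ h₁ h₂
    exact ⟨⟨z₀, z₁, z₂⟩, by ext1 <;> simpa⟩
  · rintro ⟨y, rfl⟩
    simp only [mul_c0, mul_c1, mul_c2, of_c0, of_c1, of_c2, zero_mul, mul_zero, add_zero, mul_assoc,
      ← mul_add, dvd_mul_right, and_self]

theorem sub_C_pow_three_sub : ((u - C (a ^ P)) ^ ((P + 1) / 3)) ^ 3 - C (b ^ P) ^ 3 * S =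
    (u - C a) ^ (P + 1) := by
  have hb : C (b ^ P) ^ 3 = C a - C (a ^ P) := by
    rw [← map_pow, ← pow_mul, mul_comm, pow_mul, hp.eq, map_pow, map_sub, h.sub_pow, ← map_pow,
      ← map_pow, hp.pow_pow]
  rw [hb, ← pow_mul, Nat.div_mul_cancel h.three_dvd, pow_succ, pow_succ (u - C a), h.sub_C_pow,
    h.sub_C_pow, hp.pow_pow, ← h.pow_sub]
  ring

theorem norm_pointGen : norm (pointGen S u P a b) = (u - C a) ^ (P + 1) := by
  rw [← h.sub_C_pow_three_sub hp, norm_apply, pointGen]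
  ring

theorem exists_sub_C_pow_eq :
    ∃ z, (u - C (a ^ P)) ^ ((P + 1) / 3) = C (b ^ P * b) + (u - C a) * z := by
  have hb : C (b ^ P * b) = C (a - a ^ P) ^ ((P + 1) / 3) := by
    rw [← map_pow, ← pow_succ, show a - a ^ P = -1 * b ^ 3 by rw [hp.eq]; ring, mul_pow,
      h.neg_one_pow, one_mul, ← pow_mul, Nat.mul_div_cancel' h.three_dvd]
  obtain ⟨z, hz⟩ := sub_dvd_pow_sub_pow (u - C (a ^ P)) (C (a - a ^ P)) ((P + 1) / 3)
  refine ⟨z, ?_⟩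
  rw [hb]
  rw [map_sub] at hz ⊢
  linear_combination hz

theorem isCoprime_span_pointGen {b' : E} (hp' : IsPoint P a b') (hb : b ≠ b') :
    IsCoprime (Ideal.span {pointGen S u P a b}) (pointIdeal S u a b') := by
  refine isCoprime_of_sub_map_mem ((of S).comp C)
    (mul_ne_zero (pow_ne_zero P hp.ne_zero) (sub_ne_zero.2 hb)).symm (x := pointGen S u P a b)
    (by simp) ?_
  rw [mem_pointIdeal (h.sub_C_dvd hp')]
  obtain ⟨z, hz⟩ := h.exists_sub_C_pow_eq hp
  refine ⟨z, ?_⟩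
  simp only [RingHom.comp_apply, sub_c0, sub_c1, sub_c2, of_c0, of_c1, of_c2, pointGen, hz]
  simp only [map_mul, map_sub]
  ring

/-- The cofactor `g'` of the generator is a unit at `(a, b)` and the generator is a unit at the two
conjugate points, so that the factorization of `(u - C a) ^ (P + 1)` determines both. -/
theorem pointIdeal_pow : pointIdeal S u a b ^ (P + 1) = Ideal.span {pointGen S u P a b} := by
  set Y := (u - C (a ^ P)) ^ ((P + 1) / 3) with hY
  let g' : PureCubic E[X] S := ⟨Y ^ 2, Y * C (b ^ P), C (b ^ P) ^ 2⟩
  have hmul : pointGen S u P a b * g' = of S (u - C a) ^ (P + 1) := by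
    rw [← map_pow, ← h.sub_C_pow_three_sub hp]
    ext1 <;> simp only [pointGen, g', mul_c0, mul_c1, mul_c2, of_c0, of_c1, of_c2, hY] <;> ring
  have hcop : IsCoprime (Ideal.span {g'}) (pointIdeal S u a b) := by
    refine isCoprime_of_sub_map_mem ((of S).comp C) (mul_ne_zero h.three_ne_zero
      (pow_ne_zero 2 (mul_ne_zero (pow_ne_zero P hp.ne_zero) hp.ne_zero))).symm (x := g')
      (by simp) ?_
    rw [mem_pointIdeal (h.sub_C_dvd hp)]
    obtain ⟨z, hz⟩ := h.exists_sub_C_pow_eq hp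
    refine ⟨z * (Y + 2 * C (b ^ P * b)), ?_⟩
    simp only [RingHom.comp_apply, sub_c0, sub_c1, sub_c2, of_c0, of_c1, of_c2, g']
    rw [hY, hz]
    simp only [map_mul, map_pow, map_ofNat]
    ring
  have hcop₁ := h.isCoprime_span_pointGen hp (h.isPoint_zeta hp) (h.ne_zeta_mul hp)
  have hcop₂ := h.isCoprime_span_pointGen hp (h.isPoint_zeta_sq hp) (h.ne_zeta_sq_mul hp)
  have hprod : Ideal.span {pointGen S u P a b} * Ideal.span {g'} =
      pointIdeal S u a b ^ (P + 1) *
        (pointIdeal S u a (ζ * b) * pointIdeal S u a (ζ ^ 2 * b)) ^ (P + 1) := by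
    rw [Ideal.span_singleton_mul_span_singleton, hmul, ← mul_pow, h.pointIdeal_mul_eq hp,
      Ideal.span_singleton_pow]
  exact (eq_of_mul_eq_mul_of_isCoprime hprod (hcop₁.mul_right hcop₂).pow_right
    hcop.symm.pow_left).symm

theorem hasDegree_pointIdeal : HasDegree (P + 1) (pointIdeal S u a b) u.natDegree := by
  have hnorm := h.norm_pointGen hp
  refine ⟨_, fun h0 ↦ ?_, h.pointIdeal_pow hp, ?_⟩
  · rw [h0, map_zero] at hnorm
    exact pow_ne_zero _ (h.sub_C_ne_zero a) hnorm.symm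
  · rw [hnorm, natDegree_pow, natDegree_sub_C]

/-- A generator of such an ideal would be a polynomial in `X`, which cannot tell the points `(a, b)`
and `(a, b')` apart. -/
theorem not_isPrincipal {b' : E} (hp' : IsPoint P a b') {I : Ideal (PureCubic E[X] S)} {d : ℕ}
    (hI : HasDegree (P + 1) I (d * u.natDegree)) (hd : d < P) (hle : I ≤ pointIdeal S u a b)
    (hcop : IsCoprime I (pointIdeal S u a b')) : ¬ I.IsPrincipal := by
  rintro ⟨α, hα⟩
  rw [Ideal.submodule_span_eq] at hα
  subst hα
  have hα : α = of S α.c0 := by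
    refine eq_of_c0_of_natDegree_norm_lt h.not_three_dvd_natDegree ?_
    rw [hI.natDegree_norm h.not_three_dvd_natDegree (Nat.succ_pos P), h.natDegree_eq]
    exact Nat.mul_lt_mul_of_pos_right hd h.natDegree_pos
  rw [Ideal.span_singleton_le_iff_mem, hα, mem_pointIdeal (h.sub_C_dvd hp)] at hle
  have hle' : Ideal.span {α} ≤ pointIdeal S u a b' := by
    rw [Ideal.span_singleton_le_iff_mem, hα, mem_pointIdeal (h.sub_C_dvd hp')]
    simpa using hle
  rw [Ideal.isCoprime_iff_sup_eq, sup_eq_right.2 hle'] at hcop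
  exact h.pointIdeal_ne_top hp' hcop

end IsPoint

section IdealClass

variable [IsDedekindDomain (PureCubic E[X] S)]

theorem sum_nsmul_idealClass_ne_zero {ι : Type*} [Fintype ι] {c : ι → ℕ} {a b : ι → E} {b' : E}
    (i : ι) (hp : ∀ j, IsPoint P (a j) (b j)) (hp' : IsPoint P (a i) b') (hc : ∑ j, c j < P)
    (hci : c i ≠ 0) (hne : ∀ j, a j ≠ a i ∨ b j ≠ b') :
    ∑ j, c j • idealClass (pointIdeal S u (a j) (b j)) ≠ 0 := by
  have hbot (j : ι) : pointIdeal S u (a j) (b j) ^ c j ≠ ⊥ :=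
    pow_ne_zero _ (h.pointIdeal_ne_bot _ _)
  have hdeg := HasDegree.prod h.not_three_dvd_natDegree (s := Finset.univ) fun j _ ↦
    (h.hasDegree_pointIdeal (hp j)).pow h.not_three_dvd_natDegree (c j)
  rw [← Finset.sum_mul] at hdeg
  have hsum : ∑ j, c j • idealClass (pointIdeal S u (a j) (b j)) =
      idealClass (∏ j, pointIdeal S u (a j) (b j) ^ c j) := by
    rw [idealClass_prod _ _ fun j _ ↦ hbot j]
    simp only [idealClass_pow (h.pointIdeal_ne_bot _ _)]
  rw [hsum, Ne, idealClass_eq_zero_iff (Finset.prod_ne_zero_iff.2 fun j _ ↦ hbot j)]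
  refine h.not_isPrincipal (hp i) hp' hdeg hc ?_ ?_
  · exact Ideal.le_of_dvd
      ((dvd_pow_self _ hci).trans (Finset.dvd_prod_of_mem _ (Finset.mem_univ i)))
  · exact IsCoprime.prod_left fun j _ ↦ (isCoprime_pointIdeal (hne j)).pow_left

variable {a b a' b' : E} (hp : IsPoint P a b)
include hp

theorem succ_nsmul_idealClass : (P + 1) • idealClass (pointIdeal S u a b) = 0 := by
  rw [← idealClass_pow (h.pointIdeal_ne_bot a b), h.pointIdeal_pow hp, idealClass_span_singleton]

theorem idealClass_add_add : idealClass (pointIdeal S u a b) +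
    (idealClass (pointIdeal S u a (ζ * b)) + idealClass (pointIdeal S u a (ζ ^ 2 * b))) = 0 := by
  rw [← idealClass_mul (h.pointIdeal_ne_bot _ _) (h.pointIdeal_ne_bot _ _),
    ← idealClass_mul (h.pointIdeal_ne_bot _ _)
      (mul_ne_zero (h.pointIdeal_ne_bot _ _) (h.pointIdeal_ne_bot _ _)),
    h.pointIdeal_mul_eq hp, idealClass_span_singleton]

theorem nsmul_idealClass_sub_ne (hp' : IsPoint P a' b') (ha : a ≠ a') {k : ℕ} (hk : 0 < k)
    (hkP : 6 * k < P) :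
    k • (idealClass (pointIdeal S u a (ζ ^ 2 * b)) - idealClass (pointIdeal S u a b)) ≠
    k • (idealClass (pointIdeal S u a' (ζ ^ 2 * b')) - idealClass (pointIdeal S u a' b')) := by
  intro heq
  have hsum := congrArg (k • ·) (h.idealClass_add_add hp)
  have hsum' := congrArg (k • ·) (h.idealClass_add_add hp')
  simp only [smul_add, smul_zero] at hsum hsum'
  refine h.sum_nsmul_idealClass_ne_zero (c := ![2 * k, k, 2 * k, k]) (a := ![a, a, a', a'])
    (b := ![ζ ^ 2 * b, ζ * b, b', ζ * b']) (b' := b) 0 ?_ hp ?_ ?_ ?_ ?_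
  · simp [Fin.forall_fin_succ, h.isPoint_zeta_sq hp, h.isPoint_zeta hp, hp', h.isPoint_zeta hp']
  · simp only [Fin.sum_univ_four, Matrix.cons_val]
    omega
  · simpa using hk.ne'
  · simp [Fin.forall_fin_succ, (h.ne_zeta_sq_mul hp).symm, (h.ne_zeta_mul hp).symm, ha.symm]
  · simp only [Fin.sum_univ_four, Matrix.cons_val, mul_smul, two_smul]
    linear_combination (norm := module) heq + hsum + hsum'

theorem nsmul_idealClass_ne (hp' : IsPoint P a' b') (ha : a ≠ a') {k : ℕ} (hk : 0 < k)
    (hkP : 3 * k < P) :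
    k • idealClass (pointIdeal S u a b) ≠ k • idealClass (pointIdeal S u a' b') := by
  intro heq
  have hsum' := congrArg (k • ·) (h.idealClass_add_add hp')
  simp only [smul_add, smul_zero] at hsum'
  refine h.sum_nsmul_idealClass_ne_zero (c := ![k, k, k]) (a := ![a, a', a'])
    (b := ![b, ζ * b', ζ ^ 2 * b']) 0 ?_ (h.isPoint_zeta hp) ?_ ?_ ?_ ?_
  · simp [Fin.forall_fin_succ, hp, h.isPoint_zeta hp', h.isPoint_zeta_sq hp']
  · simp only [Fin.sum_univ_three, Matrix.cons_val]
    omega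
  · simpa using hk.ne'
  · simp [Fin.forall_fin_succ, h.ne_zeta_mul hp, ha.symm]
  · simp only [Fin.sum_univ_three, Matrix.cons_val]
    linear_combination (norm := module) heq + hsum'

theorem exists_pointGen_mul_pointGen_eq_sq (hp' : IsPoint P a' b') {k : ℕ} (hk : 2 * k = P + 1)
    (heq : k • idealClass (pointIdeal S u a b) = k • idealClass (pointIdeal S u a' b')) :
    ∃ (γ : E[X]) (g : PureCubic E[X] S), γ ≠ 0 ∧ g.c2 = 0 ∧
      pointGen S u P a b * pointGen S u P a' b' * of S γ = g ^ 2 := by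
  have hS := h.not_three_dvd_natDegree
  have hbot (c d : E) : pointIdeal S u c d ^ k ≠ ⊥ := pow_ne_zero _ (h.pointIdeal_ne_bot _ _)
  have hprin : (pointIdeal S u a b ^ k * pointIdeal S u a' b' ^ k).IsPrincipal := by
    rw [← idealClass_eq_zero_iff (mul_ne_zero (hbot _ _) (hbot _ _)),
      idealClass_mul (hbot _ _) (hbot _ _), idealClass_pow (h.pointIdeal_ne_bot _ _),
      idealClass_pow (h.pointIdeal_ne_bot _ _), heq, ← two_nsmul, ← mul_smul, hk,
      h.succ_nsmul_idealClass hp']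
  obtain ⟨g, hg⟩ := hprin
  rw [Ideal.submodule_span_eq] at hg
  have hsq : Ideal.span {pointGen S u P a b * pointGen S u P a' b'} = Ideal.span {g ^ 2} := by
    rw [← Ideal.span_singleton_pow, ← hg, mul_pow, ← pow_mul, ← pow_mul, mul_comm k, hk,
      h.pointIdeal_pow hp, h.pointIdeal_pow hp', Ideal.span_singleton_mul_span_singleton]
  obtain ⟨v, hv⟩ := Ideal.span_singleton_eq_span_singleton.1 hsq
  obtain ⟨γ, hγ, hvγ⟩ := h.exists_eq_of_of_isUnit v.isUnit
  refine ⟨γ, g, hγ, c2_eq_zero_of_natDegree_norm_lt hS ?_, hvγ ▸ hv⟩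
  have hdeg := ((h.hasDegree_pointIdeal hp).pow hS k).mul hS
    ((h.hasDegree_pointIdeal hp').pow hS k)
  rw [hg] at hdeg
  rw [hdeg.natDegree_norm hS (Nat.succ_pos P), h.natDegree_eq, ← add_mul, ← two_mul, hk,
    ← mul_assoc]
  exact Nat.mul_lt_mul_of_pos_right (by have := h.two_le; omega) h.natDegree_pos

theorem nsmul_idealClass_ne_of_two_mul (hp' : IsPoint P a' b) (ha : a ≠ a') {k : ℕ}
    (hk : 2 * k = P + 1) :
    k • idealClass (pointIdeal S u a b) ≠ k • idealClass (pointIdeal S u a' b) := by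
  intro heq
  obtain ⟨γ, g, hγ, hc2, hg⟩ := h.exists_pointGen_mul_pointGen_eq_sq hp hp' hk heq
  have e₀ := congrArg c0 hg
  have e₁ := congrArg c1 hg
  have e₂ := congrArg c2 hg
  simp only [pow_two g, pointGen, mul_c0, mul_c1, mul_c2, of_c0, of_c1, of_c2, hc2, mul_zero,
    zero_mul, add_zero, zero_add] at e₀ e₁ e₂
  have haP : a ^ P ≠ a' ^ P := fun h0 ↦ ha (by rw [← hp.pow_pow, h0, hp'.pow_pow])
  refine h.sub_C_pow_ne haP (k := (P + 1) / 3) (by have := h.two_le; omega) (eq_of_mul_eq_sq hγ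
    (C_ne_zero.2 (pow_ne_zero P hp.ne_zero)) (g₀ := g.c0) (g₁ := g.c1) ?_ ?_ ?_)
  · linear_combination e₀
  · linear_combination e₁
  · linear_combination e₂

end IdealClass

end Covering

end PureCubic

/-! ### Automorphisms of pure cubic extensions -/

namespace PureCubic

section Aut

variable {R : Type*} [CommRing R] {S : R}

/-- The automorphism of `R[s] / (s ^ 3 - S)` given by an automorphism of `R` fixing `S` and by
`s ↦ ζ * s`. -/
def aut (g : R ≃+* R) (hg : g S = S) (ζ : R) (hζ : ζ ^ 3 = 1) :
    PureCubic R S ≃+* PureCubic R S where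
  toFun x := ⟨g x.c0, ζ * g x.c1, ζ ^ 2 * g x.c2⟩
  invFun x := ⟨g.symm x.c0, g.symm (ζ ^ 2 * x.c1), g.symm (ζ * x.c2)⟩
  left_inv x := by
    ext1
    · simp
    · rw [RingEquiv.symm_apply_eq]; linear_combination g x.c1 * hζ
    · rw [RingEquiv.symm_apply_eq]; linear_combination g x.c2 * hζ
  right_inv x := by
    ext1
    · simp
    · simp only [RingEquiv.apply_symm_apply]; linear_combination x.c1 * hζ
    · simp only [RingEquiv.apply_symm_apply]; linear_combination x.c2 * hζ
  map_add' x y := by ext1 <;> simp <;> ring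
  map_mul' x y := by
    ext1
    · simp only [mul_c0, map_add, map_mul, hg]
      linear_combination -(S * (g x.c1 * g y.c2 + g x.c2 * g y.c1)) * hζ
    · simp only [mul_c1, map_add, map_mul, hg]
      linear_combination -(ζ * S * (g x.c2 * g y.c2)) * hζ
    · simp only [mul_c2, map_add, map_mul]
      ring

variable (g : R ≃+* R) (hg : g S = S) (ζ : R) (hζ : ζ ^ 3 = 1) (x : PureCubic R S)

@[simp] theorem aut_c0 : (aut g hg ζ hζ x).c0 = g x.c0 := rfl
@[simp] theorem aut_c1 : (aut g hg ζ hζ x).c1 = ζ * g x.c1 := rfl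
@[simp] theorem aut_c2 : (aut g hg ζ hζ x).c2 = ζ ^ 2 * g x.c2 := rfl

theorem aut_of (r : R) : aut g hg ζ hζ (of S r) = of S (g r) := by
  ext1 <;> simp

theorem aut_root : aut g hg ζ hζ (root S) = of S ζ * root S := by
  ext1 <;> simp

theorem ringEquiv_ext {A : Type*} [CommRing A] {f g : PureCubic R S ≃+* A}
    (hof : ∀ r, f (of S r) = g (of S r)) (hroot : f (root S) = g (root S)) : f = g :=
  RingEquiv.toRingHom_injective (hom_ext hof hroot)

end Aut

section Map

variable {R A : Type*} [CommRing R] [CommRing A] {S : R} {T : A}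

/-- Base change of coefficients. -/
def mapHom (f : R →+* A) (h : f S = T) : PureCubic R S →+* PureCubic A T where
  toFun x := ⟨f x.c0, f x.c1, f x.c2⟩
  map_one' := by ext1 <;> simp
  map_zero' := by ext1 <;> simp
  map_add' x y := by ext1 <;> simp
  map_mul' x y := by ext1 <;> simp [h]

theorem mapHom_injective {f : R →+* A} (hf : Function.Injective f) (h : f S = T) :
    Function.Injective (mapHom f h) := fun x y hxy ↦ by
  ext1
  · exact hf (congrArg c0 hxy)
  · exact hf (congrArg c1 hxy)
  · exact hf (congrArg c2 hxy)

theorem exists_mapHom_eq {f : R →+* A} (h : f S = T) {x : PureCubic A T}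
    (h0 : x.c0 ∈ f.range) (h1 : x.c1 ∈ f.range) (h2 : x.c2 ∈ f.range) :
    ∃ y, mapHom f h y = x := by
  obtain ⟨y0, h0⟩ := h0
  obtain ⟨y1, h1⟩ := h1
  obtain ⟨y2, h2⟩ := h2
  exact ⟨⟨y0, y1, y2⟩, by ext1 <;> assumption⟩

end Map

section Rotation

variable {E : Type*} [Field E] (S : E[X]) {ζ : E} (hζ : ζ ^ 3 = 1)

/-- The automorphism given by `s ↦ ζ * s`. -/
noncomputable def rotation : PureCubic E[X] S ≃+* PureCubic E[X] S :=
  aut (RingEquiv.refl _) (RingEquiv.refl_apply _ _) (C ζ) (by rw [← map_pow, hζ, map_one])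

theorem rotation_of (f : E[X]) : rotation S hζ (of S f) = of S f := aut_of _ _ _ _ _

theorem rotation_root : rotation S hζ (root S) = of S (C ζ) * root S := aut_root _ _ _ _

theorem rotation_pow_three : rotation S hζ ^ 3 = 1 := by
  refine ringEquiv_ext (fun f ↦ by
    simp only [RingAut.mul_apply, rotation_of, pow_succ, pow_zero, RingAut.one_apply]) ?_
  have hof : of S (C ζ) ^ 3 = 1 := by rw [← map_pow, ← map_pow, hζ, map_one, map_one]
  simp only [RingAut.mul_apply, rotation_root, map_mul, rotation_of, pow_succ, pow_zero,
    RingAut.one_apply, one_mul]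
  linear_combination root S * hof

theorem map_rotation (u : E[X]) (a b : E) :
    (pointIdeal S u a b).map (rotation S hζ : _ →+* PureCubic E[X] S) =
      pointIdeal S u a (ζ ^ 2 * b) := by
  have h3 : of S (C ζ) ^ 3 = 1 := by rw [← map_pow, ← map_pow, hζ, map_one, map_one]
  have hunit : IsUnit (of S (C ζ)) := IsUnit.of_pow_eq_one h3 (by norm_num)
  rw [pointIdeal, pointIdeal, Ideal.map_span, Set.image_pair, Ideal.span_insert, Ideal.span_insert]
  simp only [RingHom.coe_coe, map_sub, rotation_of, rotation_root]
  have hroot : of S (C ζ) * root S - of S (C b) =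
      of S (C ζ) * (root S - of S (C (ζ ^ 2 * b))) := by
    simp only [map_mul, map_pow]
    linear_combination of S (C b) * h3
  rw [hroot, Ideal.span_singleton_mul_left_unit hunit]

end Rotation

end PureCubic

section ClassAction

variable {R : Type*} [CommRing R] [IsDedekindDomain R]

noncomputable instance classAction : DistribMulAction (R ≃+* R) (Additive (ClassGroup R)) :=
  DistribMulAction.compHom _ classAut

theorem smul_idealClass (e : R ≃+* R) {I : Ideal R} (hI : I ≠ ⊥) :
    e • idealClass I = idealClass (I.map (e : R →+* R)) := classAut_idealClass e hI

end ClassAction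

namespace PureCubic.Covering

variable {E : Type*} [Field E] {S u : E[X]} {P : ℕ} {ζ : E} [IsDedekindDomain (PureCubic E[X] S)]
  (h : Covering S u P ζ) {a b a' : E}
include h

theorem rotation_smul_idealClass (a b : E) :
    rotation S h.zeta_pow • idealClass (pointIdeal S u a b) =
      idealClass (pointIdeal S u a (ζ ^ 2 * b)) := by
  rw [smul_idealClass _ (h.pointIdeal_ne_bot a b), map_rotation]

theorem rotation_sq_smul_idealClass (a b : E) :
    rotation S h.zeta_pow • rotation S h.zeta_pow • idealClass (pointIdeal S u a b) =
      idealClass (pointIdeal S u a (ζ * b)) := by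
  rw [h.rotation_smul_idealClass, h.rotation_smul_idealClass]
  congr 2
  linear_combination ζ * b * h.zeta_pow

variable (hp : IsPoint P a b) (hp' : IsPoint P a' b)
include hp hp'

/-- Both the factor `3`, from the relation between the three rotated points, and the factor `l`
annihilate the difference of the two sides. -/
theorem nsmul_idealClass_eq_of_nsmul_rotation_smul_sub_eq {k l : ℕ} (hl : Nat.Coprime 3 l)
    (hkl : l * k = P + 1)
    (heq : k • (rotation S h.zeta_pow • idealClass (pointIdeal S u a b) -
        idealClass (pointIdeal S u a b)) =
      k • (rotation S h.zeta_pow • idealClass (pointIdeal S u a' b) -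
        idealClass (pointIdeal S u a' b))) :
    k • idealClass (pointIdeal S u a b) = k • idealClass (pointIdeal S u a' b) := by
  set x := idealClass (pointIdeal S u a b) with hx
  set x' := idealClass (pointIdeal S u a' b) with hx'
  set ω := rotation S h.zeta_pow
  have hsum : x + (ω • ω • x + ω • x) = 0 := by
    rw [hx, h.rotation_sq_smul_idealClass, h.rotation_smul_idealClass]
    exact h.idealClass_add_add hp
  have hsum' : x' + (ω • ω • x' + ω • x') = 0 := by
    rw [hx', h.rotation_sq_smul_idealClass, h.rotation_smul_idealClass]
    exact h.idealClass_add_add hp'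
  have hrot : k • (ω • ω • x - ω • x) = k • (ω • ω • x' - ω • x') := by
    simpa only [smul_sub, smul_comm ω k] using congrArg (ω • ·) heq
  have h3 : 3 • (k • (x - x')) = 0 := by
    generalize ω • ω • x = y₂, ω • ω • x' = y₂' at *
    generalize ω • x = y₁, ω • x' = y₁' at *
    linear_combination (norm := module) k • hsum - k • hsum' - 2 • heq - hrot
  have hl' : l • (k • (x - x')) = 0 := by
    rw [← mul_smul, hkl, smul_sub, h.succ_nsmul_idealClass hp, h.succ_nsmul_idealClass hp',
      sub_self]
  exact sub_eq_zero.1 (smul_sub k x x' ▸ (nsmul_eq_zero_iff_of_coprime hl).1 ⟨h3, hl'⟩)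

theorem nsmul_rotation_smul_sub_ne (ha : a ≠ a') {k : ℕ} (hk : ProperCofactor (P + 1) k) :
    k • (rotation S h.zeta_pow • idealClass (pointIdeal S u a b) -
        idealClass (pointIdeal S u a b)) ≠
      k • (rotation S h.zeta_pow • idealClass (pointIdeal S u a' b) -
        idealClass (pointIdeal S u a' b)) := by
  intro heq
  obtain ⟨hk0, hk9 | ⟨l, hl, hl3, hkl⟩⟩ := hk
  · rw [h.rotation_smul_idealClass, h.rotation_smul_idealClass] at heq
    have := Nat.le_of_dvd P.succ_pos hk9
    exact h.nsmul_idealClass_sub_ne hp hp' ha hk0 (by omega) heq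
  · replace heq := h.nsmul_idealClass_eq_of_nsmul_rotation_smul_sub_eq hp hp'
      ((Nat.coprime_primes Nat.prime_three hl).2 hl3.symm) hkl heq
    obtain rfl | hl2 := eq_or_ne l 2
    · exact h.nsmul_idealClass_ne_of_two_mul hp hp' ha hkl heq
    · have hl5 : 5 ≤ l := hl.five_le_of_ne_two_of_ne_three hl2 hl3
      have : 5 * k ≤ P + 1 := hkl ▸ Nat.mul_le_mul_right k hl5
      exact h.nsmul_idealClass_ne hp hp' ha hk0 (by omega) heq

end PureCubic.Covering

/-! ### The curve `s ^ 3 = X ^ Q - X` over a finite field -/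

section FrobeniusPower

variable (K : Type*) [Field K] [Fintype K]

theorem frobeniusAlgHom_pow_apply {A : Type*} [CommRing A] [Algebra K A] (j : ℕ) (x : A) :
    (FiniteField.frobeniusAlgHom K A ^ j) x = x ^ Fintype.card K ^ j := by
  rw [AlgHom.coe_pow, FiniteField.coe_frobeniusAlgHom, pow_iterate]

/-- The Frobenius `x ↦ x ^ card K` as an additive endomorphism. -/
noncomputable def frobeniusEnd (A : Type*) [CommRing A] [Algebra K A] : AddMonoid.End A :=
  (FiniteField.frobeniusAlgHom K A : A →+ A)

theorem frobeniusEnd_pow_apply {A : Type*} [CommRing A] [Algebra K A] (j : ℕ) (x : A) :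
    (frobeniusEnd K A ^ j) x = x ^ Fintype.card K ^ j := by
  rw [AddMonoid.End.coe_pow]
  exact congrFun (pow_iterate _ _) x

theorem sub_pow_card_pow {A : Type*} [CommRing A] [Algebra K A] (j : ℕ) (x y : A) :
    (x - y) ^ Fintype.card K ^ j = x ^ Fintype.card K ^ j - y ^ Fintype.card K ^ j := by
  simp only [← frobeniusAlgHom_pow_apply, map_sub]

theorem pow_card_pow_finrank {H : Type*} [Field H] [Finite H] [Algebra K H] (h : H) :
    h ^ Fintype.card K ^ Module.finrank K H = h := by
  have := Fintype.ofFinite H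
  rw [← Module.card_eq_pow_finrank, FiniteField.pow_card]

end FrobeniusPower

/-- The Artin–Schreier polynomial `X ^ Q - X`. -/
noncomputable def artinSchreier (R : Type*) [CommRing R] (Q : ℕ) : R[X] := X ^ Q - X

theorem map_artinSchreier {R R' : Type*} [CommRing R] [CommRing R'] (f : R →+* R') (Q : ℕ) :
    (artinSchreier R Q).map f = artinSchreier R' Q := by
  simp [artinSchreier]

theorem mapEquiv_artinSchreier {R : Type*} [CommRing R] (e : R ≃+* R) (Q : ℕ) :
    mapEquiv e (artinSchreier R Q) = artinSchreier R Q := map_artinSchreier (e : R →+* R) Q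

namespace PureCubic

section Translation

variable {H : Type*} (E : Type*) [Field H] [Fintype H] [Field E] [Algebra H E]

theorem taylorEquiv_artinSchreier (h : H) :
    taylorEquiv (algebraMap H E h) (artinSchreier E (Fintype.card H)) =
      artinSchreier E (Fintype.card H) := by
  have hadd := map_add (FiniteField.frobeniusAlgHom H E[X]) X (C (algebraMap H E h))
  simp only [FiniteField.frobeniusAlgHom_apply, ← map_pow, FiniteField.pow_card] at hadd
  have htaylor : taylor (algebraMap H E h) (artinSchreier E (Fintype.card H)) =
      artinSchreier E (Fintype.card H) := by
    rw [artinSchreier, map_sub, taylor_X_pow, taylor_X, hadd]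
    ring
  exact htaylor

/-- The automorphism given by `X ↦ X + h`. -/
noncomputable def translation (h : H) :
    PureCubic E[X] (artinSchreier E (Fintype.card H)) ≃+*
      PureCubic E[X] (artinSchreier E (Fintype.card H)) :=
  aut (taylorEquiv (algebraMap H E h)).toRingEquiv (taylorEquiv_artinSchreier E h) 1 (one_pow 3)

theorem translation_of (h : H) (f : E[X]) :
    translation E h (of _ f) = of _ (taylor (algebraMap H E h) f) := aut_of _ _ _ _ _

theorem translation_root (h : H) : translation E h (root _) = root _ := by
  rw [translation, aut_root, map_one, one_mul]

theorem map_translation {u : E[X]} {h : H} {c : E} (hu : taylor (algebraMap H E h) u = u + C c)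
    (a b : E) :
    (pointIdeal (artinSchreier E (Fintype.card H)) u a b).map
        (translation E h : _ →+* PureCubic E[X] (artinSchreier E (Fintype.card H))) =
      pointIdeal _ u (a - c) b := by
  rw [pointIdeal, pointIdeal, Ideal.map_span, Set.image_pair]
  simp only [RingHom.coe_coe, map_sub, translation_of, translation_root, hu, taylor_C, map_add]
  rw [add_sub_right_comm, sub_sub_eq_add_sub, add_sub_right_comm]

end Translation

section Frobenius

variable (K E : Type*) [Field K] [Fintype K] [Field E] [Algebra K E] [Algebra.IsAlgebraic K E]
  (Q : ℕ)

/-- The automorphism given by the Frobenius `x ↦ x ^ card K` of the coefficients. -/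
noncomputable def frobenius :
    PureCubic E[X] (artinSchreier E Q) ≃+* PureCubic E[X] (artinSchreier E Q) :=
  aut (mapEquiv (FiniteField.frobeniusAlgEquivOfAlgebraic K E).toRingEquiv)
    (mapEquiv_artinSchreier _ Q) 1 (one_pow 3)

theorem frobenius_of (f : E[X]) : frobenius K E Q (of _ f) =
    of _ (f.map (FiniteField.frobeniusAlgHom K E : E →+* E)) := aut_of _ _ _ _ _

theorem frobenius_root : frobenius K E Q (root _) = root _ := by
  rw [frobenius, aut_root, map_one, one_mul]

theorem frobenius_pow_of (r : ℕ) (f : E[X]) : (frobenius K E Q ^ r) (of _ f) =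
    of _ (f.map ((FiniteField.frobeniusAlgHom K E ^ r : E →ₐ[K] E) : E →+* E)) := by
  induction r generalizing f with
  | zero => exact congrArg (of _) (Polynomial.map_id (p := f)).symm
  | succ r ih =>
    rw [pow_succ, RingAut.mul_apply, frobenius_of, ih, Polynomial.map_map, pow_succ]
    rfl

theorem frobenius_pow_root (r : ℕ) : (frobenius K E Q ^ r) (root _) = root _ := by
  induction r with
  | zero => rfl
  | succ r ih => rw [pow_succ, RingAut.mul_apply, frobenius_root, ih]

theorem map_frobenius {u : E[X]} (hu : u.map (FiniteField.frobeniusAlgHom K E : E →+* E) = u)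
    (a b : E) :
    (pointIdeal (artinSchreier E Q) u a b).map
        (frobenius K E Q : _ →+* PureCubic E[X] (artinSchreier E Q)) =
      pointIdeal _ u (a ^ Fintype.card K) (b ^ Fintype.card K) := by
  rw [pointIdeal, pointIdeal, Ideal.map_span, Set.image_pair]
  simp only [RingHom.coe_coe, map_sub, frobenius_of, frobenius_root, hu, map_C]
  rfl

end Frobenius

section Relations

variable (K : Type*) {E : Type*} [Field K] [Fintype K] [Field E] [Algebra K E]
  [Algebra.IsAlgebraic K E] (Q : ℕ) {ζ : E} (hζ : ζ ^ 3 = 1)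

theorem frobenius_mul_rotation (hK : Fintype.card K % 3 = 2) :
    frobenius K E Q * rotation (artinSchreier E Q) hζ =
      rotation (artinSchreier E Q) hζ ^ 2 * frobenius K E Q := by
  refine ringEquiv_ext
    (fun f ↦ by simp only [RingAut.mul_apply, frobenius_of, rotation_of, pow_two]) ?_
  have hζq : ζ ^ Fintype.card K = ζ * ζ := by
    rw [← pow_two, ← hK]
    exact pow_eq_pow_mod _ hζ
  simp only [RingAut.mul_apply, frobenius_root, rotation_root, map_mul, frobenius_of, map_C,
    rotation_of, pow_two, ← mul_assoc]
  rw [← map_mul, ← map_mul, ← hζq]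
  rfl

end Relations

section Action

variable (K H : Type*) {E : Type*} [Field K] [Fintype K] [Field H] [Fintype H] [Field E]
  [Algebra K H] [Algebra K E] [Algebra H E] [Algebra.IsAlgebraic K E]

/-- The Frobenius, translations and rotation acting on `s ^ 3 = X ^ card H - X` over `E`. -/
noncomputable def affineFrobenius (hK : Fintype.card K % 3 = 2) {ζ : E} (hζ : ζ ^ 3 = 1) :
    AffineFrobenius (PureCubic E[X] (artinSchreier E (Fintype.card H)) ≃+*
      PureCubic E[X] (artinSchreier E (Fintype.card H))) H where
  φ := frobeniusEnd K H
  T := translation E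
  F := frobenius K E _
  ω := rotation _ hζ
  n := Module.finrank K H
  n_ne_zero := Module.finrank_pos.ne'
  φ_pow_n := DFunLike.ext _ _ fun h ↦
    (frobeniusEnd_pow_apply K _ h).trans (pow_card_pow_finrank K h)
  T_add a b := ringEquiv_ext
    (fun f ↦ by
      rw [RingAut.mul_apply, translation_of, translation_of, translation_of, taylor_taylor,
        map_add, add_comm])
    (by simp only [RingAut.mul_apply, translation_root])
  F_T h := ringEquiv_ext
    (fun f ↦ by
      simp only [RingAut.mul_apply, translation_of, frobenius_of, map_taylor]
      congr 3
      exact (map_pow (algebraMap H E) h _).symm)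
    (by simp only [RingAut.mul_apply, translation_root, frobenius_root])
  ω_T h := ringEquiv_ext
    (fun f ↦ by simp only [RingAut.mul_apply, translation_of, rotation_of])
    (by simp only [RingAut.mul_apply, translation_root, rotation_root, map_mul, translation_of,
      taylor_C])
  F_ω := frobenius_mul_rotation K _ hζ hK
  ω_pow := rotation_pow_three _ hζ

end Action

end PureCubic

/-! ### Trace polynomials -/

/-- The polynomial `X + X ^ P + ⋯ + X ^ P ^ (M - 1)`; for `card H = P ^ M` it is the trace of a
finite field `H` over its subfield with `P` elements. -/
noncomputable def tracePoly (R : Type*) [CommRing R] (P M : ℕ) : R[X] :=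
  ∑ l ∈ Finset.range M, X ^ P ^ l

section TracePoly

variable (K : Type*) [Field K] [Fintype K] (E : Type*) [Field E] [Algebra K E] (r M : ℕ)

theorem tracePoly_comp (j : ℕ) :
    (tracePoly E (Fintype.card K ^ r) M).comp (X ^ Fintype.card K ^ j - X) =
      tracePoly E (Fintype.card K ^ r) M ^ Fintype.card K ^ j -
        tracePoly E (Fintype.card K ^ r) M := by
  rw [← frobeniusAlgHom_pow_apply K j (tracePoly _ _ _), tracePoly, map_sum,
    ← coe_compRingHom_apply, map_sum, ← Finset.sum_sub_distrib]
  refine Finset.sum_congr rfl fun l _ ↦ ?_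
  rw [coe_compRingHom_apply, X_pow_comp, ← pow_mul, sub_pow_card_pow, frobeniusAlgHom_pow_apply,
    ← pow_mul, ← pow_mul, mul_comm]

theorem tracePoly_pow_sub : tracePoly E (Fintype.card K ^ r) M ^ Fintype.card K ^ r -
    tracePoly E (Fintype.card K ^ r) M = artinSchreier E (Fintype.card K ^ (r * M)) := by
  have htelescope := Finset.sum_range_sub (fun l ↦ (X : E[X]) ^ (Fintype.card K ^ r) ^ l) M
  rw [pow_zero, pow_one, ← pow_mul (Fintype.card K), Finset.sum_sub_distrib] at htelescope
  rw [← frobeniusAlgHom_pow_apply K r (tracePoly _ _ _), tracePoly, map_sum, artinSchreier,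
    ← htelescope]
  simp only [frobeniusAlgHom_pow_apply, pow_succ, pow_mul]

theorem taylor_tracePoly (h : E) : taylor h (tracePoly E (Fintype.card K ^ r) M) =
    tracePoly E (Fintype.card K ^ r) M + C ((tracePoly E (Fintype.card K ^ r) M).eval h) := by
  simp only [tracePoly, map_sum, taylor_X_pow, eval_finsetSum, eval_pow, eval_X,
    ← Finset.sum_add_distrib]
  refine Finset.sum_congr rfl fun l _ ↦ ?_
  have hadd := map_add (FiniteField.frobeniusAlgHom K E[X] ^ (r * l)) X (C h)
  rwa [frobeniusAlgHom_pow_apply, frobeniusAlgHom_pow_apply, frobeniusAlgHom_pow_apply, ← map_pow,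
    pow_mul] at hadd

end TracePoly

theorem map_tracePoly {R R' : Type*} [CommRing R] [CommRing R'] (f : R →+* R') (P M : ℕ) :
    (tracePoly R P M).map f = tracePoly R' P M := by
  simp [tracePoly, Polynomial.map_sum]

theorem natDegree_artinSchreier (E : Type*) [Field E] {Q : ℕ} (hQ : 1 < Q) :
    (artinSchreier E Q).natDegree = Q :=
  FiniteField.X_pow_card_sub_X_natDegree_eq E hQ

section Degree

variable (K : Type*) [Field K] [Fintype K] (E : Type*) [Field E] [Algebra K E] {r M : ℕ}

theorem card_pow_mul_natDegree_tracePoly (hr : r ≠ 0) (hM : M ≠ 0) :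
    Fintype.card K ^ r * (tracePoly E (Fintype.card K ^ r) M).natDegree =
      Fintype.card K ^ (r * M) := by
  have hq : 1 < Fintype.card K := Fintype.one_lt_card
  rw [← natDegree_pow_sub_self _ (Nat.one_lt_pow hr hq), tracePoly_pow_sub,
    natDegree_artinSchreier E (Nat.one_lt_pow (mul_ne_zero hr hM) hq)]

theorem natDegree_tracePoly_pos (hr : r ≠ 0) (hM : M ≠ 0) :
    0 < (tracePoly E (Fintype.card K ^ r) M).natDegree := by
  refine Nat.pos_of_ne_zero fun h0 ↦ pow_ne_zero (r * M) (Fintype.card_ne_zero (α := K)) ?_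
  rw [← card_pow_mul_natDegree_tracePoly K E hr hM, h0, mul_zero]

variable {K} {H : Type*} [Field H] [Finite H] [Algebra K H] [Algebra H E]
  (hM : Module.finrank K H = r * M)
include hM

theorem eval_tracePoly_pow_eq (x : H) :
    (tracePoly E (Fintype.card K ^ r) M).eval (algebraMap H E x) ^ Fintype.card K ^ r =
      (tracePoly E (Fintype.card K ^ r) M).eval (algebraMap H E x) := by
  have heval := congrArg (eval (algebraMap H E x)) (tracePoly_pow_sub K E r M)
  rw [← hM, artinSchreier] at heval
  simp only [eval_sub, eval_pow, eval_X, ← map_pow, pow_card_pow_finrank, sub_self] at heval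
  exact sub_eq_zero.1 heval

theorem exists_eval_tracePoly_ne_zero {j : ℕ} (hj : j ≠ 0) (hjr : j < r) :
    ∃ h : H, (tracePoly E (Fintype.card K ^ r) M).eval
      (algebraMap H E (h ^ Fintype.card K ^ j - h)) ≠ 0 := by
  have := Fintype.ofFinite H
  have hrM : r * M ≠ 0 := hM ▸ Module.finrank_pos.ne'
  have hr : r ≠ 0 := left_ne_zero_of_mul hrM
  have hpos := natDegree_tracePoly_pos K E hr (right_ne_zero_of_mul hrM)
  have hq : 1 < Fintype.card K := Fintype.one_lt_card
  by_contra! hall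
  set D : E[X] := (tracePoly E (Fintype.card K ^ r) M).comp (X ^ Fintype.card K ^ j - X) with hD
  have hdeg : D.natDegree =
      Fintype.card K ^ j * (tracePoly E (Fintype.card K ^ r) M).natDegree := by
    rw [hD, tracePoly_comp, natDegree_pow_sub_self _ (Nat.one_lt_pow hj hq)]
  have hD0 : D = 0 := by
    refine eq_zero_of_natDegree_lt_card_of_eval_eq_zero D (algebraMap H E).injective
      (fun h ↦ by simpa [hD] using hall h) ?_
    rw [hdeg, Module.card_eq_pow_finrank (K := K) (V := H), hM,
      ← card_pow_mul_natDegree_tracePoly K E hr (right_ne_zero_of_mul hrM)]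
    exact Nat.mul_lt_mul_of_pos_right (Nat.pow_lt_pow_right hq hjr) hpos
  rw [hD0, natDegree_zero] at hdeg
  exact (Nat.mul_pos (pow_pos (Nat.zero_lt_of_lt hq) j) hpos).ne hdeg

end Degree

/-! ### Points of `b ^ 3 = a ^ P - a` -/

theorem exists_isPrimitiveRoot_of_dvd_card_sub_one {E : Type*} [Field E] [Finite E] {d : ℕ}
    (hd : d ∣ Nat.card E - 1) : ∃ a : E, IsPrimitiveRoot a d := by
  obtain ⟨g, hg⟩ := IsCyclic.exists_ofOrder_eq_natCard (α := Eˣ)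
  have hg' : IsPrimitiveRoot (g : E) (Nat.card E - 1) := by
    rw [IsPrimitiveRoot.coe_units_iff, ← Nat.card_units, ← hg]
    exact IsPrimitiveRoot.orderOf g
  obtain ⟨e, he⟩ := hd
  have hcard : 1 < Nat.card E := Finite.one_lt_card
  exact ⟨(g : E) ^ e, hg'.pow (by omega) (by rw [he, mul_comm])⟩

theorem exists_pow_pow_eq_of_isPrimitiveRoot {R : Type*} [CommRing R] [IsDomain R] {a z : R}
    {c d : ℕ} (ha : IsPrimitiveRoot a (c * d)) (hcd : 0 < c * d) (hz : z ^ d = 1) :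
    ∃ k, (a ^ k) ^ c = z := by
  have : NeZero d := ⟨right_ne_zero_of_mul hcd.ne'⟩
  obtain ⟨k, -, hk⟩ := (ha.pow hcd rfl).eq_pow_of_pow_eq_one hz
  exact ⟨k, by rw [← hk, ← pow_mul, ← pow_mul, mul_comm]⟩

namespace PureCubic

namespace Covering

variable {E : Type*} [Field E] {S u : E[X]} {P : ℕ} {ζ a : E} (h : Covering S u P ζ)
include h

theorem sub_pow_field (x y : E) : (x - y) ^ P = x ^ P - y ^ P :=
  C_injective (by simpa using h.sub_pow (C x) (C y))

theorem isPoint_sub {b c : E} (hp : IsPoint P a b) (hc : c ^ P = c) : IsPoint P (a - c) b where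
  eq := by rw [h.sub_pow_field, hc, hp.eq]; ring
  pow_pow := by rw [h.sub_pow_field, h.sub_pow_field, hp.pow_pow, hc, hc]
  ne_zero := hp.ne_zero

theorem sub_one_mul_div_three : 3 * ((P - 1) * ((P + 1) / 3)) = P * P - 1 := by
  rw [mul_left_comm, Nat.mul_div_cancel' h.three_dvd, mul_comm, ← Nat.sq_sub_sq, one_pow, pow_two]

theorem pow_sub_ne_zero (ha : IsPrimitiveRoot a (P * P - 1)) : a ^ P - a ≠ 0 := fun h0 ↦ by
  have hP := h.two_le
  have hlt : P < P * P - 1 := by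
    have := Nat.mul_le_mul_right P hP
    omega
  have hP1 : P = 1 := ha.pow_inj hlt (by omega) (by rw [pow_one, sub_eq_zero.1 h0])
  omega

theorem sub_pow_pow_eq_one (ha : IsPrimitiveRoot a (P * P - 1)) (hpow : (a ^ P) ^ P = a) :
    (a ^ P - a) ^ ((P - 1) * ((P + 1) / 3)) = 1 := by
  have hP := h.two_le
  have hpow1 : (a ^ P - a) ^ (P - 1) = -1 := by
    refine mul_right_cancel₀ (h.pow_sub_ne_zero ha) ?_
    rw [← pow_succ, Nat.sub_add_cancel (by omega), h.sub_pow_field, hpow]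
    ring
  rw [pow_mul, hpow1, h.neg_one_pow]

theorem exists_isPoint (ha : IsPrimitiveRoot a (P * P - 1)) : ∃ k, IsPoint P a (a ^ k) := by
  have hP : 1 < P * P := one_lt_mul'' h.two_le h.two_le
  have hpow : (a ^ P) ^ P = a := by
    rw [← pow_mul, ← Nat.sub_add_cancel hP.le, pow_succ, ha.pow_eq_one, one_mul]
  have hexp := h.sub_one_mul_div_three
  obtain ⟨k, hk⟩ := exists_pow_pow_eq_of_isPrimitiveRoot (hexp ▸ ha) (by omega)
    (h.sub_pow_pow_eq_one ha hpow)
  exact ⟨k, hk, hpow, pow_ne_zero _ (ha.ne_zero (by omega))⟩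

end Covering

section

variable (K H : Type*) {E : Type*} [Field K] [Fintype K] [Field H] [Fintype H] [Field E]
  [Algebra K H] [Algebra K E]

theorem covering_tracePoly (hK : Fintype.card K % 3 = 2) {ζ : E} (hζ : IsPrimitiveRoot ζ 3)
    {i M : ℕ} (hM : Module.finrank K H = 3 ^ i * M) :
    Covering (artinSchreier E (Fintype.card H)) (tracePoly E (Fintype.card K ^ 3 ^ i) M)
      (Fintype.card K ^ 3 ^ i) ζ where
  sub_pow := sub_pow_card_pow K _
  pow_sub := by rw [tracePoly_pow_sub, ← hM, ← Module.card_eq_pow_finrank]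
  three_dvd := dvd_trans (by omega) (add_one_dvd_pow_three_pow_add_one _ i)
  not_three_dvd h3 := by
    have h1 := h3.mul_left (Fintype.card K ^ 3 ^ i)
    have hM0 : 3 ^ i * M ≠ 0 := hM ▸ Module.finrank_pos.ne'
    rw [card_pow_mul_natDegree_tracePoly K E (by positivity) (right_ne_zero_of_mul hM0)] at h1
    have := Nat.prime_three.dvd_of_dvd_pow h1
    omega
  isPrimitiveRoot := hζ

end

end PureCubic

/-! ### Seeds from point classes -/

namespace PureCubic

theorem Covering.frobenius_pow_smul_idealClass {K E : Type*} [Field K] [Fintype K] [Field E]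
    [Algebra K E] [Algebra.IsAlgebraic K E] {Q : ℕ}
    [IsDedekindDomain (PureCubic E[X] (artinSchreier E Q))] {u : E[X]} {P : ℕ} {ζ : E}
    (h : Covering (artinSchreier E Q) u P ζ)
    (hu : u.map (FiniteField.frobeniusAlgHom K E : E →+* E) = u) (r : ℕ) (a b : E) :
    frobenius K E Q ^ r • idealClass (pointIdeal (artinSchreier E Q) u a b) =
      idealClass (pointIdeal _ u (a ^ Fintype.card K ^ r) (b ^ Fintype.card K ^ r)) := by
  induction r generalizing a b with
  | zero => simp
  | succ r ih =>
    rw [pow_succ, mul_smul, smul_idealClass _ (h.pointIdeal_ne_bot a b), map_frobenius K E _ hu, ih,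
      ← pow_mul, ← pow_mul, ← pow_succ']

variable {K H E : Type*} [Field K] [Fintype K] [Field H] [Fintype H] [Field E] [Algebra K H]
  [Algebra K E] [Algebra H E]

namespace Covering

variable [IsDedekindDomain (PureCubic E[X] (artinSchreier E (Fintype.card H)))]
  {u : E[X]} {P : ℕ} {ζ : E} (h : Covering (artinSchreier E (Fintype.card H)) u P ζ)
include h

theorem translation_smul_idealClass {g : H} {c : E}
    (hu : taylor (algebraMap H E g) u = u + C c) (a b : E) :
    translation E g • idealClass (pointIdeal (artinSchreier E (Fintype.card H)) u a b) =
      idealClass (pointIdeal (artinSchreier E (Fintype.card H)) u (a - c) b) :=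
  (smul_idealClass _ (h.pointIdeal_ne_bot a b)).trans
    (congrArg idealClass (map_translation E hu a b))

end Covering

section Seed

variable [Algebra.IsAlgebraic K E] (hK : Fintype.card K % 3 = 2) {ζ : E}

theorem affineFrobenius_δ_apply (hζ : ζ ^ 3 = 1) (r : ℕ) (g : H) :
    (affineFrobenius K H hK hζ).δ r g = g ^ Fintype.card K ^ r - g :=
  congrArg (· - g) (frobeniusEnd_pow_apply K r g)

variable [IsDedekindDomain (PureCubic E[X] (artinSchreier E (Fintype.card H)))]
  (hζ : IsPrimitiveRoot ζ 3) {i M : ℕ} (hM : Module.finrank K H = 3 ^ i * M)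
include hM

theorem idealClass_mem_invariants (a b : E) :
    idealClass (pointIdeal (artinSchreier E (Fintype.card H))
        (tracePoly E (Fintype.card K ^ 3 ^ i) M) a b) ∈
      (affineFrobenius K H hK hζ.pow_eq_one).invariants _ (3 ^ i) := fun g ↦ by
  have hcomp := congrArg (eval (algebraMap H E g)) (tracePoly_comp K E (3 ^ i) M (3 ^ i))
  have heval : (tracePoly E (Fintype.card K ^ 3 ^ i) M).eval
      (algebraMap H E (g ^ Fintype.card K ^ 3 ^ i - g)) = 0 := by
    simpa [eval_tracePoly_pow_eq E hM g] using hcomp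
  rw [affineFrobenius_δ_apply]
  refine ((covering_tracePoly K H hK hζ hM).translation_smul_idealClass
    (taylor_tracePoly K E _ _ _) a b).trans ?_
  rw [heval, sub_zero]

theorem nsmul_rotation_smul_sub_notMem_invariants {a b : E}
    (hp : IsPoint (Fintype.card K ^ 3 ^ i) a b) (hi : i ≠ 0) {k : ℕ}
    (hk : ProperCofactor (Fintype.card K ^ 3 ^ i + 1) k) :
    k • (rotation (artinSchreier E (Fintype.card H)) hζ.pow_eq_one •
          idealClass (pointIdeal (artinSchreier E (Fintype.card H))
            (tracePoly E (Fintype.card K ^ 3 ^ i) M) a b) -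
        idealClass (pointIdeal (artinSchreier E (Fintype.card H))
          (tracePoly E (Fintype.card K ^ 3 ^ i) M) a b)) ∉
      (affineFrobenius K H hK hζ.pow_eq_one).invariants _ (3 ^ (i - 1)) := fun hinv ↦ by
  have hcov := covering_tracePoly K H hK hζ hM
  obtain ⟨g, hc⟩ := exists_eval_tracePoly_ne_zero E hM (j := 3 ^ (i - 1)) (by positivity)
    (Nat.pow_lt_pow_right (by norm_num) (by omega))
  have hδ := affineFrobenius_δ_apply hK hζ.pow_eq_one (3 ^ (i - 1)) g
  have hT := hinv g
  rw [hδ] at hT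
  generalize g ^ Fintype.card K ^ 3 ^ (i - 1) - g = d at hc hT
  have hp' := hcov.isPoint_sub hp (eval_tracePoly_pow_eq E hM d)
  refine hcov.nsmul_rotation_smul_sub_ne hp hp' (fun ha ↦ hc (by linear_combination ha)) hk ?_
  have hcomm : rotation (artinSchreier E (Fintype.card H)) hζ.pow_eq_one * translation E d =
      translation E d * rotation _ hζ.pow_eq_one :=
    (affineFrobenius K H hK hζ.pow_eq_one).ω_T d
  rw [← hcov.translation_smul_idealClass (taylor_tracePoly K E _ _ _), ← mul_smul, hcomm, mul_smul,
    ← smul_sub, smul_comm k]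
  exact hT.symm

theorem exists_isSeed [IsScalarTower K H E] [Finite E] (hE : Module.finrank H E = 2) (hi : i ≠ 0) :
    ∃ x : Additive (ClassGroup (PureCubic E[X] (artinSchreier E (Fintype.card H)))),
      (affineFrobenius K H hK hζ.pow_eq_one).IsSeed (Fintype.card K) i x := by
  have hcov := covering_tracePoly K H hK hζ hM
  have hcard : Nat.card E = Fintype.card K ^ (2 * 3 ^ i * M) := by
    rw [mul_assoc, ← hM, mul_comm, ← hE, Module.finrank_mul_finrank,
      Module.natCard_eq_pow_finrank (K := K), Nat.card_eq_fintype_card]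
  obtain ⟨a, ha⟩ := exists_isPrimitiveRoot_of_dvd_card_sub_one (E := E)
    (d := Fintype.card K ^ (2 * 3 ^ i) - 1)
    (by rw [hcard]; exact Nat.pow_sub_one_dvd_pow_sub_one _ (dvd_mul_right _ _))
  have hsq : Fintype.card K ^ (2 * 3 ^ i) = Fintype.card K ^ 3 ^ i * Fintype.card K ^ 3 ^ i := by
    rw [two_mul, pow_add]
  obtain ⟨k, hp⟩ := hcov.exists_isPoint (hsq ▸ ha)
  have hfix : a ^ Fintype.card K ^ (2 * 3 ^ i) = a := by rw [hsq, pow_mul, hp.pow_pow]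
  refine ⟨_, idealClass_mem_invariants hK hζ hM a (a ^ k), ?_, hcov.succ_nsmul_idealClass hp,
    fun l hl ↦ nsmul_rotation_smul_sub_notMem_invariants hK hζ hM hp hi hl⟩
  refine (hcov.frobenius_pow_smul_idealClass (K := K) (map_tracePoly _ _ _) _ _ _).trans ?_
  rw [pow_right_comm a k, hfix]

end Seed

end PureCubic

/-! ### Galois descent of Frobenius traces -/

theorem exists_sum_mul_pow_eq_ite {F : Type*} [Field F] {d : ℕ} {v : ℕ → F}
    (hv : Set.InjOn v (Finset.range d)) : ∃ (J : ℕ) (c : Fin J → F),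
      ∀ r < d, ∑ j, c j * v r ^ (j : ℕ) = if r = 0 then 1 else 0 := by
  set D := Lagrange.basis (Finset.range d) v 0
  refine ⟨D.natDegree + 1, fun j ↦ D.coeff j, fun r hr ↦ ?_⟩
  rw [Fin.sum_univ_eq_sum_range (fun j ↦ D.coeff j * v r ^ j), ← eval_eq_sum_range]
  split_ifs with hr0
  · subst hr0
    exact Lagrange.eval_basis_self hv (Finset.mem_range.2 hr)
  · exact Lagrange.eval_basis_of_ne (Ne.symm hr0) (Finset.mem_range.2 hr)

section FrobeniusDescent

variable {K E : Type*} [Field K] [Fintype K] [Field E] [Finite E] [Algebra K E]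

theorem exists_algebraMap_eq_of_pow_card_eq {x : E} (hx : x ^ Fintype.card K = x) :
    ∃ y, algebraMap K E y = x := by
  refine (IsGalois.mem_range_algebraMap_iff_fixed (F := K) x).2 fun σ ↦ ?_
  obtain ⟨r, rfl⟩ := (FiniteField.bijective_frobeniusAlgEquivOfAlgebraic_pow K E).2 σ
  have hfix : Function.IsFixedPt (FiniteField.frobeniusAlgEquivOfAlgebraic K E) x := hx
  exact (congrFun (AlgEquiv.coe_pow _ (r : ℕ)) x).trans (hfix.iterate r)

theorem mem_range_mapRingHom_of_map_eq {f : E[X]}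
    (hf : f.map (FiniteField.frobeniusAlgHom K E : E →+* E) = f) :
    f ∈ (mapRingHom (algebraMap K E)).range :=
  (mem_map_range _).2 fun j ↦ exists_algebraMap_eq_of_pow_card_eq (K := K)
    ((coeff_map _ j).symm.trans (congrArg (coeff · j) hf))

variable (K E)

theorem exists_injOn_pow_card_pow :
    ∃ g : E, Set.InjOn (fun r ↦ g ^ Fintype.card K ^ r) (Finset.range (Module.finrank K E)) := by
  obtain ⟨g, hg⟩ := Field.exists_primitive_element K E
  have heval := (Field.primitive_element_iff_algHom_eq_of_eval' K E (Normal.splits inferInstance)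
    g).1 hg
  refine ⟨g, fun r hr t ht h ↦ ?_⟩
  have hFin := (FiniteField.bijective_frobeniusAlgHom_pow K E).1
    (a₁ := ⟨r, Finset.mem_range.1 hr⟩) (a₂ := ⟨t, Finset.mem_range.1 ht⟩)
    (heval (by simpa only [frobeniusAlgHom_pow_apply] using h))
  exact congrArg Fin.val hFin

theorem exists_sum_mul_pow_card_pow_eq : ∃ (J : ℕ) (c e : Fin J → E),
    ∀ r < Module.finrank K E, ∑ j, c j * e j ^ Fintype.card K ^ r = if r = 0 then 1 else 0 := by
  obtain ⟨g, hg⟩ := exists_injOn_pow_card_pow K E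
  obtain ⟨J, c, hc⟩ := exists_sum_mul_pow_eq_ite hg
  refine ⟨J, c, fun j ↦ g ^ (j : ℕ), fun r hr ↦ ?_⟩
  simp only [pow_right_comm g _ (Fintype.card K ^ r), hc r hr]

end FrobeniusDescent

namespace PureCubic

variable {K E : Type*} [Field K] [Fintype K] [Field E] [Finite E] [Algebra K E] {Q : ℕ}

theorem frobenius_pow_finrank : frobenius K E Q ^ Module.finrank K E = 1 :=
  ringEquiv_ext
    (fun f ↦ by
      rw [frobenius_pow_of, ← FiniteField.orderOf_frobeniusAlgHom, pow_orderOf_eq_one]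
      exact congrArg (of _) (Polynomial.map_id (p := f)))
    (frobenius_pow_root K E Q _)

theorem exists_mapHom_eq_of_frobenius_eq {x : PureCubic E[X] (artinSchreier E Q)}
    (hx : frobenius K E Q x = x) :
    ∃ y, mapHom (mapRingHom (algebraMap K E)) (map_artinSchreier (algebraMap K E) Q) y = x := by
  refine exists_mapHom_eq _ (mem_range_mapRingHom_of_map_eq (congrArg c0 hx))
    (mem_range_mapRingHom_of_map_eq ?_) (mem_range_mapRingHom_of_map_eq ?_)
  · exact (one_mul _).symm.trans (congrArg c1 hx)
  · have hc2 := congrArg c2 hx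
    rw [frobenius, aut_c2, one_pow, one_mul] at hc2
    exact hc2

variable [IsDedekindDomain (PureCubic E[X] (artinSchreier E Q))]
  [IsDedekindDomain (PureCubic K[X] (artinSchreier K Q))]

variable (K E Q) in
/-- Extension of ideal classes along `K[X][s] → E[X][s]`, where `s ^ 3 = X ^ Q - X`. -/
noncomputable def classBaseChange :
    Additive (ClassGroup (PureCubic K[X] (artinSchreier K Q))) →+
      Additive (ClassGroup (PureCubic E[X] (artinSchreier E Q))) :=
  classMap (mapHom (mapRingHom (algebraMap K E)) (map_artinSchreier (algebraMap K E) Q))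
    (mapHom_injective (map_injective _ (algebraMap K E).injective) _)

theorem exists_classBaseChange_eq_sum_frobenius_pow_smul
    (w : Additive (ClassGroup (PureCubic E[X] (artinSchreier E Q)))) :
    ∃ y, classBaseChange K E Q y =
      ∑ r ∈ Finset.range (Module.finrank K E), frobenius K E Q ^ r • w := by
  obtain ⟨J, c, e, hce⟩ := exists_sum_mul_pow_card_pow_eq K E
  have hdual : ∀ r < Module.finrank K E, ∑ j, of (artinSchreier E Q) (C (c j)) *
      (frobenius K E Q ^ r) (of _ (C (e j))) = if r = 0 then 1 else 0 := fun r hr ↦ by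
    simp only [frobenius_pow_of, map_C, ← map_mul, ← map_sum, RingHom.coe_coe,
      frobeniusAlgHom_pow_apply, hce r hr]
    split_ifs <;> simp
  obtain ⟨y, hy⟩ := exists_classMap_eq_sum_classAut Module.finrank_pos frobenius_pow_finrank
    (fun _ ↦ exists_mapHom_eq_of_frobenius_eq) hdual
    (mapHom_injective (map_injective _ (algebraMap K E).injective) _) w
  refine ⟨y, hy.trans (Finset.sum_congr rfl fun r _ ↦ ?_)⟩
  exact (DFunLike.congr_fun (map_pow classAut (frobenius K E Q) r) w).symm

end PureCubic

/-! ### The class group of the integral closure -/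

theorem three_ne_zero_of_not_dvd_card (K : Type*) [Field K] [Fintype K]
    (hK : ¬ 3 ∣ Fintype.card K) : (3 : K) ≠ 0 := fun h3 ↦ by
  obtain ⟨n, hp, hn⟩ := FiniteField.card K (ringChar K)
  have hdvd : ringChar K ∣ 3 := ringChar.dvd (by exact_mod_cast h3)
  rw [hn, (Nat.prime_dvd_prime_iff_eq hp Nat.prime_three).1 hdvd] at hK
  exact hK (dvd_pow_self 3 n.ne_zero)

theorem three_dvd_sq_sub_one {Q : ℕ} (hQ : ¬ 3 ∣ Q) : 3 ∣ Q ^ 2 - 1 := by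
  have hmod : Q ^ 2 % 3 = 1 := by
    obtain h | h : Q % 3 = 1 ∨ Q % 3 = 2 := by omega
    all_goals rw [Nat.pow_mod, h]
  omega

section ArtinSchreier

variable {K : Type*} (E : Type*) [Field K] [Fintype K] [Field E] {r : ℕ}

theorem not_three_dvd_natDegree_artinSchreier (hK : ¬ 3 ∣ Fintype.card K) (hr : r ≠ 0) :
    ¬ 3 ∣ (artinSchreier E (Fintype.card K ^ r)).natDegree := by
  rw [natDegree_artinSchreier E (Nat.one_lt_pow hr Fintype.one_lt_card)]
  exact fun h ↦ hK (Nat.prime_three.dvd_of_dvd_pow h)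

variable [Algebra K E]

theorem squarefree_artinSchreier (hr : r ≠ 0) :
    Squarefree (artinSchreier E (Fintype.card K ^ r)) := by
  have hcard : (Fintype.card K : E) = 0 := by
    rw [← map_natCast (algebraMap K E), FiniteField.cast_card_eq_zero, map_zero]
  exact (galois_poly_separable (ringChar E) _ (dvd_pow (ringChar.dvd hcard) hr)).squarefree

theorem isDedekindDomain_pureCubic_artinSchreier (hK : ¬ 3 ∣ Fintype.card K) (hr : r ≠ 0) :
    IsDedekindDomain (PureCubic E[X] (artinSchreier E (Fintype.card K ^ r))) := by
  have h3 : (3 : E) ≠ 0 := by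
    rw [← map_ofNat (algebraMap K E) 3]
    exact (_root_.map_ne_zero _).2 (three_ne_zero_of_not_dvd_card K hK)
  exact PureCubic.isDedekindDomain (not_three_dvd_natDegree_artinSchreier E hK hr) h3
    (squarefree_artinSchreier E hr)

end ArtinSchreier

theorem finite_classGroup_integralClosure {k L : Type*} [Field k] [Finite k] [Field L]
    [Algebra k[X] L] [Algebra (RatFunc k) L] [IsScalarTower k[X] (RatFunc k) L]
    [FiniteDimensional (RatFunc k) L] [Algebra.IsSeparable (RatFunc k) L] :
    Finite (ClassGroup (integralClosure k[X] L)) :=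
  have := Fintype.ofFinite k
  Finite.of_fintype (ClassGroup (FunctionField.ringOfIntegers k L))

namespace PureCubic

section Tower

variable {K H E : Type*} [Field K] [Fintype K] [Field H] [Fintype H] [Field E] [Finite E]
  [Algebra K H] [Algebra K E] [Algebra H E] [IsScalarTower K H E]

theorem exists_injective_pi_zmod_of_tower (hK : Fintype.card K % 3 = 2)
    {m N Q : ℕ} (hm : m ∣ Fintype.card K + 1) (hH : Module.finrank K H = 3 ^ (2 * N))
    (hE : Module.finrank H E = 2) {ζ : E} (hζ : IsPrimitiveRoot ζ 3)
    (hQ : Fintype.card H = Q) [IsDedekindDomain (PureCubic E[X] (artinSchreier E Q))]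
    [IsDedekindDomain (PureCubic K[X] (artinSchreier K Q))]
    [Finite (ClassGroup (PureCubic K[X] (artinSchreier K Q)))] :
    ∃ f : (Fin N → ZMod m) →+ Additive (ClassGroup (PureCubic K[X] (artinSchreier K Q))),
      Function.Injective f := by
  subst hQ
  have hcoprime (i : ℕ) : (Fintype.card H).Coprime (Fintype.card K ^ 3 ^ i + 1) := by
    rw [Module.card_eq_pow_finrank (K := K)]
    refine Nat.Coprime.pow_left _ (Nat.Coprime.coprime_dvd_left
      (dvd_pow_self _ (by positivity : 3 ^ i ≠ 0)) ?_)
    exact Nat.coprime_self_add_right.2 (Nat.coprime_one_right _)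
  refine (affineFrobenius K H hK hζ.pow_eq_one).exists_injective_pi_zmod_of_isSeed
    (classBaseChange K E _) (by omega) hm hH hcoprime (fun w ↦ ?_) fun i hi hiN ↦
      exists_isSeed hK hζ (M := 3 ^ (2 * N - i)) ?_ hE (by omega)
  · obtain ⟨y, hy⟩ := exists_classBaseChange_eq_sum_frobenius_pow_smul (K := K) w
    rw [← Module.finrank_mul_finrank K H E, hE, mul_comm] at hy
    exact ⟨y, hy⟩
  · rw [hH, ← pow_add, Nat.add_sub_cancel' hiN]

end Tower

theorem exists_injective_pi_zmod {K : Type*} [Field K] [Fintype K] (hK : Fintype.card K % 3 = 2)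
    {m N : ℕ} (hm : m ∣ Fintype.card K + 1)
    [IsDedekindDomain (PureCubic K[X] (artinSchreier K (Fintype.card K ^ 3 ^ (2 * N))))]
    [Finite (ClassGroup (PureCubic K[X] (artinSchreier K (Fintype.card K ^ 3 ^ (2 * N)))))] :
    ∃ f : (Fin N → ZMod m) →+
        Additive (ClassGroup (PureCubic K[X] (artinSchreier K (Fintype.card K ^ 3 ^ (2 * N))))),
      Function.Injective f := by
  obtain ⟨p, _⟩ := CharP.exists K
  have : Fact p.Prime := ⟨CharP.char_is_prime K p⟩
  have : NeZero (3 ^ (2 * N)) := ⟨by positivity⟩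
  let H := FiniteField.Extension K p (3 ^ (2 * N))
  have : CharP H p := charP_of_injective_algebraMap (algebraMap K H).injective p
  have := Fintype.ofFinite H
  let E := FiniteField.Extension H p 2
  let _ : Algebra K E := ((algebraMap H E).comp (algebraMap K H)).toAlgebra
  have : IsScalarTower K H E := IsScalarTower.of_algebraMap_eq' rfl
  have hH : Module.finrank K H = 3 ^ (2 * N) := FiniteField.finrank_extension K p _
  have hE : Module.finrank H E = 2 := FiniteField.finrank_extension H p 2
  have hcardH : Fintype.card H = Fintype.card K ^ 3 ^ (2 * N) := by
    rw [Module.card_eq_pow_finrank (K := K), hH]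
  have hK3 : ¬ 3 ∣ Fintype.card K := by omega
  obtain ⟨ζ, hζ⟩ : ∃ ζ : E, IsPrimitiveRoot ζ 3 := by
    refine exists_isPrimitiveRoot_of_dvd_card_sub_one ?_
    rw [Module.natCard_eq_pow_finrank (K := H), hE, Nat.card_eq_fintype_card, hcardH]
    exact three_dvd_sq_sub_one fun h ↦ hK3 (Nat.prime_three.dvd_of_dvd_pow h)
  have := isDedekindDomain_pureCubic_artinSchreier E hK3 (NeZero.ne (3 ^ (2 * N)))
  exact exists_injective_pi_zmod_of_tower hK hm hH hE hζ hcardH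

end PureCubic

theorem exists_injective_pi_zmod_integralClosure {K L : Type*} [Field K] [Fintype K] [Field L]
    [Algebra K[X] L] [Algebra (RatFunc K) L] [IsScalarTower K[X] (RatFunc K) L]
    (hK : Fintype.card K % 3 = 2) {m N : ℕ} (hm : m ∣ Fintype.card K + 1) {s : L}
    (hs : s ^ 3 = algebraMap K[X] L (artinSchreier K (Fintype.card K ^ 3 ^ (2 * N))))
    (hadj : Algebra.adjoin (RatFunc K) {s} = ⊤) :
    ∃ f : (Fin N → ZMod m) →+ Additive (ClassGroup (integralClosure K[X] L)),
      Function.Injective f := by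
  have hn : 3 ^ (2 * N) ≠ 0 := by positivity
  have hK3 : ¬ 3 ∣ Fintype.card K := by omega
  have hS := not_three_dvd_natDegree_artinSchreier K hK3 hn
  have h3 := three_ne_zero_of_not_dvd_card K hK3
  have := isDedekindDomain_pureCubic_artinSchreier K hK3 hn
  have := PureCubic.finiteDimensional_of_adjoin hs hadj
  have := PureCubic.isSeparable_of_adjoin hs hadj hS h3
  let e := ClassGroup.mulEquiv
    (PureCubic.equivIntegralClosure hs hadj hS h3 (squarefree_artinSchreier K hn))
  have : Finite (ClassGroup (integralClosure K[X] L)) := finite_classGroup_integralClosure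
  have := Finite.of_equiv _ e.symm.toEquiv
  obtain ⟨f, hf⟩ := PureCubic.exists_injective_pi_zmod (N := N) hK hm
  exact ⟨e.toAdditive.toAddMonoidHom.comp f, e.toAdditive.injective.comp hf⟩

theorem stmt15 (Fq : Type*) [Field Fq] [Fintype Fq]
    (hq : Fintype.card Fq % 3 = 2)
    (m : ℕ) (hm : 0 < m) (hmdvd : m ∣ Fintype.card Fq + 1) (N : ℕ) :
    ∃ n : ℕ, 0 < n ∧
      ∀ (L : Type) (_ : Field L) (_ : Algebra (Polynomial Fq) L)
        (_ : Algebra (RatFunc Fq) L)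
        (_ : IsScalarTower (Polynomial Fq) (RatFunc Fq) L) (s : L),
        s ^ 3 = algebraMap (RatFunc Fq) L
            (RatFunc.X ^ (Fintype.card Fq ^ n) - RatFunc.X) →
        Algebra.adjoin (RatFunc Fq) {s} = ⊤ →
        ∃ φ : (Fin N → ZMod m) →+
            Additive (ClassGroup (integralClosure (Polynomial Fq) L)),
          Function.Injective φ := by
  refine ⟨3 ^ (2 * N), by positivity, fun L _ _ _ _ s hs hadj ↦ ?_⟩
  refine exists_injective_pi_zmod_integralClosure hq hmdvd (s := s) ?_ hadj
  rw [hs, IsScalarTower.algebraMap_apply Fq[X] (RatFunc Fq) L, artinSchreier]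
  simp only [map_sub, map_pow, RatFunc.algebraMap_X]
end

section
/- Let q be an odd prime power, let f ∈ 𝔽_q[x] be a squarefree polynomial of degree 3, and let A ∈ 𝔽_q[t] be a squarefree polynomial of odd degree d > 1. Then the set of separable ∞-integral points of the quadratic twist A(t)·y² = f(x), namely {(F, G) ∈ 𝔽_q[t] × 𝔽_q[t] : A·G² = f(F) and F′ ≠ 0}, is finite. -/
open Polynomial

/-!
If `A * G ^ (n + 1) = f(F)` with `f` separable, then `G ^ n` divides the derivative `f'(F) * F'` of
`f(F)` and is coprime to `f'(F)`, so it divides `F'`. As `F' ≠ 0`, this gives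
`n * deg G < deg F`, and comparing degrees in `A * G ^ (n + 1) = f(F)` bounds `deg F` in terms of
`deg A`.
-/

theorem finite_setOf_natDegree_lt (R : Type*) [Semiring R] [Finite R] (n : ℕ) :
    {p : R[X] | p.natDegree < n}.Finite := by
  have : Finite (degreeLT R n) := .of_equiv _ (degreeLTEquiv R n).symm.toEquiv
  refine (Set.toFinite (degreeLT R n : Set R[X])).subset fun p hp ↦ mem_degreeLT.mpr ?_
  exact degree_le_natDegree.trans_lt (Nat.cast_lt.mpr hp)

theorem isCoprime_comp_derivative_comp {R : Type*} [CommSemiring R] {f : R[X]}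
    (hf : f.Separable) (F : R[X]) : IsCoprime (f.comp F) ((derivative f).comp F) :=
  IsCoprime.map hf (compRingHom F)

theorem pow_dvd_derivative_of_pow_succ_dvd_comp {R : Type*} [CommRing R] {f F G : R[X]} {n : ℕ}
    (hf : f.Separable) (hG : G ^ (n + 1) ∣ f.comp F) : G ^ n ∣ derivative F := by
  have hcop : IsCoprime (G ^ n) ((derivative f).comp F) :=
    (isCoprime_comp_derivative_comp hf F).of_isCoprime_of_dvd_left
      ((pow_dvd_pow G n.le_succ).trans hG)
  have hdvd : G ^ n ∣ derivative F * (derivative f).comp F := by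
    simpa only [derivative_comp, Nat.add_sub_cancel] using pow_sub_one_dvd_derivative_of_pow_dvd hG
  exact hcop.dvd_of_dvd_mul_right hdvd

section DegreeBounds

variable {R : Type*} [CommRing R] [IsDomain R] {f A F G : R[X]} {n : ℕ}

theorem mul_natDegree_lt_of_pow_succ_dvd_comp (hf : f.Separable) (hF : derivative F ≠ 0)
    (hG : G ^ (n + 1) ∣ f.comp F) : n * G.natDegree < F.natDegree := by
  have hFdeg : F.natDegree ≠ 0 := mt derivative_of_natDegree_zero hF
  calc n * G.natDegree = (G ^ n).natDegree := (natDegree_pow G n).symm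
    _ ≤ (derivative F).natDegree :=
      natDegree_le_of_dvd (pow_dvd_derivative_of_pow_succ_dvd_comp hf hG) hF
    _ < F.natDegree := natDegree_derivative_lt hFdeg

theorem natDegree_add_mul_natDegree_of_mul_pow_eq_comp (hf : f ≠ 0) (hF : F.natDegree ≠ 0)
    (h : A * G ^ n = f.comp F) :
    A.natDegree + n * G.natDegree = f.natDegree * F.natDegree := by
  have hcomp : A * G ^ n ≠ 0 := by
    rw [h, Ne, comp_eq_zero_iff]
    rintro (hf0 | ⟨-, hFC⟩)
    · exact hf hf0
    · exact hF (hFC ▸ natDegree_C _)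
  rw [← natDegree_comp, ← h, natDegree_mul (left_ne_zero_of_mul hcomp)
    (right_ne_zero_of_mul hcomp), natDegree_pow]

theorem natDegree_add_lt_of_mul_pow_succ_eq_comp (hf : f.Separable)
    (hn : n + 1 < n * f.natDegree) (hF : derivative F ≠ 0) (h : A * G ^ (n + 1) = f.comp F) :
    F.natDegree + n < n * A.natDegree := by
  have hG : n * G.natDegree < F.natDegree :=
    mul_natDegree_lt_of_pow_succ_dvd_comp hf hF (h ▸ dvd_mul_left _ A)
  have hdeg : A.natDegree + (n + 1) * G.natDegree = f.natDegree * F.natDegree :=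
    natDegree_add_mul_natDegree_of_mul_pow_eq_comp hf.ne_zero
      (mt derivative_of_natDegree_zero hF) h
  have key : (n + 2) * F.natDegree + (n + 1) ≤ n * A.natDegree + (n + 1) * F.natDegree :=
    calc (n + 2) * F.natDegree + (n + 1)
        ≤ n * f.natDegree * F.natDegree + (n + 1) := by gcongr; exact hn
      _ = n * A.natDegree + (n + 1) * (n * G.natDegree + 1) := by
        rw [mul_assoc, ← hdeg]; ring
      _ ≤ n * A.natDegree + (n + 1) * F.natDegree := by gcongr; exact hG
  linarith

end DegreeBounds

theorem stmt16_general {K : Type*} [Field K] [Finite K] {f : K[X]} (hf : Squarefree f) (A : K[X])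
    {n : ℕ} (hn : n + 1 < n * f.natDegree) :
    {P : K[X] × K[X] | A * P.2 ^ (n + 1) = f.comp P.1 ∧ derivative P.1 ≠ 0}.Finite := by
  have hsep : f.Separable := PerfectField.separable_iff_squarefree.mpr hf
  have hn0 : 0 < n := Nat.pos_of_ne_zero fun h0 ↦ by simp [h0] at hn
  have hfin := finite_setOf_natDegree_lt K (n * A.natDegree)
  refine (hfin.prod hfin).subset ?_
  rintro ⟨F, G⟩ ⟨h, hF⟩
  have hFA : F.natDegree < n * A.natDegree :=
    (Nat.le_add_right _ n).trans_lt (natDegree_add_lt_of_mul_pow_succ_eq_comp hsep hn hF h)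
  have hGF : n * G.natDegree < F.natDegree :=
    mul_natDegree_lt_of_pow_succ_dvd_comp hsep hF (h ▸ dvd_mul_left _ A)
  exact ⟨hFA, (Nat.le_mul_of_pos_left _ hn0).trans_lt (hGF.trans hFA)⟩

theorem stmt16 (Fq : Type*) [Field Fq] [Fintype Fq] (hq : Odd (Fintype.card Fq))
    (f : Polynomial Fq) (hf : Squarefree f) (hf3 : f.natDegree = 3)
    (A : Polynomial Fq) (hA : Squarefree A) (hAodd : Odd A.natDegree)
    (hAd : 1 < A.natDegree) :
    {P : Polynomial Fq × Polynomial Fq |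
      A * P.2 ^ 2 = f.comp P.1 ∧ derivative P.1 ≠ 0}.Finite :=
  stmt16_general hf A (n := 1) (by omega)
end

section
/- Let q be an odd prime power and let f(x) = x³ + a·x + b with a, b ∈ 𝔽_q[t] and 4a³ + 27b² ≠ 0. Suppose there exist polynomials g₀, g₁ ∈ 𝔽_q[t][X₁, X₂], not both zero, such that for every squarefree d ∈ 𝔽_q[t] and every pair of separable ∞-integral points (F₁, G₁), (F₂, G₂) of the twist d·y² = f(x) (i.e., F_i, G_i ∈ 𝔽_q[t], d·G_i² = f(F_i), F_i′ ≠ 0), one has g₀(F₁, F₂) + g₁(F₁, F₂)·d·G₁·G₂ = 0. Then there exists a natural number N such that for every squarefree d ∈ 𝔽_q[t], the set {(F, G) ∈ 𝔽_q[t] × 𝔽_q[t] : d·G² = f(F), F′ ≠ 0} of separable ∞-integral points of d·y² = f(x) has at most N elements. -/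
open Polynomial

/-!
The relation `g₀(F₁, F₂) + g₁(F₁, F₂) d G₁ G₂ = 0` eliminates to a relation between the abscissae
alone: since `(d G₁ G₂)² = f(F₁) f(F₂)`, its norm `h = g₀² - g₁² f(X₀) f(X₁)` vanishes at
`(F₁, F₂)`, and `h` does not depend on `d`. As `f(X₀) f(X₁)` has odd degree in `X₀`, it is not a
square in the fraction field, so `h ≠ 0`. A nonzero polynomial vanishing on `S × S` bounds the size
of `S` by its degree, and each abscissa carries at most two points.
-/

section DegreeOf

variable {R σ : Type*} [CommSemiring R]

lemma degreeOf_toMvPolynomial_self (i : σ) (f : R[X]) :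
    (f.toMvPolynomial i).degreeOf i = f.natDegree := by
  classical
  have hmap : MvPolynomial.optionEquivLeft R {j // j ≠ i}
      (MvPolynomial.rename (Equiv.optionSubtypeNe i).symm (f.toMvPolynomial i)) =
        f.map MvPolynomial.C := by
    rw [MvPolynomial.rename_toMvPolynomial, Equiv.optionSubtypeNe_symm_self, toMvPolynomial,
      ← AlgEquiv.coe_toAlgHom, ← aeval_algHom_apply, AlgEquiv.coe_toAlgHom,
      MvPolynomial.optionEquivLeft_X_none, ← MvPolynomial.algebraMap_eq,
      ← aeval_map_algebraMap (MvPolynomial {j // j ≠ i} R), aeval_X_left_apply]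
  rw [MvPolynomial.degreeOf_eq_natDegree, hmap,
    natDegree_map_eq_of_injective (MvPolynomial.C_injective _ _)]

lemma degreeOf_toMvPolynomial_of_ne {i j : σ} (hij : i ≠ j) (f : R[X]) :
    (f.toMvPolynomial j).degreeOf i = 0 := by
  by_contra hdeg
  rw [← ne_eq, ← MvPolynomial.mem_vars_iff_degreeOf_ne_zero, toMvPolynomial_eq_rename_comp,
    AlgHom.comp_apply] at hdeg
  obtain ⟨-, -, hji⟩ := MvPolynomial.mem_vars_rename _ _ hdeg
  exact hij hji.symm

lemma eq_zero_and_eq_zero_of_sq_eq_sq_mul_of_odd_degreeOf [NoZeroDivisors R]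
    {p q h : MvPolynomial σ R} {i : σ} (hodd : Odd (h.degreeOf i)) (heq : p ^ 2 = q ^ 2 * h) :
    p = 0 ∧ q = 0 := by
  have hh : h ≠ 0 := by
    rintro rfl
    simp at hodd
  suffices hq : q = 0 by simpa [hq] using heq
  by_contra hq
  have hp : p ≠ 0 := by
    rintro rfl
    simp [hq, hh, eq_comm] at heq
  have hdeg : 2 * p.degreeOf i = 2 * q.degreeOf i + h.degreeOf i := by
    rw [← MvPolynomial.degreeOf_pow_eq i p 2 hp, heq,
      MvPolynomial.degreeOf_mul_eq (pow_ne_zero 2 hq) hh, MvPolynomial.degreeOf_pow_eq i q 2 hq]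
  grind

end DegreeOf

section Counting

lemma encard_le_totalDegree_of_eval_eq_zero {R σ : Type*} [CommRing R] [IsDomain R] [Finite σ]
    {p : MvPolynomial σ R} (hp : p ≠ 0) {S : Set R}
    (hS : ∀ x : σ → R, (∀ i, x i ∈ S) → MvPolynomial.eval x p = 0) :
    S.encard ≤ p.totalDegree := by
  by_contra! hlt
  obtain ⟨T, hTS, hT⟩ := Set.exists_subset_encard_eq (Order.add_one_le_of_lt hlt)
  lift T to Finset R using Set.finite_of_encard_eq_coe (k := p.totalDegree + 1) (by simpa using hT)
  have hcard : T.card = p.totalDegree + 1 := by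
    rw [Set.encard_coe_eq_coe_finsetCard] at hT
    exact_mod_cast hT
  refine hp (MvPolynomial.eq_zero_of_eval_zero_at_prod_finset p (fun _ ↦ T) (fun i ↦ ?_)
    fun x hx ↦ hS x fun i ↦ hTS (hx i))
  exact hcard ▸ Nat.lt_succ_of_le (p.degreeOf_le_totalDegree i)

lemma encard_le_mul_of_encard_fiber_le {α β : Type*} {s : Set α} {f : α → β} {m : ℕ} {n : ℕ∞}
    (himage : (f '' s).encard ≤ m) (hfiber : ∀ b ∈ f '' s, {a ∈ s | f a = b}.encard ≤ n) :
    s.encard ≤ m * n := by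
  have hfin : (f '' s).Finite := Set.finite_of_encard_le_coe himage
  have hcover : s ⊆ ⋃ b ∈ hfin.toFinset, {a ∈ s | f a = b} := by
    intro a ha
    exact Set.mem_biUnion (hfin.mem_toFinset.mpr (Set.mem_image_of_mem f ha)) ⟨ha, rfl⟩
  calc s.encard ≤ (⋃ b ∈ hfin.toFinset, {a ∈ s | f a = b}).encard := Set.encard_le_encard hcover
    _ ≤ ∑ b ∈ hfin.toFinset, {a ∈ s | f a = b}.encard := Finset.set_encard_biUnion_le _ _
    _ ≤ hfin.toFinset.card • n :=
      Finset.sum_le_card_nsmul _ _ _ fun b hb ↦ hfiber b (hfin.mem_toFinset.mp hb)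
    _ = (f '' s).encard * n := by rw [nsmul_eq_mul, hfin.encard_eq_coe_toFinset_card]
    _ ≤ m * n := by gcongr

lemma encard_setOf_mul_sq_eq_le_two {R : Type*} [CommRing R] [IsDomain R] {d : R} (hd : d ≠ 0)
    (c : R) : {y : R | d * y ^ 2 = c}.encard ≤ 2 := by
  rcases Set.eq_empty_or_nonempty {y : R | d * y ^ 2 = c} with hempty | ⟨y₀, hy₀⟩
  · simp [hempty]
  · have hsub : {y : R | d * y ^ 2 = c} ⊆ {y₀, -y₀} := fun y hy ↦
      sq_eq_sq_iff_eq_or_eq_neg.mp (mul_left_cancel₀ hd (hy.trans hy₀.symm))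
    exact (Set.encard_le_encard hsub).trans <|
      (Set.encard_insert_le _ _).trans_eq (by rw [Set.encard_singleton, one_add_one_eq_two])

end Counting

section RelationNorm

variable {R : Type*} [CommRing R]

/-- The norm `g₀² - g₁² f(X₀) f(X₁)` of `g₀ + g₁ w` for the quadratic extension
`w² = f(X₀) f(X₁)` of the polynomial ring in two variables. On pairs of points of the twist
`d y² = f(x)`, `w` takes the value `d y₁ y₂`. -/
noncomputable def relationNorm (f : R[X]) (g₀ g₁ : MvPolynomial (Fin 2) R) :
    MvPolynomial (Fin 2) R :=
  g₀ ^ 2 - g₁ ^ 2 * (f.toMvPolynomial 0 * f.toMvPolynomial 1)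

lemma eval_relationNorm_eq_zero {f : R[X]} {g₀ g₁ : MvPolynomial (Fin 2) R} {d x₁ y₁ x₂ y₂ : R}
    (h₁ : d * y₁ ^ 2 = f.eval x₁) (h₂ : d * y₂ ^ 2 = f.eval x₂)
    (hrel : MvPolynomial.eval ![x₁, x₂] g₀
      + MvPolynomial.eval ![x₁, x₂] g₁ * (d * y₁ * y₂) = 0) :
    MvPolynomial.eval ![x₁, x₂] (relationNorm f g₀ g₁) = 0 := by
  simp only [relationNorm, map_sub, map_mul, map_pow, MvPolynomial.eval_toMvPolynomial,
    Matrix.cons_val_zero, Matrix.cons_val_one, ← h₁, ← h₂]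
  linear_combination (MvPolynomial.eval ![x₁, x₂] g₀
    - MvPolynomial.eval ![x₁, x₂] g₁ * (d * y₁ * y₂)) * hrel

lemma relationNorm_ne_zero [IsDomain R] {f : R[X]} (hf : Odd f.natDegree)
    {g₀ g₁ : MvPolynomial (Fin 2) R} (hg : ¬(g₀ = 0 ∧ g₁ = 0)) : relationNorm f g₀ g₁ ≠ 0 := by
  have hne (i : Fin 2) : f.toMvPolynomial i ≠ 0 := by
    rw [map_ne_zero_iff _ (toMvPolynomial_injective i)]
    rintro rfl
    simp at hf
  have hdeg : (f.toMvPolynomial 0 * f.toMvPolynomial (1 : Fin 2)).degreeOf 0 = f.natDegree := by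
    rw [MvPolynomial.degreeOf_mul_eq (hne 0) (hne 1), degreeOf_toMvPolynomial_self,
      degreeOf_toMvPolynomial_of_ne zero_ne_one, add_zero]
  exact fun hzero ↦ hg <| eq_zero_and_eq_zero_of_sq_eq_sq_mul_of_odd_degreeOf
    (hdeg ▸ hf) (sub_eq_zero.mp hzero)

end RelationNorm

theorem stmt17_general {R : Type*} [CommRing R] [IsDomain R] {f : R[X]} (hf : Odd f.natDegree)
    {g₀ g₁ : MvPolynomial (Fin 2) R} (hg : ¬(g₀ = 0 ∧ g₁ = 0)) :
    ∃ N : ℕ, ∀ d : R, d ≠ 0 → ∀ S : Set (R × R), (∀ P ∈ S, d * P.2 ^ 2 = f.eval P.1) →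
      (∀ P ∈ S, ∀ Q ∈ S, MvPolynomial.eval ![P.1, Q.1] g₀
        + MvPolynomial.eval ![P.1, Q.1] g₁ * (d * P.2 * Q.2) = 0) →
      S.Finite ∧ S.ncard ≤ N := by
  refine ⟨(relationNorm f g₀ g₁).totalDegree * 2, fun d hd S hcurve hrel ↦ ?_⟩
  have habscissae : (Prod.fst '' S).encard ≤ (relationNorm f g₀ g₁).totalDegree := by
    refine encard_le_totalDegree_of_eval_eq_zero (relationNorm_ne_zero hf hg) fun x hx ↦ ?_
    obtain ⟨P, hP, hPx⟩ := hx 0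
    obtain ⟨Q, hQ, hQx⟩ := hx 1
    have hxPQ : x = ![P.1, Q.1] := funext (Fin.forall_fin_two.mpr ⟨hPx.symm, hQx.symm⟩)
    exact hxPQ ▸ eval_relationNorm_eq_zero (hcurve P hP) (hcurve Q hQ) (hrel P hP Q hQ)
  have hordinates : ∀ x ∈ Prod.fst '' S, {P ∈ S | P.1 = x}.encard ≤ 2 := by
    intro x _
    have hsub : {P ∈ S | P.1 = x} ⊆ Prod.mk x '' {y | d * y ^ 2 = f.eval x} := by
      rintro ⟨_, y⟩ ⟨hP, rfl⟩
      exact ⟨y, hcurve _ hP, rfl⟩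
    exact (Set.encard_le_encard hsub).trans <| (Set.encard_image_le _ _).trans <|
      encard_setOf_mul_sq_eq_le_two hd _
  exact Set.encard_le_coe_iff_finite_ncard_le.mp <| by
    exact_mod_cast encard_le_mul_of_encard_fiber_le habscissae hordinates

theorem stmt17 (Fq : Type*) [Field Fq] [Fintype Fq] (hq : Odd (Fintype.card Fq))
    (a b : Polynomial Fq) (hΔ : 4 * a ^ 3 + 27 * b ^ 2 ≠ 0)
    (g₀ g₁ : MvPolynomial (Fin 2) (Polynomial Fq))
    (hg : ¬(g₀ = 0 ∧ g₁ = 0))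
    (hcorr : ∀ d : Polynomial Fq, Squarefree d →
      ∀ F₁ G₁ F₂ G₂ : Polynomial Fq,
        d * G₁ ^ 2 = F₁ ^ 3 + a * F₁ + b → derivative F₁ ≠ 0 →
        d * G₂ ^ 2 = F₂ ^ 3 + a * F₂ + b → derivative F₂ ≠ 0 →
        MvPolynomial.eval ![F₁, F₂] g₀
          + MvPolynomial.eval ![F₁, F₂] g₁ * (d * G₁ * G₂) = 0) :
    ∃ N : ℕ, ∀ d : Polynomial Fq, Squarefree d →
      {P : Polynomial Fq × Polynomial Fq |
          d * P.2 ^ 2 = P.1 ^ 3 + a * P.1 + b ∧ derivative P.1 ≠ 0}.Finite ∧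
      {P : Polynomial Fq × Polynomial Fq |
          d * P.2 ^ 2 = P.1 ^ 3 + a * P.1 + b ∧ derivative P.1 ≠ 0}.ncard ≤ N := by
  have hdeg : (X ^ 3 + C a * X + C b).natDegree = 3 := by compute_degree!
  obtain ⟨N, hN⟩ := stmt17_general (hdeg ▸ (by decide : Odd 3)) hg
  exact ⟨N, fun d hd ↦ hN d hd.ne_zero _ (fun P hP ↦ by simpa using hP.1)
    fun P hP Q hQ ↦ hcorr d hd _ _ _ _ hP.1 hP.2 hQ.1 hQ.2⟩
end
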